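/- arXiv:2602.01110 — 3 statements merged into one kernel-verified Lean document; each statement's English description precedes it below -/
import Mathlib

section
/- Let Γ be a generalised hexagon of finite order (s,t) with s > 1 and t > 1, and let S be a set of s+1 points of Γ such that no point of Γ is opposite every member of S. Suppose the points of S are pairwise opposite. Then s ≥ t, and S is a regular distance-3 trace: there exist opposite lines L and M of Γ with S = [L,M]_3, and this trace is regular. -/
/-- An incidence structure of points and lines, each line being a set of points. -/
structure GenHexagon where
  Point : Type
  Line : Type
  pts : Line → Set Point

namespace GenHexagon

variable (Γ : GenHexagon)

/-- Adjacency of the bipartite incidence graph on the disjoint union of points and lines: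
a point is adjacent to a line iff the point lies on the line. -/
def incAdj : Γ.Point ⊕ Γ.Line → Γ.Point ⊕ Γ.Line → Prop
  | Sum.inl x, Sum.inr L => x ∈ Γ.pts L
  | Sum.inr L, Sum.inl x => x ∈ Γ.pts L
  | _, _ => False

/-- The bipartite incidence graph. -/
def incGraph : SimpleGraph (Γ.Point ⊕ Γ.Line) where
  Adj := Γ.incAdj
  symm := ⟨by rintro (x | L) (y | M) h <;> simp_all [incAdj]⟩
  loopless := ⟨by rintro (x | L) h <;> simp_all [incAdj]⟩

/-- `Γ` is a generalised hexagon: its incidence graph has diameter `6` and girth `12`. -/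
def IsGenHexagon : Prop :=
  Γ.incGraph.ediam = 6 ∧ Γ.incGraph.egirth = 12

/-- Two points are collinear if they are distinct and some line contains both. -/
def Collinear (x y : Γ.Point) : Prop :=
  x ≠ y ∧ ∃ L, x ∈ Γ.pts L ∧ y ∈ Γ.pts L

/-- Two points are special if they are distinct, non-collinear, and collinear
to a common point. -/
def Special (x y : Γ.Point) : Prop :=
  x ≠ y ∧ ¬ Γ.Collinear x y ∧ ∃ z, Γ.Collinear x z ∧ Γ.Collinear y z

/-- Two points are opposite if they are distinct, non-collinear and non-special. -/
def Opposite (x y : Γ.Point) : Prop :=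
  x ≠ y ∧ ¬ Γ.Collinear x y ∧ ¬ Γ.Special x y

/-- `Γ` has order `(s, t)`: every line contains exactly `s + 1` points and every
point lies on exactly `t + 1` lines. -/
def HasOrder (s t : ℕ) : Prop :=
  (∀ L, (Γ.pts L).encard = s + 1) ∧ (∀ x, {L | x ∈ Γ.pts L}.encard = t + 1)

/-- `Γ` is thick: every line contains at least `3` points and every point lies on
at least `3` lines. -/
def Thick : Prop :=
  (∀ L, 3 ≤ (Γ.pts L).encard) ∧ (∀ x, 3 ≤ {L | x ∈ Γ.pts L}.encard)

/-- A point is close to a line if it is collinear to exactly one point of that line. -/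
def CloseTo (x : Γ.Point) (L : Γ.Line) : Prop :=
  ∃! y, y ∈ Γ.pts L ∧ Γ.Collinear x y

/-- Two lines are opposite if they are disjoint and no point of one is collinear to
a point of the other. -/
def OppLines (L M : Γ.Line) : Prop :=
  (∀ x ∈ Γ.pts L, x ∉ Γ.pts M) ∧
  (∀ x ∈ Γ.pts L, ∀ y ∈ Γ.pts M, ¬ Γ.Collinear x y)

/-- The distance-3 trace `[L,M]₃` of two (opposite) lines: the set of points close to
both `L` and `M`. -/
def trace3 (L M : Γ.Line) : Set Γ.Point :=
  {x | Γ.CloseTo x L ∧ Γ.CloseTo x M}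

/-- The distance-3 trace `[L,M]₃` is regular if `[N,M]₃ = [L,M]₃` for every line `N`
opposite `M` such that `[N,M]₃` and `[L,M]₃` share at least two points. -/
def RegularTrace3 (L M : Γ.Line) : Prop :=
  ∀ N, Γ.OppLines N M → (Γ.trace3 N M ∩ Γ.trace3 L M).Nontrivial →
    Γ.trace3 N M = Γ.trace3 L M

/-- A hyperbolic line: a set `H` of pairwise special points, all collinear to a common
point `p`, such that for every point `q` opposite `p` to which at least two points of `H`
are special, the set of points special to `q` and collinear to `p` equals `H`. -/
def IsHyperbolicLine (H : Set Γ.Point) : Prop :=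
  (∀ x ∈ H, ∀ y ∈ H, x ≠ y → Γ.Special x y) ∧
  ∃ p, (∀ x ∈ H, Γ.Collinear x p) ∧
    ∀ q, Γ.Opposite q p → {x ∈ H | Γ.Special q x}.Nontrivial →
      {x | Γ.Special q x ∧ Γ.Collinear x p} = H

/-- A round-up triple: no point of `Γ` is opposite exactly one of `x₁, x₂, x₃`. -/
def RoundUpTriple (x₁ x₂ x₃ : Γ.Point) : Prop :=
  ∀ y : Γ.Point,
    ¬ ((Γ.Opposite y x₁ ∧ ¬ Γ.Opposite y x₂ ∧ ¬ Γ.Opposite y x₃) ∨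
       (¬ Γ.Opposite y x₁ ∧ Γ.Opposite y x₂ ∧ ¬ Γ.Opposite y x₃) ∨
       (¬ Γ.Opposite y x₁ ∧ ¬ Γ.Opposite y x₂ ∧ Γ.Opposite y x₃))

/-- A geometric line: a set `T` of points such that each point of `Γ` is either opposite
no member of `T`, or non-opposite to exactly one member of `T`. -/
def IsGeometricLine (T : Set Γ.Point) : Prop :=
  ∀ y : Γ.Point, (∀ x ∈ T, ¬ Γ.Opposite y x) ∨ (∃! x, x ∈ T ∧ ¬ Γ.Opposite y x)

end GenHexagon

/-- Two paths with the same ends whose total length is below the girth have the same vertices. -/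
theorem SimpleGraph.Walk.IsPath.support_eq_of_length_add_lt_egirth {V : Type*}
    {G : SimpleGraph V} {u v : V} {p q : G.Walk u v} (hp : p.IsPath) (hq : q.IsPath)
    (h : ((p.length + q.length : ℕ) : ℕ∞) < G.egirth) : p.support = q.support := by
  classical
  let E : Finset (Sym2 V) := p.edges.toFinset ∪ q.edges.toFinset
  have hE : E.card ≤ p.length + q.length := by
    refine (Finset.card_union_le _ _).trans (Nat.add_le_add ?_ ?_)
    · simpa using p.edges.toFinset_card_le
    · simpa using q.edges.toFinset_card_le
  let H : SimpleGraph V := SimpleGraph.fromEdgeSet (E : Set (Sym2 V))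
  have hmem : ∀ e ∈ H.edgeSet, e ∈ E ∧ e ∈ G.edgeSet := by
    intro e he
    rw [SimpleGraph.edgeSet_fromEdgeSet] at he
    have heE : e ∈ E := he.1
    refine ⟨heE, ?_⟩
    rcases Finset.mem_union.1 heE with h' | h'
    · exact p.edges_subset_edgeSet (List.mem_toFinset.1 h')
    · exact q.edges_subset_edgeSet (List.mem_toFinset.1 h')
  have hH : H.IsAcyclic := by
    intro w c hc
    have hcG : ∀ e ∈ c.edges, e ∈ G.edgeSet := fun e he =>
      (hmem e (c.edges_subset_edgeSet he)).2
    have hle := SimpleGraph.egirth_le_length (hc.transfer hcG)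
    rw [SimpleGraph.Walk.length_transfer] at hle
    have hcard : c.length ≤ E.card := by
      rw [← c.length_edges, ← List.toFinset_card_of_nodup hc.edges_nodup]
      refine Finset.card_le_card fun e he => ?_
      exact (hmem e (c.edges_subset_edgeSet (List.mem_toFinset.1 he))).1
    exact absurd (h.trans_le (hle.trans (Nat.cast_le.2 (hcard.trans hE)))) (lt_irrefl _)
  have hpH : ∀ e ∈ p.edges, e ∈ H.edgeSet := fun e he => by
    rw [SimpleGraph.edgeSet_fromEdgeSet]
    exact ⟨by simp [E, he], G.not_isDiag_of_mem_edgeSet (p.edges_subset_edgeSet he)⟩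
  have hqH : ∀ e ∈ q.edges, e ∈ H.edgeSet := fun e he => by
    rw [SimpleGraph.edgeSet_fromEdgeSet]
    exact ⟨by simp [E, he], G.not_isDiag_of_mem_edgeSet (q.edges_subset_edgeSet he)⟩
  have := (hH.subsingleton_path u v).elim ⟨_, hp.transfer hpH⟩ ⟨_, hq.transfer hqH⟩
  have h2 := congrArg (fun r : H.Path u v => r.1.support) this
  simpa using h2

namespace GenHexagon

variable {Γ : GenHexagon}

/-- Equal or collinear, i.e. at distance at most `2` in the incidence graph. -/
def Near (Γ : GenHexagon) (x y : Γ.Point) : Prop :=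
  x = y ∨ Γ.Collinear x y

/-- At distance at most `3` in the incidence graph. -/
def NearLine (Γ : GenHexagon) (x : Γ.Point) (L : Γ.Line) : Prop :=
  ∃ p ∈ Γ.pts L, Γ.Near x p

theorem Collinear.symm {x y : Γ.Point} (h : Γ.Collinear x y) : Γ.Collinear y x :=
  ⟨h.1.symm, let ⟨L, hx, hy⟩ := h.2; ⟨L, hy, hx⟩⟩

theorem Near.symm {x y : Γ.Point} (h : Γ.Near x y) : Γ.Near y x :=
  h.imp Eq.symm Collinear.symm

theorem near_of_mem {x y : Γ.Point} {L : Γ.Line} (hx : x ∈ Γ.pts L) (hy : y ∈ Γ.pts L) :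
    Γ.Near x y :=
  or_iff_not_imp_left.2 fun h => ⟨h, L, hx, hy⟩

theorem not_opposite_iff {x y : Γ.Point} :
    ¬ Γ.Opposite x y ↔ ∃ z, Γ.Near x z ∧ Γ.Near z y := by
  constructor
  · intro h
    by_cases h1 : x = y
    · exact ⟨x, Or.inl rfl, Or.inl h1⟩
    by_cases h2 : Γ.Collinear x y
    · exact ⟨x, Or.inl rfl, Or.inr h2⟩
    have h3 : Γ.Special x y := by
      by_contra h3
      exact h ⟨h1, h2, h3⟩
    obtain ⟨z, hz, hz'⟩ := h3.2.2
    exact ⟨z, Or.inr hz, Or.inr hz'.symm⟩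
  · rintro ⟨z, hxz, hzy⟩ ⟨h1, h2, h3⟩
    rcases hxz with rfl | hxz
    · exact hzy.elim h1 h2
    · rcases hzy with rfl | hzy
      · exact h2 hxz
      · exact h3 ⟨h1, h2, z, hxz, hzy.symm⟩

theorem Opposite.symm {x y : Γ.Point} (h : Γ.Opposite x y) : Γ.Opposite y x := by
  by_contra h'
  obtain ⟨z, h1, h2⟩ := not_opposite_iff.1 h'
  exact not_opposite_iff.2 ⟨z, h2.symm, h1.symm⟩ h

theorem NearLine.not_opposite {x p : Γ.Point} {L : Γ.Line} (h : Γ.NearLine x L)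
    (hp : p ∈ Γ.pts L) : ¬ Γ.Opposite x p :=
  let ⟨q, hq, hxq⟩ := h
  not_opposite_iff.2 ⟨q, hxq, near_of_mem hq hp⟩

theorem incGraph_adj_left {x : Γ.Point} {L : Γ.Line} (h : x ∈ Γ.pts L) :
    Γ.incGraph.Adj (Sum.inl x) (Sum.inr L) := h

theorem incGraph_adj_right {x : Γ.Point} {L : Γ.Line} (h : x ∈ Γ.pts L) :
    Γ.incGraph.Adj (Sum.inr L) (Sum.inl x) := h

theorem IsGenHexagon.support_eq (hΓ : Γ.IsGenHexagon) {u v : Γ.Point ⊕ Γ.Line}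
    {p q : Γ.incGraph.Walk u v} (hp : p.IsPath) (hq : q.IsPath)
    (h : p.length + q.length < 12) : p.support = q.support :=
  hp.support_eq_of_length_add_lt_egirth hq (by rw [hΓ.2]; exact_mod_cast h)

theorem IsGenHexagon.line_unique (hΓ : Γ.IsGenHexagon) {x y : Γ.Point} (hxy : x ≠ y)
    {L M : Γ.Line} (hxL : x ∈ Γ.pts L) (hyL : y ∈ Γ.pts L) (hxM : x ∈ Γ.pts M)
    (hyM : y ∈ Γ.pts M) : L = M := by
  have key : ∀ K, ∀ (hx : x ∈ Γ.pts K) (hy : y ∈ Γ.pts K),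
      (SimpleGraph.Walk.cons (incGraph_adj_left hx) (.cons (incGraph_adj_right hy) .nil)).IsPath :=
    fun K hx hy => by simp [SimpleGraph.Walk.isPath_def, hxy]
  simpa using hΓ.support_eq (key L hxL hyL) (key M hxM hyM) (by simp)

/-- There are no triangles. -/
theorem IsGenHexagon.foot_unique (hΓ : Γ.IsGenHexagon) {x p q : Γ.Point} {K : Γ.Line}
    (hx : x ∉ Γ.pts K) (hp : p ∈ Γ.pts K) (hq : q ∈ Γ.pts K)
    (hxp : Γ.Near x p) (hxq : Γ.Near x q) : p = q := by
  have key : ∀ r ∈ Γ.pts K, Γ.Near x r →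
      ∃ (L : Γ.Line) (w : Γ.incGraph.Walk (Sum.inl x) (Sum.inr K)),
        w.IsPath ∧ w.length = 3 ∧ w.support = [Sum.inl x, Sum.inr L, Sum.inl r, Sum.inr K] := by
    intro r hr hxr
    have hne : x ≠ r := by rintro rfl; exact hx hr
    obtain ⟨L, hxL, hrL⟩ := (hxr.resolve_left hne).2
    refine ⟨L, .cons (incGraph_adj_left hxL) (.cons (incGraph_adj_right hrL)
      (.cons (incGraph_adj_left hr) .nil)), ?_, by simp, by simp⟩
    have : L ≠ K := by rintro rfl; exact hx hxL
    simp [SimpleGraph.Walk.isPath_def, hne, this]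
  obtain ⟨L, w, hw, hwl, hws⟩ := key p hp hxp
  obtain ⟨L', w', hw', hwl', hws'⟩ := key q hq hxq
  have := hΓ.support_eq hw hw' (by omega)
  rw [hws, hws'] at this
  simp_all

/-- There are no quadrangles. -/
theorem IsGenHexagon.nearLine_unique (hΓ : Γ.IsGenHexagon) {x p : Γ.Point} {K M : Γ.Line}
    (hxp : ¬ Γ.Near x p) (hpK : p ∈ Γ.pts K) (hpM : p ∈ Γ.pts M)
    (hK : Γ.NearLine x K) (hM : Γ.NearLine x M) : K = M := by
  have key : ∀ N, p ∈ Γ.pts N → Γ.NearLine x N →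
      ∃ (L : Γ.Line) (q : Γ.Point) (w : Γ.incGraph.Walk (Sum.inl x) (Sum.inl p)),
        w.IsPath ∧ w.length = 4 ∧
          w.support = [Sum.inl x, Sum.inr L, Sum.inl q, Sum.inr N, Sum.inl p] := by
    rintro N hpN ⟨q, hqN, hxq⟩
    have hxN : x ∉ Γ.pts N := fun h => hxp (near_of_mem h hpN)
    have hne : x ≠ q := by rintro rfl; exact hxN hqN
    have hqp : q ≠ p := by rintro rfl; exact hxp hxq
    have hxp' : x ≠ p := by rintro rfl; exact hxN hpN
    obtain ⟨L, hxL, hqL⟩ := (hxq.resolve_left hne).2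
    refine ⟨L, q, .cons (incGraph_adj_left hxL) (.cons (incGraph_adj_right hqL)
      (.cons (incGraph_adj_left hqN) (.cons (incGraph_adj_right hpN) .nil))), ?_,
      by simp, by simp⟩
    have : L ≠ N := by rintro rfl; exact hxN hxL
    simp [SimpleGraph.Walk.isPath_def, hne, this, hqp, hxp']
  obtain ⟨L, q, w, hw, hwl, hws⟩ := key K hpK hK
  obtain ⟨L', q', w', hw', hwl', hws'⟩ := key M hpM hM
  have := hΓ.support_eq hw hw' (by omega)
  rw [hws, hws'] at this
  simp_all

/-- There are no pentagons. -/
theorem IsGenHexagon.proj_unique (hΓ : Γ.IsGenHexagon) {x p q : Γ.Point} {K : Γ.Line}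
    (hx : ¬ Γ.NearLine x K) (hp : p ∈ Γ.pts K) (hq : q ∈ Γ.pts K)
    (hxp : ¬ Γ.Opposite x p) (hxq : ¬ Γ.Opposite x q) : p = q := by
  have key : ∀ r ∈ Γ.pts K, ¬ Γ.Opposite x r →
      ∃ (L M : Γ.Line) (z : Γ.Point) (w : Γ.incGraph.Walk (Sum.inl x) (Sum.inr K)),
        w.IsPath ∧ w.length = 5 ∧ w.support =
          [Sum.inl x, Sum.inr L, Sum.inl z, Sum.inr M, Sum.inl r, Sum.inr K] := by
    intro r hr hxr
    obtain ⟨z, hxz, hzr⟩ := not_opposite_iff.1 hxr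
    have hxr' : ¬ Γ.Near x r := fun h => hx ⟨r, hr, h⟩
    have h1 : x ≠ z := by rintro rfl; exact hxr' hzr
    have h2 : z ≠ r := by rintro rfl; exact hxr' hxz
    have h3 : x ≠ r := fun h => hxr' (Or.inl h)
    obtain ⟨L, hxL, hzL⟩ := (hxz.resolve_left h1).2
    obtain ⟨M, hzM, hrM⟩ := (hzr.resolve_left h2).2
    have h4 : L ≠ M := by rintro rfl; exact hxr' (near_of_mem hxL hrM)
    have h5 : L ≠ K := by rintro rfl; exact hxr' (near_of_mem hxL hr)
    have h6 : M ≠ K := by rintro rfl; exact hx ⟨z, hzM, hxz⟩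
    refine ⟨L, M, z, .cons (incGraph_adj_left hxL) (.cons (incGraph_adj_right hzL)
      (.cons (incGraph_adj_left hzM) (.cons (incGraph_adj_right hrM)
      (.cons (incGraph_adj_left hr) .nil)))), ?_, by simp, by simp⟩
    simp [SimpleGraph.Walk.isPath_def, h1, h2, h3, h4, h5, h6]
  obtain ⟨L, M, z, w, hw, hwl, hws⟩ := key p hp hxp
  obtain ⟨L', M', z', w', hw', hwl', hws'⟩ := key q hq hxq
  have := hΓ.support_eq hw hw' (by omega)
  rw [hws, hws'] at this
  simp_all

theorem mem_or_exists_shorter_walk {x : Γ.Point} {K : Γ.Line}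
    (w : Γ.incGraph.Walk (Sum.inl x) (Sum.inr K)) :
    x ∈ Γ.pts K ∨ ∃ (y : Γ.Point) (w' : Γ.incGraph.Walk (Sum.inl y) (Sum.inr K)),
      Γ.Near x y ∧ w'.length + 2 = w.length := by
  cases w with
  | @cons _ v _ h w =>
    rcases v with y | L
    · exact h.elim
    · cases w with
      | nil => exact Or.inl h
      | @cons _ v _ h' w =>
        rcases v with y | M
        · exact Or.inr ⟨y, w, near_of_mem h h', by simp⟩
        · exact h'.elim

theorem IsGenHexagon.exists_proj (hΓ : Γ.IsGenHexagon) (x : Γ.Point) (K : Γ.Line) :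
    ∃ p ∈ Γ.pts K, ¬ Γ.Opposite x p := by
  have hd : Γ.incGraph.edist (Sum.inl x) (Sum.inr K) ≤ 6 := hΓ.1 ▸ SimpleGraph.edist_le_ediam
  obtain ⟨w, hw⟩ := SimpleGraph.exists_walk_of_edist_ne_top
    (ne_top_of_le_ne_top (by decide) hd)
  have hw6 : w.length ≤ 6 := by rw [← hw] at hd; exact_mod_cast hd
  rcases mem_or_exists_shorter_walk w with h | ⟨y, w₁, hxy, h₁⟩
  · exact ⟨x, h, fun h' => h'.1 rfl⟩
  rcases mem_or_exists_shorter_walk w₁ with h | ⟨z, w₂, hyz, h₂⟩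
  · exact ⟨y, h, not_opposite_iff.2 ⟨y, hxy, Or.inl rfl⟩⟩
  rcases mem_or_exists_shorter_walk w₂ with h | ⟨u, w₃, -, h₃⟩
  · exact ⟨z, h, not_opposite_iff.2 ⟨y, hxy, hyz⟩⟩
  have := SimpleGraph.Walk.eq_of_length_eq_zero (p := w₃) (by omega)
  simp at this

theorem exists_finset_of_encard_eq {α : Type*} {A : Set α} {n : ℕ} (h : A.encard = n + 1) :
    ∃ F : Finset α, (∀ a, a ∈ F ↔ a ∈ A) ∧ F.card = n + 1 := by
  have h' : A.encard = ((n + 1 : ℕ) : ℕ∞) := by exact_mod_cast h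
  have hfin : A.Finite := Set.finite_of_encard_eq_coe h'
  refine ⟨hfin.toFinset, fun a => hfin.mem_toFinset, ?_⟩
  rw [hfin.encard_eq_coe_toFinset_card] at h'
  exact_mod_cast h'

/-- A set of `s + 1` pairwise opposite points in a generalised hexagon of order `(s, t)`
such that no point is opposite all of them. -/
structure IsOppositeBlockingSet (Γ : GenHexagon) (s t : ℕ) (S : Finset Γ.Point) : Prop where
  hexagon : Γ.IsGenHexagon
  one_lt_s : 1 < s
  one_lt_t : 1 < t
  order : Γ.HasOrder s t
  card : S.card = s + 1
  block : ∀ p, ∃ x ∈ S, ¬ Γ.Opposite x p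
  opp : ∀ x ∈ S, ∀ y ∈ S, x ≠ y → Γ.Opposite x y

namespace IsOppositeBlockingSet

variable {s t : ℕ} {S : Finset Γ.Point}

theorem eq_of_near (h : Γ.IsOppositeBlockingSet s t S) {x y p : Γ.Point} (hx : x ∈ S)
    (hy : y ∈ S) (hxp : Γ.Near x p) (hyp : Γ.Near y p) : x = y := by
  by_contra hne
  exact not_opposite_iff.2 ⟨p, hxp, hyp.symm⟩ (h.opp x hx y hy hne)

theorem exists_ne (h : Γ.IsOppositeBlockingSet s t S) (x : Γ.Point) : ∃ y ∈ S, y ≠ x :=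
  Finset.exists_mem_ne (by have := h.card; have := h.one_lt_s; omega) x

theorem notMem_of_nearLine (h : Γ.IsOppositeBlockingSet s t S) {x y : Γ.Point} {K : Γ.Line}
    (hx : x ∈ S) (hy : y ∈ S) (hxy : x ≠ y) (hyK : Γ.NearLine y K) : x ∉ Γ.pts K :=
  fun hxK => hyK.not_opposite hxK (h.opp y hy x hx hxy.symm)

open Classical in
/-- Double counting of the non-opposite pairs between `S` and the points of a line. -/
theorem sum_card_not_opposite (h : Γ.IsOppositeBlockingSet s t S) {K : Γ.Line}
    {P : Finset Γ.Point} (hP : ∀ p, p ∈ P ↔ p ∈ Γ.pts K) (hPcard : P.card = s + 1) :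
    ∑ p ∈ P, {x ∈ S | ¬ Γ.Opposite x p}.card =
      {x ∈ S | Γ.NearLine x K}.card * s + (s + 1) := by
  have hswap := Finset.sum_card_bipartiteAbove_eq_sum_card_bipartiteBelow (s := S) (t := P)
    (fun x p => ¬ Γ.Opposite x p)
  simp only [Finset.bipartiteAbove, Finset.bipartiteBelow] at hswap
  rw [← hswap]
  have hx : ∀ x ∈ S, {p ∈ P | ¬ Γ.Opposite x p}.card =
      (if Γ.NearLine x K then s else 0) + 1 := by
    intro x _
    split_ifs with hn
    · rw [Finset.filter_true_of_mem fun p hp => hn.not_opposite ((hP p).1 hp), hPcard]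
    · obtain ⟨p, hp, hxp⟩ := h.hexagon.exists_proj x K
      rw [zero_add, Finset.card_eq_one]
      refine ⟨p, Finset.eq_singleton_iff_unique_mem.2
        ⟨Finset.mem_filter.2 ⟨(hP p).2 hp, hxp⟩, fun q hq => ?_⟩⟩
      obtain ⟨hqP, hxq⟩ := Finset.mem_filter.1 hq
      exact h.hexagon.proj_unique hn ((hP q).1 hqP) hp hxq hxp
  rw [Finset.sum_congr rfl hx, Finset.sum_add_distrib, ← Finset.sum_filter]
  simp [h.card]

open Classical in
theorem one_le_card_not_opposite (h : Γ.IsOppositeBlockingSet s t S) (p : Γ.Point) :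
    1 ≤ {x ∈ S | ¬ Γ.Opposite x p}.card := by
  obtain ⟨x, hx, hxp⟩ := h.block p
  exact Finset.card_pos.2 ⟨x, Finset.mem_filter.2 ⟨hx, hxp⟩⟩

open Classical in
theorem exists_nearLine (h : Γ.IsOppositeBlockingSet s t S) {K : Γ.Line} {p : Γ.Point}
    (hp : p ∈ Γ.pts K) (h2 : 2 ≤ {x ∈ S | ¬ Γ.Opposite x p}.card) :
    ∃ x ∈ S, Γ.NearLine x K := by
  by_contra! hK
  obtain ⟨P, hP, hPcard⟩ := exists_finset_of_encard_eq (h.order.1 K)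
  have hsum := h.sum_card_not_opposite hP hPcard
  rw [Finset.filter_false_of_mem hK] at hsum
  have hlt : ∑ _p ∈ P, 1 < ∑ p ∈ P, {x ∈ S | ¬ Γ.Opposite x p}.card :=
    Finset.sum_lt_sum (fun q _ => h.one_le_card_not_opposite q) ⟨p, (hP p).2 hp, h2⟩
  simp at hsum hlt
  omega

open Classical in
/-- If a point `p` is near no point of `S` but non-opposite at least two of them, then every
line through `p` is near some point of `S`, and these are different for different lines. -/
theorem card_nearLine_add_le (h : Γ.IsOppositeBlockingSet s t S) {K : Γ.Line} {p : Γ.Point}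
    (hp : p ∈ Γ.pts K) (hfar : ∀ x ∈ S, ¬ Γ.Near x p)
    (h2 : 2 ≤ {x ∈ S | ¬ Γ.Opposite x p}.card) :
    {x ∈ S | Γ.NearLine x K}.card + t ≤ {x ∈ S | ¬ Γ.Opposite x p}.card := by
  obtain ⟨Q, hQ, hQcard⟩ := exists_finset_of_encard_eq (h.order.2 p)
  simp only [Set.mem_ofPred_eq] at hQ
  have hex : ∀ M, ∃ x, p ∈ Γ.pts M → x ∈ S ∧ Γ.NearLine x M := by
    intro M
    by_cases hM : p ∈ Γ.pts M
    · obtain ⟨x, hx⟩ := h.exists_nearLine hM h2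
      exact ⟨x, fun _ => hx⟩
    · exact ⟨p, fun h' => absurd h' hM⟩
  choose f hf using hex
  have hmem : ∀ M ∈ Q.erase K, p ∈ Γ.pts M := fun M hM => (hQ M).1 (Finset.mem_of_mem_erase hM)
  have hinj : Set.InjOn f (Q.erase K) := by
    intro M hM N hN hMN
    have hM' := hmem M hM
    have hN' := hmem N hN
    exact h.hexagon.nearLine_unique (hfar _ (hf M hM').1) hM' hN' (hf M hM').2
      (hMN ▸ (hf N hN').2)
  have hdisj : Disjoint {x ∈ S | Γ.NearLine x K} ((Q.erase K).image f) := by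
    rw [Finset.disjoint_left]
    intro x hx hx'
    obtain ⟨M, hM, rfl⟩ := Finset.mem_image.1 hx'
    have hM' := hmem M hM
    exact Finset.ne_of_mem_erase hM (h.hexagon.nearLine_unique (hfar _ (hf M hM').1) hM' hp
      (hf M hM').2 (Finset.mem_filter.1 hx).2)
  have hcard : ((Q.erase K).image f).card = t := by
    rw [Finset.card_image_of_injOn hinj, Finset.card_erase_of_mem ((hQ K).2 hp), hQcard,
      Nat.add_sub_cancel]
  rw [← hcard, ← Finset.card_union_of_disjoint hdisj]
  refine Finset.card_le_card fun x hx => ?_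
  rcases Finset.mem_union.1 hx with hx | hx
  · obtain ⟨hxS, hxK⟩ := Finset.mem_filter.1 hx
    exact Finset.mem_filter.2 ⟨hxS, hxK.not_opposite hp⟩
  · obtain ⟨M, hM, rfl⟩ := Finset.mem_image.1 hx
    have hM' := hmem M hM
    exact Finset.mem_filter.2 ⟨(hf M hM').1, (hf M hM').2.not_opposite hM'⟩

open Classical in
theorem two_le_card {p x y : Γ.Point} (hx : x ∈ S) (hy : y ∈ S) (hxy : x ≠ y)
    (hxp : ¬ Γ.Opposite x p) (hyp : ¬ Γ.Opposite y p) :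
    2 ≤ {x ∈ S | ¬ Γ.Opposite x p}.card :=
  Finset.one_lt_card.2 ⟨x, Finset.mem_filter.2 ⟨hx, hxp⟩, y, Finset.mem_filter.2 ⟨hy, hyp⟩, hxy⟩

/-- A line near two points of `S` is near all of them. -/
theorem nearLine_of_nearLine (h : Γ.IsOppositeBlockingSet s t S) {K : Γ.Line} {x y : Γ.Point}
    (hx : x ∈ S) (hy : y ∈ S) (hxy : x ≠ y) (hxK : Γ.NearLine x K) (hyK : Γ.NearLine y K) :
    ∀ z ∈ S, Γ.NearLine z K := by
  classical
  obtain ⟨P, hP, hPcard⟩ := exists_finset_of_encard_eq (h.order.1 K)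
  set k := {x ∈ S | Γ.NearLine x K}.card with hk
  have hsum := h.sum_card_not_opposite hP hPcard
  have hterm : ∀ p ∈ P, k + (if ∃ z ∈ S, Γ.Near z p then 0 else t) ≤
      {x ∈ S | ¬ Γ.Opposite x p}.card := by
    intro p hp
    have hpK := (hP p).1 hp
    split_ifs with hnear
    · refine Finset.card_le_card fun z hz => ?_
      obtain ⟨hzS, hzK⟩ := Finset.mem_filter.1 hz
      exact Finset.mem_filter.2 ⟨hzS, hzK.not_opposite hpK⟩
    · push Not at hnear
      exact h.card_nearLine_add_le hpK hnear
        (two_le_card hx hy hxy (hxK.not_opposite hpK) (hyK.not_opposite hpK))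
  have hnotMem : ∀ z ∈ S, z ∉ Γ.pts K := by
    intro z hz
    by_cases hzx : z = x
    · exact h.notMem_of_nearLine hz hy (hzx ▸ hxy) hyK
    · exact h.notMem_of_nearLine hz hx hzx hxK
  have hnearCard : {p ∈ P | ∃ z ∈ S, Γ.Near z p}.card ≤ k := by
    have hex : ∀ p, ∃ z, (∃ z ∈ S, Γ.Near z p) → z ∈ S ∧ Γ.Near z p := fun p => by
      by_cases hp : ∃ z ∈ S, Γ.Near z p
      · exact hp.imp fun z hz _ => hz
      · exact ⟨p, fun h' => absurd h' hp⟩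
    choose f hf using hex
    refine Finset.card_le_card_of_injOn f ?_ ?_
    · intro p hp
      obtain ⟨hpP, hp⟩ := Finset.mem_filter.1 hp
      exact Finset.mem_filter.2 ⟨(hf p hp).1, p, (hP p).1 hpP, (hf p hp).2⟩
    · intro p hp q hq hpq
      obtain ⟨hpP, hp⟩ := Finset.mem_filter.1 hp
      obtain ⟨hqP, hq⟩ := Finset.mem_filter.1 hq
      exact h.hexagon.foot_unique (hnotMem _ (hf p hp).1) ((hP p).1 hpP) ((hP q).1 hqP)
        (hf p hp).2 (hpq ▸ (hf q hq).2)
  have hfarCard : {p ∈ P | ∃ z ∈ S, Γ.Near z p}.card +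
      {p ∈ P | ¬ ∃ z ∈ S, Γ.Near z p}.card = s + 1 := by
    rw [Finset.card_filter_add_card_filter_not, hPcard]
  have hle := Finset.sum_le_sum hterm
  rw [hsum, Finset.sum_add_distrib, Finset.sum_const, hPcard, Finset.sum_ite, Finset.sum_const,
    Finset.sum_const, smul_eq_mul, smul_eq_mul, smul_eq_mul] at hle
  have hkS : k = S.card := by
    refine le_antisymm (Finset.card_filter_le _ _) ?_
    rw [h.card]
    have := h.one_lt_t
    generalize {p ∈ P | ¬ ∃ z ∈ S, Γ.Near z p}.card = m at *
    nlinarith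
  intro z hz
  rw [hk, Finset.card_filter_eq_iff] at hkS
  exact hkS z hz

theorem exists_near (h : Γ.IsOppositeBlockingSet s t S) {K : Γ.Line}
    (hK : ∀ z ∈ S, Γ.NearLine z K) {p : Γ.Point} (hp : p ∈ Γ.pts K) : ∃ x ∈ S, Γ.Near x p := by
  classical
  by_contra! hfar
  have hS : {x ∈ S | ¬ Γ.Opposite x p} = S :=
    Finset.filter_true_of_mem fun z hz => (hK z hz).not_opposite hp
  have hS' : {x ∈ S | Γ.NearLine x K} = S := Finset.filter_true_of_mem hK
  have hle := h.card_nearLine_add_le hp hfar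
  rw [hS, hS'] at hle
  have := h.card
  have := h.one_lt_s
  have := h.one_lt_t
  omega

theorem le (h : Γ.IsOppositeBlockingSet s t S) : t ≤ s := by
  classical
  have hcard := h.card
  obtain ⟨x, hx⟩ := Finset.card_pos.1 (by omega : 0 < S.card)
  obtain ⟨y, hy, hyx⟩ := h.exists_ne x
  obtain ⟨Q, hQ, hQcard⟩ := exists_finset_of_encard_eq (h.order.2 x)
  obtain ⟨K, hK⟩ := Finset.card_pos.1 (by omega : 0 < Q.card)
  have hxK : x ∈ Γ.pts K := (hQ K).1 hK
  obtain ⟨P, hP, hPcard⟩ := exists_finset_of_encard_eq (h.order.1 K)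
  have hyK : ¬ Γ.NearLine y K := fun hn => h.notMem_of_nearLine hx hy hyx.symm hn hxK
  obtain ⟨p, hpK, hyp⟩ := h.hexagon.exists_proj y K
  -- a point `a` on `K` opposite `y` and different from `x`
  obtain ⟨a, haP, ha⟩ : ∃ a ∈ P, a ∉ ({x, p} : Finset Γ.Point) := by
    refine Finset.exists_mem_notMem_of_card_lt_card (lt_of_le_of_lt Finset.card_le_two ?_)
    have := h.one_lt_s
    omega
  simp only [Finset.mem_insert, Finset.mem_singleton, not_or] at ha
  have haK := (hP a).1 haP
  have hya : Γ.Opposite y a := by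
    by_contra hya
    exact ha.2 (h.hexagon.proj_unique hyK haK hpK hya hyp)
  -- a second line `N` through `a`
  obtain ⟨R, hR, hRcard⟩ := exists_finset_of_encard_eq (h.order.2 a)
  obtain ⟨N, hNR, hNK⟩ := Finset.exists_mem_ne (s := R)
    (by have := h.one_lt_t; omega) K
  have haN : a ∈ Γ.pts N := (hR N).1 hNR
  have hxa : Γ.Near x a := near_of_mem hxK haK
  have hxN : Γ.NearLine x N := ⟨a, haN, hxa⟩
  have hxN' : x ∉ Γ.pts N := fun hxN' =>
    hNK (h.hexagon.line_unique (Ne.symm ha.1) hxN' haN hxK haK)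
  obtain ⟨q, hqN, hyq⟩ := h.hexagon.exists_proj y N
  have hfar : ∀ z ∈ S, ¬ Γ.Near z q := by
    intro z hz hzq
    by_cases hzx : z = x
    · subst hzx
      have := h.hexagon.foot_unique hxN' haN hqN hxa hzq
      exact hyq (this ▸ hya)
    · exact (h.nearLine_of_nearLine hz hx hzx ⟨q, hqN, hzq⟩ hxN y hy).not_opposite haN hya
  have hle := h.card_nearLine_add_le hqN hfar
    (two_le_card hx hy hyx.symm (hxN.not_opposite hqN) hyq)
  have h1 : 1 ≤ {x ∈ S | Γ.NearLine x N}.card :=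
    Finset.card_pos.2 ⟨x, Finset.mem_filter.2 ⟨hx, hxN⟩⟩
  have h2 : {x ∈ S | ¬ Γ.Opposite x q}.card ≤ S.card := Finset.card_filter_le _ _
  omega

theorem closeTo (h : Γ.IsOppositeBlockingSet s t S) {K : Γ.Line}
    (hK : ∀ z ∈ S, Γ.NearLine z K) {x : Γ.Point} (hx : x ∈ S) : Γ.CloseTo x K := by
  obtain ⟨y, hy, hyx⟩ := h.exists_ne x
  have hxK : x ∉ Γ.pts K := h.notMem_of_nearLine hx hy hyx.symm (hK y hy)
  obtain ⟨p, hp, hxp⟩ := hK x hx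
  refine ⟨p, ⟨hp, hxp.resolve_left ?_⟩, fun q hq => ?_⟩
  · rintro rfl
    exact hxK hp
  · exact h.hexagon.foot_unique hxK hq.1 hp (Or.inr hq.2) hxp

theorem trace3_eq (h : Γ.IsOppositeBlockingSet s t S) {L M : Γ.Line} (hLM : Γ.OppLines L M)
    (hL : ∀ z ∈ S, Γ.NearLine z L) (hM : ∀ z ∈ S, Γ.NearLine z M) :
    Γ.trace3 L M = S := by
  refine Set.Subset.antisymm ?_ fun x hx => ⟨h.closeTo hL hx, h.closeTo hM hx⟩
  rintro z ⟨⟨u, ⟨huL, hzu⟩, -⟩, v, ⟨hvM, hzv⟩, -⟩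
  obtain ⟨x, hx, hxu⟩ := h.exists_near hL huL
  obtain ⟨v', hv'M, hxv'⟩ := hM x hx
  obtain ⟨y, hy, hyx⟩ := h.exists_ne x
  have hxL : x ∉ Γ.pts L := h.notMem_of_nearLine hx hy hyx.symm (hL y hy)
  have huM : ¬ Γ.NearLine u M := by
    rintro ⟨w, hw, rfl | huw⟩
    · exact hLM.1 _ huL hw
    · exact hLM.2 _ huL _ hw huw
  obtain rfl : v' = v := h.hexagon.proj_unique huM hv'M hvM
    (not_opposite_iff.2 ⟨x, hxu.symm, hxv'⟩)
    (not_opposite_iff.2 ⟨z, Or.inr hzu.symm, Or.inr hzv⟩)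
  have huv : ¬ Γ.Near v' u := fun hn => huM ⟨v', hvM, hn.symm⟩
  have hxu' : x ≠ u := by
    rintro rfl
    exact hxL huL
  obtain ⟨A, hzA, huA⟩ := hzu.2
  obtain ⟨B, hxB, huB⟩ := (hxu.resolve_left hxu').2
  obtain rfl : A = B := h.hexagon.nearLine_unique huv huA huB
    ⟨z, hzA, Or.inr hzv.symm⟩ ⟨x, hxB, hxv'.symm⟩
  have hzx : z = x := h.hexagon.foot_unique (fun hv => huv (near_of_mem hv huA)) hzA hxB
    (Or.inr hzv.symm) hxv'.symm
  exact hzx ▸ hx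

theorem oppLines (h : Γ.IsOppositeBlockingSet s t S) {L M : Γ.Line} (hLM : L ≠ M)
    (hL : ∀ z ∈ S, Γ.NearLine z L) (hM : ∀ z ∈ S, Γ.NearLine z M) : Γ.OppLines L M := by
  have hfar : ∀ u ∈ Γ.pts L, ∃ y ∈ S, ¬ Γ.Near y u := by
    intro u hu
    obtain ⟨x, hx, hxu⟩ := h.exists_near hL hu
    obtain ⟨y, hy, hyx⟩ := h.exists_ne x
    exact ⟨y, hy, fun hyu => hyx (h.eq_of_near hy hx hyu hxu)⟩
  have hdisj : ∀ u ∈ Γ.pts L, u ∉ Γ.pts M := by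
    intro u huL huM
    obtain ⟨y, hy, hyu⟩ := hfar u huL
    exact hLM (h.hexagon.nearLine_unique hyu huL huM (hL y hy) (hM y hy))
  refine ⟨hdisj, fun u huL v hvM huv => ?_⟩
  obtain ⟨y, hy, hyu⟩ := hfar u huL
  obtain ⟨J, huJ, hvJ⟩ := huv.2
  have hyJ : Γ.NearLine y J := by
    by_contra hyJ
    exact huv.1 (h.hexagon.proj_unique hyJ huJ hvJ ((hL y hy).not_opposite huL)
      ((hM y hy).not_opposite hvM))
  obtain rfl : J = L := h.hexagon.nearLine_unique hyu huJ huL hyJ (hL y hy)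
  exact hdisj v hvJ hvM

/-- Every line through a point of `S` meets a line near all points of `S`. -/
theorem exists_line (h : Γ.IsOppositeBlockingSet s t S) {x : Γ.Point} (hx : x ∈ S)
    {K : Γ.Line} (hxK : x ∈ Γ.pts K) :
    ∃ p L, p ∈ Γ.pts K ∧ p ∈ Γ.pts L ∧ p ≠ x ∧ ∀ z ∈ S, Γ.NearLine z L := by
  obtain ⟨y, hy, hyx⟩ := h.exists_ne x
  obtain ⟨p, hpK, hyp⟩ := h.hexagon.exists_proj y K
  have hxp : Γ.Near x p := near_of_mem hxK hpK
  obtain ⟨b, hyb, hbp⟩ := not_opposite_iff.1 hyp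
  have hbp' : b ≠ p := by
    rintro rfl
    exact hyx (h.eq_of_near hy hx hyb hxp)
  obtain ⟨L, hbL, hpL⟩ := (hbp.resolve_left hbp').2
  refine ⟨p, L, hpK, hpL, ?_, h.nearLine_of_nearLine hx hy hyx.symm ⟨p, hpL, hxp⟩ ⟨b, hbL, hyb⟩⟩
  rintro rfl
  exact hyp (h.opp y hy p hx hyx)

theorem exists_regular_trace3 (h : Γ.IsOppositeBlockingSet s t S) :
    ∃ L M, Γ.OppLines L M ∧ (S : Set Γ.Point) = Γ.trace3 L M ∧ Γ.RegularTrace3 L M := by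
  have hcard := h.card
  obtain ⟨x, hx⟩ := Finset.card_pos.1 (by omega : 0 < S.card)
  obtain ⟨Q, hQ, hQcard⟩ := exists_finset_of_encard_eq (h.order.2 x)
  obtain ⟨K, hKQ, K', hKQ', hKK'⟩ := Finset.one_lt_card.1
    (by have := h.one_lt_t; omega : 1 < Q.card)
  have hxK : x ∈ Γ.pts K := (hQ K).1 hKQ
  have hxK' : x ∈ Γ.pts K' := (hQ K').1 hKQ'
  obtain ⟨p, L, hpK, hpL, hpx, hL⟩ := h.exists_line hx hxK
  obtain ⟨p', M, hpK', hpM, hpx', hM⟩ := h.exists_line hx hxK'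
  obtain ⟨y, hy, hyx⟩ := h.exists_ne x
  have hLM : L ≠ M := by
    rintro rfl
    obtain rfl := h.hexagon.foot_unique (h.notMem_of_nearLine hx hy hyx.symm (hL y hy)) hpL hpM
      (near_of_mem hxK hpK) (near_of_mem hxK' hpK')
    exact hKK' (h.hexagon.line_unique hpx hpK hxK hpK' hxK')
  have hopp := h.oppLines hLM hL hM
  refine ⟨L, M, hopp, (h.trace3_eq hopp hL hM).symm, fun N hN hnt => ?_⟩
  rw [h.trace3_eq hopp hL hM] at hnt ⊢
  obtain ⟨a, ⟨⟨ha, -⟩, haS⟩, b, ⟨⟨hb, -⟩, hbS⟩, hab⟩ := hnt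
  have hnear : ∀ c, Γ.CloseTo c N → Γ.NearLine c N := fun c ⟨q, hq, _⟩ =>
    ⟨q, hq.1, Or.inr hq.2⟩
  exact h.trace3_eq hN (h.nearLine_of_nearLine haS hbS hab (hnear a ha) (hnear b hb)) hM

end IsOppositeBlockingSet

end GenHexagon

/-- Claim 4 in the proof: if the points of `S` are pairwise opposite, then `s ≥ t` and
`S` is a regular distance-3 trace. -/
theorem claim4_pairwise_opposite (Γ : GenHexagon) (hΓ : Γ.IsGenHexagon)
    (s t : ℕ) (hs : 1 < s) (ht : 1 < t) (hord : Γ.HasOrder s t)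
    (S : Set Γ.Point) (hS : S.encard = s + 1)
    (hblock : ¬ ∃ y : Γ.Point, ∀ x ∈ S, Γ.Opposite y x)
    (hpo : ∀ x ∈ S, ∀ y ∈ S, x ≠ y → Γ.Opposite x y) :
    t ≤ s ∧ ∃ L M, Γ.OppLines L M ∧ S = Γ.trace3 L M ∧ Γ.RegularTrace3 L M := by
  obtain ⟨F, hF, hFcard⟩ := GenHexagon.exists_finset_of_encard_eq hS
  have h : Γ.IsOppositeBlockingSet s t F :=
    { hexagon := hΓ
      one_lt_s := hs
      one_lt_t := ht
      order := hord
      card := hFcard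
      block := fun p => by
        by_contra! hp
        exact hblock ⟨p, fun x hx => (hp x ((hF x).2 hx)).symm⟩
      opp := fun x hx y hy => hpo x ((hF x).1 hx) y ((hF y).1 hy) }
  obtain rfl : (F : Set Γ.Point) = S := Set.ext hF
  exact ⟨h.le, h.exists_regular_trace3⟩
end

section
/- Let Γ be a generalised hexagon of finite order (s,t) with s > 1 and t > 1, and let S be a set of s+1 points of Γ such that no point of Γ is opposite every member of S. Suppose the points of S are pairwise special. Then s = t and S is a hyperbolic line of Γ. -/
section

open Finset

namespace SimpleGraph

variable {V : Type*} {G : SimpleGraph V}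

/-- Two paths with common endpoints whose total length is below the girth coincide. -/
theorem eq_of_isPath_of_length_add_lt_egirth {u v : V} {p q : G.Walk u v}
    (hp : p.IsPath) (hq : q.IsPath) (h : ((p.length + q.length : ℕ) : ℕ∞) < G.egirth) :
    p = q := by
  classical
  let H : SimpleGraph V := fromEdgeSet {e | e ∈ p.edges ∨ e ∈ q.edges}
  have hHe : ∀ e ∈ H.edgeSet, e ∈ p.edges ∨ e ∈ q.edges := by
    intro e he
    simp only [H, edgeSet_fromEdgeSet] at he
    exact he.1
  have hpH : ∀ e ∈ p.edges, e ∈ H.edgeSet := by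
    intro e he
    simp only [H, edgeSet_fromEdgeSet]
    exact ⟨Or.inl he, G.not_isDiag_of_mem_edgeSet (p.edges_subset_edgeSet he)⟩
  have hqH : ∀ e ∈ q.edges, e ∈ H.edgeSet := by
    intro e he
    simp only [H, edgeSet_fromEdgeSet]
    exact ⟨Or.inr he, G.not_isDiag_of_mem_edgeSet (q.edges_subset_edgeSet he)⟩
  have hacyc : H.IsAcyclic := by
    intro w c hc
    have hcG : ∀ e ∈ c.edges, e ∈ G.edgeSet := fun e he =>
      (hHe e (c.edges_subset_edgeSet he)).elim (fun h => p.edges_subset_edgeSet h)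
        (fun h => q.edges_subset_edgeSet h)
    have h1 := egirth_le_length (hc.transfer hcG)
    rw [Walk.length_transfer] at h1
    have h2 : c.length ≤ p.length + q.length := by
      have hsub : c.edges ⊆ p.edges ++ q.edges := fun e he =>
        List.mem_append.2 (hHe e (c.edges_subset_edgeSet he))
      have := (hc.edges_nodup.subperm hsub).length_le
      simpa using this
    exact absurd (h.trans_le h1) (by exact_mod_cast not_lt.2 h2)
  have heq := (hacyc.subsingleton_path u v).elim
    ⟨p.transfer H hpH, hp.transfer hpH⟩ ⟨q.transfer H hqH, hq.transfer hqH⟩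
  have h3 := congrArg (fun r : H.Path u v => r.1.support) heq
  exact Walk.ext_support (by simpa using h3)

theorem exists_adj_dist_add_one_eq {u v : V} (h : G.dist u v ≠ 0) :
    ∃ w, G.Adj w v ∧ G.dist u w + 1 = G.dist u v := by
  obtain ⟨p, hp⟩ := exists_walk_of_dist_ne_zero h
  have hnil : ¬ p.Nil := by
    intro hn
    exact h (by rw [← hp]; exact Walk.length_eq_zero_iff.2 hn)
  have hadj := p.adj_penultimate hnil
  refine ⟨p.penultimate, hadj, le_antisymm ?_ ?_⟩
  · have h1 := dist_le p.dropLast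
    have h2 : p.dropLast.length + 1 = p.length := Walk.length_dropLast_add_one hnil
    omega
  · have hr : G.Reachable u p.penultimate := ⟨p.dropLast⟩
    obtain ⟨r, hr⟩ := hr.exists_walk_length_eq_dist
    have := dist_le (r.concat hadj)
    rw [Walk.length_concat] at this
    omega

end SimpleGraph

namespace GenHexagon

variable {Γ : GenHexagon}

theorem IsGenHexagon.preconnected (hΓ : Γ.IsGenHexagon) : Γ.incGraph.Preconnected :=
  SimpleGraph.preconnected_of_ediam_ne_top (by rw [hΓ.1]; decide)

theorem IsGenHexagon.dist_le_six (hΓ : Γ.IsGenHexagon) (u v : Γ.Point ⊕ Γ.Line) :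
    Γ.incGraph.dist u v ≤ 6 := by
  have h := SimpleGraph.edist_le_ediam (G := Γ.incGraph) (u := u) (v := v)
  rw [hΓ.1, ← (hΓ.preconnected u v).coe_dist_eq_edist] at h
  exact_mod_cast h

/-- The bipartition of the incidence graph into points and lines. -/
def incColoring (Γ : GenHexagon) : Γ.incGraph.Coloring Bool :=
  SimpleGraph.Coloring.mk Sum.isLeft (by
    rintro (x | L) (y | M) h <;> simp_all [incGraph, incAdj])

theorem IsGenHexagon.even_dist_iff (hΓ : Γ.IsGenHexagon) (u v : Γ.Point ⊕ Γ.Line) :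
    Even (Γ.incGraph.dist u v) ↔ (u.isLeft ↔ v.isLeft) := by
  obtain ⟨p, hp⟩ := (hΓ.preconnected u v).exists_walk_length_eq_dist
  rw [← hp]
  exact Γ.incColoring.even_length_iff_congr p

theorem IsGenHexagon.dist_of_adj (hΓ : Γ.IsGenHexagon) (u : Γ.Point ⊕ Γ.Line)
    {v w : Γ.Point ⊕ Γ.Line} (h : Γ.incGraph.Adj v w) :
    Γ.incGraph.dist u w = Γ.incGraph.dist u v + 1 ∨
      Γ.incGraph.dist u w + 1 = Γ.incGraph.dist u v := by
  have hne : Γ.incGraph.dist u v ≠ Γ.incGraph.dist u w := by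
    intro he
    have h1 := hΓ.even_dist_iff u v
    have h2 := hΓ.even_dist_iff u w
    rw [he, h2] at h1
    have h3 : v.isLeft ≠ w.isLeft := Γ.incColoring.valid h
    clear h2 he
    revert h1 h3
    generalize u.isLeft = a, v.isLeft = b, w.isLeft = c
    revert a b c
    decide
  obtain ⟨p, hp⟩ := (hΓ.preconnected u v).exists_walk_length_eq_dist
  obtain ⟨q, hq⟩ := (hΓ.preconnected u w).exists_walk_length_eq_dist
  have h1 := SimpleGraph.dist_le (p.concat h)
  have h2 := SimpleGraph.dist_le (q.concat h.symm)
  rw [SimpleGraph.Walk.length_concat] at h1 h2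
  omega

theorem IsGenHexagon.pred_unique (hΓ : Γ.IsGenHexagon) {u v w w' : Γ.Point ⊕ Γ.Line}
    (hw : Γ.incGraph.Adj w v) (hw' : Γ.incGraph.Adj w' v)
    (h6 : Γ.incGraph.dist u v < 6)
    (hd : Γ.incGraph.dist u w + 1 = Γ.incGraph.dist u v)
    (hd' : Γ.incGraph.dist u w' + 1 = Γ.incGraph.dist u v) : w = w' := by
  obtain ⟨p, hp⟩ := (hΓ.preconnected u w).exists_walk_length_eq_dist
  obtain ⟨q, hq⟩ := (hΓ.preconnected u w').exists_walk_length_eq_dist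
  have hpl : (p.concat hw).length = Γ.incGraph.dist u v := by
    rw [SimpleGraph.Walk.length_concat]; omega
  have hql : (q.concat hw').length = Γ.incGraph.dist u v := by
    rw [SimpleGraph.Walk.length_concat]; omega
  have := SimpleGraph.eq_of_isPath_of_length_add_lt_egirth
    ((p.concat hw).isPath_of_length_eq_dist hpl) ((q.concat hw').isPath_of_length_eq_dist hql)
    (by
      rw [hΓ.2, hpl, hql]
      have : Γ.incGraph.dist u v + Γ.incGraph.dist u v < 12 := by omega
      exact_mod_cast this)
  have h2 := congrArg SimpleGraph.Walk.penultimate this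
  rwa [SimpleGraph.Walk.penultimate_concat, SimpleGraph.Walk.penultimate_concat] at h2

/-- Distance between two points in the incidence graph. -/
noncomputable def dpp (Γ : GenHexagon) (x y : Γ.Point) : ℕ :=
  Γ.incGraph.dist (Sum.inl x) (Sum.inl y)

/-- Distance between a point and a line in the incidence graph. -/
noncomputable def dpl (Γ : GenHexagon) (x : Γ.Point) (L : Γ.Line) : ℕ :=
  Γ.incGraph.dist (Sum.inl x) (Sum.inr L)

theorem dpp_comm (x y : Γ.Point) : Γ.dpp x y = Γ.dpp y x := SimpleGraph.dist_comm

theorem incGraph_adj_inl_inr {x : Γ.Point} {L : Γ.Line} :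
    Γ.incGraph.Adj (Sum.inl x) (Sum.inr L) ↔ x ∈ Γ.pts L := Iff.rfl

theorem incGraph_adj_inr_inl {x : Γ.Point} {L : Γ.Line} :
    Γ.incGraph.Adj (Sum.inr L) (Sum.inl x) ↔ x ∈ Γ.pts L := Iff.rfl

theorem IsGenHexagon.dpp_cases (hΓ : Γ.IsGenHexagon) (x y : Γ.Point) :
    Γ.dpp x y = 0 ∨ Γ.dpp x y = 2 ∨ Γ.dpp x y = 4 ∨ Γ.dpp x y = 6 := by
  have h1 := hΓ.dist_le_six (Sum.inl x) (Sum.inl y)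
  obtain ⟨k, hk⟩ := (hΓ.even_dist_iff (Sum.inl x) (Sum.inl y)).2 Iff.rfl
  unfold dpp
  omega

theorem IsGenHexagon.dpl_cases (hΓ : Γ.IsGenHexagon) (x : Γ.Point) (L : Γ.Line) :
    Γ.dpl x L = 1 ∨ Γ.dpl x L = 3 ∨ Γ.dpl x L = 5 := by
  have h1 := hΓ.dist_le_six (Sum.inl x) (Sum.inr L)
  have h2 := hΓ.even_dist_iff (Sum.inl x) (Sum.inr L)
  have h3 : Odd (Γ.incGraph.dist (Sum.inl x) (Sum.inr L)) := by
    rw [← Nat.not_even_iff_odd, h2]; simp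
  obtain ⟨k, hk⟩ := h3
  unfold dpl
  omega

@[simp] theorem dpp_self (x : Γ.Point) : Γ.dpp x x = 0 := SimpleGraph.dist_self

theorem IsGenHexagon.dpp_eq_zero (hΓ : Γ.IsGenHexagon) {x y : Γ.Point} :
    Γ.dpp x y = 0 ↔ x = y := by
  unfold dpp
  rw [(hΓ.preconnected _ _).dist_eq_zero_iff, Sum.inl.injEq]

theorem dpl_eq_one {x : Γ.Point} {L : Γ.Line} : Γ.dpl x L = 1 ↔ x ∈ Γ.pts L :=
  SimpleGraph.dist_eq_one_iff_adj

theorem IsGenHexagon.dpp_of_mem (hΓ : Γ.IsGenHexagon) (x : Γ.Point) {y : Γ.Point} {L : Γ.Line}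
    (h : y ∈ Γ.pts L) : Γ.dpp x y = Γ.dpl x L + 1 ∨ Γ.dpp x y + 1 = Γ.dpl x L :=
  hΓ.dist_of_adj (Sum.inl x) (incGraph_adj_inr_inl.2 h)

theorem IsGenHexagon.exists_proj_s6 (hΓ : Γ.IsGenHexagon) (x : Γ.Point) (L : Γ.Line) :
    ∃ y ∈ Γ.pts L, Γ.dpp x y + 1 = Γ.dpl x L := by
  have h0 : Γ.incGraph.dist (Sum.inl x) (Sum.inr L) ≠ 0 := by
    have := hΓ.dpl_cases x L
    unfold dpl at this
    omega
  obtain ⟨w | w, hw, hd⟩ := SimpleGraph.exists_adj_dist_add_one_eq h0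
  · exact ⟨w, hw, hd⟩
  · exact hw.elim

theorem IsGenHexagon.proj_unique_s6 (hΓ : Γ.IsGenHexagon) {x y z : Γ.Point} {L : Γ.Line}
    (hy : y ∈ Γ.pts L) (hz : z ∈ Γ.pts L) (hdy : Γ.dpp x y + 1 = Γ.dpl x L)
    (hdz : Γ.dpp x z + 1 = Γ.dpl x L) : y = z := by
  have h6 : Γ.dpl x L < 6 := by have := hΓ.dpl_cases x L; omega
  exact Sum.inl_injective (hΓ.pred_unique (incGraph_adj_inl_inr.2 hy)
    (incGraph_adj_inl_inr.2 hz) h6 hdy hdz)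

theorem IsGenHexagon.exists_line_toward (hΓ : Γ.IsGenHexagon) {x y : Γ.Point}
    (h : x ≠ y) : ∃ L, y ∈ Γ.pts L ∧ Γ.dpl x L + 1 = Γ.dpp x y := by
  obtain ⟨w | w, hw, hd⟩ := SimpleGraph.exists_adj_dist_add_one_eq
    (fun h0 => h (hΓ.dpp_eq_zero.1 h0))
  · exact hw.elim
  · exact ⟨w, hw, hd⟩

theorem IsGenHexagon.line_toward_unique (hΓ : Γ.IsGenHexagon) {x y : Γ.Point} {L M : Γ.Line}
    (hL : y ∈ Γ.pts L) (hM : y ∈ Γ.pts M) (h6 : Γ.dpp x y < 6)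
    (hdL : Γ.dpl x L + 1 = Γ.dpp x y) (hdM : Γ.dpl x M + 1 = Γ.dpp x y) : L = M :=
  Sum.inr_injective (hΓ.pred_unique (incGraph_adj_inr_inl.2 hL)
    (incGraph_adj_inr_inl.2 hM) h6 hdL hdM)

theorem IsGenHexagon.collinear_iff (hΓ : Γ.IsGenHexagon) {x y : Γ.Point} :
    Γ.Collinear x y ↔ Γ.dpp x y = 2 := by
  constructor
  · rintro ⟨hne, L, hx, hy⟩
    have h1 := hΓ.dpp_of_mem x hy
    rw [dpl_eq_one.2 hx] at h1
    have h0 : Γ.dpp x y ≠ 0 := fun h => hne (hΓ.dpp_eq_zero.1 h)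
    omega
  · intro h
    have hne : x ≠ y := by rintro rfl; simp at h
    obtain ⟨L, hy, hd⟩ := hΓ.exists_line_toward hne
    exact ⟨hne, L, dpl_eq_one.1 (by omega), hy⟩

theorem IsGenHexagon.special_iff (hΓ : Γ.IsGenHexagon) {x y : Γ.Point} :
    Γ.Special x y ↔ Γ.dpp x y = 4 := by
  constructor
  · rintro ⟨hne, hc, z, hxz, hyz⟩
    have h0 : Γ.dpp x y ≠ 0 := fun h => hne (hΓ.dpp_eq_zero.1 h)
    have h2 : Γ.dpp x y ≠ 2 := fun h => hc (hΓ.collinear_iff.2 h)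
    obtain ⟨-, M, hyM, hzM⟩ := hyz
    have h3 := hΓ.collinear_iff.1 hxz
    have h4 := hΓ.dpp_of_mem x hzM
    have h5 := hΓ.dpp_of_mem x hyM
    have h6 := hΓ.dpp_cases x y
    omega
  · intro h
    have hne : x ≠ y := by rintro rfl; simp at h
    obtain ⟨L, hy, hd⟩ := hΓ.exists_line_toward hne
    obtain ⟨z, hz, hdz⟩ := hΓ.exists_proj_s6 x L
    refine ⟨hne, fun hc => ?_, z, hΓ.collinear_iff.2 (by omega), ?_, L, hy, hz⟩
    · have := hΓ.collinear_iff.1 hc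
      omega
    · rintro rfl
      omega

theorem IsGenHexagon.opposite_iff (hΓ : Γ.IsGenHexagon) {x y : Γ.Point} :
    Γ.Opposite x y ↔ Γ.dpp x y = 6 := by
  unfold Opposite
  rw [hΓ.collinear_iff, hΓ.special_iff, ne_eq, ← hΓ.dpp_eq_zero]
  have := hΓ.dpp_cases x y
  omega

open scoped Classical

/-- A blocking set of `s + 1` pairwise special points in a finite generalised hexagon of
order `(s, t)`, phrased through distances in the incidence graph. -/
structure SpecialBlockingSet (Γ : GenHexagon) [Fintype Γ.Point] [Fintype Γ.Line] (s t : ℕ)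
    (S : Finset Γ.Point) : Prop where
  hex : Γ.IsGenHexagon
  one_lt_s : 1 < s
  one_lt_t : 1 < t
  card_line : ∀ L, (univ.filter (fun y => y ∈ Γ.pts L)).card = s + 1
  card_pencil : ∀ x, (univ.filter (fun L => x ∈ Γ.pts L)).card = t + 1
  card : S.card = s + 1
  block : ∀ q, ∃ x ∈ S, Γ.dpp x q ≠ 6
  special : ∀ x ∈ S, ∀ y ∈ S, x ≠ y → Γ.dpp x y = 4

namespace SpecialBlockingSet

variable [Fintype Γ.Point] [Fintype Γ.Line] {s t : ℕ} {S : Finset Γ.Point}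

/-- On a line far from all members of `S`, projecting `S` to the line is injective. -/
theorem eq_of_far (h : SpecialBlockingSet Γ s t S) {L : Γ.Line}
    (hfar : ∀ x ∈ S, Γ.dpl x L = 5) {q x y : Γ.Point} (hq : q ∈ Γ.pts L)
    (hx : x ∈ S) (hy : y ∈ S) (hxq : Γ.dpp x q = 4) (hyq : Γ.dpp y q = 4) : x = y := by
  choose f hf hfd using fun x => h.hex.exists_proj_s6 x L
  have hinj : Set.InjOn f S := by
    refine Finset.injOn_of_surjOn_of_card_le (t := univ.filter (fun y => y ∈ Γ.pts L)) f
      (fun x _ => by simpa using hf x) ?_ (by rw [h.card, h.card_line])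
    intro p hp
    have hp : p ∈ Γ.pts L := by simpa using hp
    obtain ⟨x, hx, hxp⟩ := h.block p
    refine ⟨x, hx, h.hex.proj_unique_s6 (x := x) (hf x) hp (hfd x) ?_⟩
    have h1 := h.hex.dpp_of_mem x hp
    have h2 := hfar x hx
    omega
  refine hinj hx hy ?_
  rw [h.hex.proj_unique_s6 (hf x) hq (hfd x) (by rw [hfar x hx, hxq]),
    h.hex.proj_unique_s6 (hf y) hq (hfd y) (by rw [hfar y hy, hyq])]

/-- If two members of `S` are collinear with `a`, then every line on `a` contains a member
of `S`. -/
theorem exists_mem_line (h : SpecialBlockingSet Γ s t S) {a x y : Γ.Point} (hx : x ∈ S)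
    (hy : y ∈ S) (hxy : x ≠ y) (hxa : Γ.dpp x a = 2) (hya : Γ.dpp y a = 2) {N : Γ.Line}
    (haN : a ∈ Γ.pts N) : ∃ z ∈ S, z ∈ Γ.pts N := by
  by_contra! hN
  have hN3 : ∀ u ∈ S, 3 ≤ Γ.dpl u N := by
    intro u hu
    have h1 := h.hex.dpl_cases u N
    have h2 := mt dpl_eq_one.1 (hN u hu)
    omega
  choose f hf hfd using fun x => h.hex.exists_proj_s6 x N
  have hfa : ∀ u ∈ S, Γ.dpp u a = 2 → f u = a := by
    intro u hu hua
    refine h.hex.proj_unique_s6 (x := u) (hf u) haN (hfd u) ?_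
    have h1 := h.hex.dpp_of_mem u haN
    have h2 := hN3 u hu
    omega
  have himg : (S.image f).card < (univ.filter (fun p => p ∈ Γ.pts N)).card := by
    have h1 : S.image f = (S.erase x).image f := by
      ext p
      simp only [mem_image, mem_erase]
      constructor
      · rintro ⟨u, hu, rfl⟩
        by_cases hux : u = x
        · subst hux
          exact ⟨y, ⟨hxy.symm, hy⟩, by rw [hfa u hx hxa, hfa y hy hya]⟩
        · exact ⟨u, ⟨hux, hu⟩, rfl⟩
      · rintro ⟨u, ⟨-, hu⟩, rfl⟩
        exact ⟨u, hu, rfl⟩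
    have h2 : (S.erase x).card + 1 = S.card := card_erase_add_one hx
    have h3 : ((S.erase x).image f).card ≤ (S.erase x).card := card_image_le
    rw [h1, h.card_line]
    have := h.card
    omega
  obtain ⟨q, hqN, hq⟩ := exists_mem_notMem_of_card_lt_card himg
  have hqN : q ∈ Γ.pts N := by simpa using hqN
  have hqd : ∀ u ∈ S, Γ.dpp u q = Γ.dpl u N + 1 := by
    intro u hu
    rcases h.hex.dpp_of_mem u hqN with h1 | h1
    · exact h1
    · exact absurd (mem_image.2 ⟨u, hu, h.hex.proj_unique_s6 (hf u) hqN (hfd u) h1⟩) hq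
  obtain ⟨M, hM, hMN⟩ : ∃ M ∈ univ.filter (fun L => q ∈ Γ.pts L), M ≠ N :=
    exists_mem_ne (by rw [h.card_pencil]; have := h.one_lt_t; omega) N
  have hM : q ∈ Γ.pts M := by simpa using hM
  have hfar : ∀ u ∈ S, Γ.dpl u M = 5 := by
    intro u hu
    have h1 := hqd u hu
    have h2 := h.hex.dpp_of_mem u hM
    have h3 := h.hex.dpl_cases u M
    have h4 := hN3 u hu
    have h6 := h.hex.dpp_cases u q
    by_contra h5
    exact hMN (h.hex.line_toward_unique (x := u) hM hqN (by omega) (by omega) (by omega))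
  have hd4 : ∀ u ∈ S, Γ.dpp u a = 2 → Γ.dpp u q = 4 := by
    intro u hu hua
    have h1 := hqd u hu
    have h2 := h.hex.dpp_of_mem u haN
    have h3 := hN3 u hu
    omega
  exact hxy (h.eq_of_far hfar hM hx hy (hd4 x hx hxa) (hd4 y hy hya))

/-- A line contains at most one member of `S`. -/
theorem eq_of_mem_line (h : SpecialBlockingSet Γ s t S) {x y : Γ.Point} (hx : x ∈ S)
    (hy : y ∈ S) {N : Γ.Line} (hxN : x ∈ Γ.pts N) (hyN : y ∈ Γ.pts N) : x = y := by
  by_contra hxy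
  have h1 := h.special x hx y hy hxy
  have h2 := h.hex.collinear_iff.1 ⟨hxy, N, hxN, hyN⟩
  omega

/-- A point collinear with a member of `S` is not in `S`. -/
theorem notMem_of_collinear (h : SpecialBlockingSet Γ s t S) {a x : Γ.Point} (hx : x ∈ S)
    (hxa : Γ.dpp x a = 2) : a ∉ S := by
  intro ha
  by_cases hax : x = a
  · subst hax
    simp at hxa
  · have := h.special x hx a ha hax
    omega

/-- If two members of `S` are collinear with `a`, then exactly `t + 1` of them are. -/
theorem card_filter_collinear (h : SpecialBlockingSet Γ s t S) {a x y : Γ.Point} (hx : x ∈ S)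
    (hy : y ∈ S) (hxy : x ≠ y) (hxa : Γ.dpp x a = 2) (hya : Γ.dpp y a = 2) :
    (S.filter (fun u => Γ.dpp u a = 2)).card = t + 1 := by
  rw [← h.card_pencil a]
  have : Nonempty Γ.Point := ⟨a⟩
  choose! f hfS hf using fun N (hN : a ∈ Γ.pts N) => h.exists_mem_line hx hy hxy hxa hya hN
  have ha := h.notMem_of_collinear hx hxa
  have hne : ∀ u ∈ S, u ≠ a := fun u hu hua => ha (hua ▸ hu)
  symm
  refine card_bij (fun N _ => f N) ?_ ?_ ?_
  · intro N hN
    have hN : a ∈ Γ.pts N := by simpa using hN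
    exact mem_filter.2 ⟨hfS N hN, h.hex.collinear_iff.1 ⟨hne _ (hfS N hN), N, hf N hN, hN⟩⟩
  · intro N hN M hM hNM
    have hN : a ∈ Γ.pts N := by simpa using hN
    have hM : a ∈ Γ.pts M := by simpa using hM
    have h2 := h.hex.collinear_iff.1 ⟨hne _ (hfS N hN), N, hf N hN, hN⟩
    refine h.hex.line_toward_unique (x := f N) hN hM (by omega) ?_ ?_
    · rw [dpl_eq_one.2 (hf N hN), h2]
    · rw [dpl_eq_one.2 (hNM ▸ hf M hM), h2]
  · intro u hu
    rw [mem_filter] at hu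
    obtain ⟨-, N, huN, haN⟩ := h.hex.collinear_iff.2 hu.2
    exact ⟨N, by simpa using haN, h.eq_of_mem_line (hfS N haN) hu.1 (hf N haN) huN⟩

/-- If all of `S` is collinear with `a`, every point opposite `a` and special to two members
of `S` is special, on each line through `a`, to the member of `S` on that line. -/
theorem mem_of_special_of_collinear (h : SpecialBlockingSet Γ s t S) {a q x y w : Γ.Point}
    (hall : ∀ u ∈ S, Γ.dpp u a = 2) (hx : x ∈ S) (hy : y ∈ S) (hxy : x ≠ y)
    (hqa : Γ.dpp q a = 6) (hqx : Γ.dpp q x = 4) (hqy : Γ.dpp q y = 4)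
    (hwa : Γ.dpp w a = 2) (hqw : Γ.dpp q w = 4) : w ∈ S := by
  by_contra hw
  have hwq : w ≠ q := by rintro rfl; simp at hqw
  obtain ⟨M, hqM, hM⟩ := h.hex.exists_line_toward hwq
  rw [dpp_comm w q, hqw] at hM
  have haM : Γ.dpl a M = 5 := by
    have h1 := h.hex.dpp_of_mem a hqM
    have h2 := h.hex.dpl_cases a M
    rw [dpp_comm, hqa] at h1
    omega
  have key : ∀ u N, u ∈ Γ.pts N → a ∈ Γ.pts N → Γ.dpl u M = 3 →
      Γ.incGraph.dist (Sum.inr M) (Sum.inr N) = 4 := by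
    intro u N hu ha hd
    have h1 := h.hex.dist_of_adj (Sum.inr M) (incGraph_adj_inl_inr.2 hu)
    have h2 := h.hex.dist_of_adj (Sum.inr M) (incGraph_adj_inl_inr.2 ha)
    rw [SimpleGraph.dist_comm (v := Sum.inl u)] at h1
    rw [SimpleGraph.dist_comm (v := Sum.inl a)] at h2
    unfold dpl at hd haM
    omega
  have hfar : ∀ u ∈ S, Γ.dpl u M = 5 := by
    intro u hu
    have hua := hall u hu
    obtain ⟨-, N, huN, haN⟩ := h.hex.collinear_iff.2 hua
    obtain ⟨-, N', hwN, haN'⟩ := h.hex.collinear_iff.2 hwa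
    rcases h.hex.dpl_cases u M with h1 | h1 | h1
    · have h2 := h.hex.dpp_of_mem a (dpl_eq_one.1 h1)
      rw [dpp_comm] at h2
      omega
    · exfalso
      have e1 := key u N huN haN h1
      have e2 := key w N' hwN haN' (by omega)
      have hMa : Γ.incGraph.dist (Sum.inr M) (Sum.inl a) = 5 := by
        rw [SimpleGraph.dist_comm]; exact haM
      have hNN : N = N' := Sum.inr_injective (h.hex.pred_unique (u := Sum.inr M)
        (incGraph_adj_inr_inl.2 haN) (incGraph_adj_inr_inl.2 haN') (by omega) (by omega)
        (by omega))
      subst hNN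
      have d1 : Γ.incGraph.dist (Sum.inr M) (Sum.inl u) = 3 := by
        rw [SimpleGraph.dist_comm]; exact h1
      have d2 : Γ.incGraph.dist (Sum.inr M) (Sum.inl w) = 3 := by
        rw [SimpleGraph.dist_comm]
        have : Γ.dpl w M = 3 := by omega
        exact this
      have huw : u = w := Sum.inl_injective (h.hex.pred_unique (u := Sum.inr M)
        (incGraph_adj_inl_inr.2 huN) (incGraph_adj_inl_inr.2 hwN) (by omega) (by omega)
        (by omega))
      exact hw (huw ▸ hu)
    · exact h1
  exact hxy (h.eq_of_far hfar hqM hx hy (by rw [dpp_comm, hqx]) (by rw [dpp_comm, hqy]))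

/-- For `z, y ∈ S`, let `c` be the point collinear with `y` on a line `l` through `z`. Then the
members of `S` at distance three from `l` are those collinear with `c`, apart from `z`. -/
theorem dpl_eq_three_iff (h : SpecialBlockingSet Γ s t S) {z y c u : Γ.Point} {l : Γ.Line}
    (hz : z ∈ S) (hy : y ∈ S) (hu : u ∈ S) (hzl : z ∈ Γ.pts l)
    (hyl : Γ.dpl y l = 3) (hcl : c ∈ Γ.pts l) (hyc : Γ.dpp y c = 2) :
    Γ.dpl u l = 3 ↔ u ≠ z ∧ Γ.dpp u c = 2 := by
  constructor
  · intro hul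
    have huz : u ≠ z := by
      rintro rfl
      rw [dpl_eq_one.2 hzl] at hul
      omega
    refine ⟨huz, ?_⟩
    by_contra huc
    have huc4 : Γ.dpp u c = 4 := by
      have := h.hex.dpp_of_mem u hcl
      omega
    obtain ⟨-, K, hyK, hcK⟩ := h.hex.collinear_iff.2 hyc
    have hKl : K ≠ l := by
      rintro rfl
      rw [dpl_eq_one.2 hyK] at hyl
      omega
    have huK : Γ.dpl u K = 5 := by
      rcases h.hex.dpp_of_mem u hcK with h1 | h1
      · exact absurd (h.hex.line_toward_unique (x := u) hcK hcl (by omega) (by omega)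
          (by omega)) hKl
      · omega
    have huy : u ≠ y := by
      rintro rfl
      omega
    have h4 := h.special u hu y hy huy
    have hyc' : y = c := h.hex.proj_unique_s6 (x := u) hyK hcK (by omega) (by omega)
    subst hyc'
    simp at hyc
  · rintro ⟨huz, huc⟩
    have h1 := h.hex.dpp_of_mem u hcl
    have h2 := h.hex.dpl_cases u l
    have h3 : Γ.dpl u l ≠ 1 := fun h3 => huz (h.eq_of_mem_line hu hz (dpl_eq_one.1 h3) hzl)
    omega

/-- If `S` is not contained in the neighbourhood of a single point, it carries the structure
of a projective plane of order `t`. -/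
theorem eq_mul_of_not_collinear (h : SpecialBlockingSet Γ s t S) {a x y z : Γ.Point}
    (hx : x ∈ S) (hy : y ∈ S) (hxy : x ≠ y) (hxa : Γ.dpp x a = 2) (hya : Γ.dpp y a = 2)
    (hz : z ∈ S) (hza : Γ.dpp z a ≠ 2) : s = t * (t + 1) := by
  have hline : ∀ u ∈ S.erase z, ∃ l, z ∈ Γ.pts l ∧ Γ.dpl u l = 3 := by
    intro u hu
    rw [mem_erase] at hu
    obtain ⟨l, hzl, hl⟩ := h.hex.exists_line_toward hu.1
    have := h.special u hu.2 z hz hu.1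
    exact ⟨l, hzl, by omega⟩
  obtain ⟨-, L₀, -⟩ := h.hex.collinear_iff.2 hxa
  have : Nonempty Γ.Line := ⟨L₀⟩
  choose! f hfz hf using hline
  have hf_unique : ∀ u ∈ S.erase z, ∀ l, z ∈ Γ.pts l → Γ.dpl u l = 3 → f u = l := by
    intro u hu l hzl hl
    have h4 := h.special u (mem_of_mem_erase hu) z hz (ne_of_mem_erase hu)
    have := hf u hu
    exact h.hex.line_toward_unique (x := u) (hfz u hu) hzl (by omega) (by omega) (by omega)
  set B := S.filter (fun u => Γ.dpp u a = 2) with hB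
  have hBz : ∀ u ∈ B, u ∈ S.erase z := by
    intro u hu
    rw [hB, mem_filter] at hu
    refine mem_erase.2 ⟨?_, hu.1⟩
    rintro rfl
    exact hza hu.2
  have hcenter : ∀ u ∈ S.erase z, ∃ c ∈ Γ.pts (f u), Γ.dpp u c = 2 := by
    intro u hu
    obtain ⟨c, hc, hd⟩ := h.hex.exists_proj_s6 u (f u)
    have := hf u hu
    exact ⟨c, hc, by omega⟩
  have hzc : ∀ u ∈ S.erase z, ∀ c ∈ Γ.pts (f u), Γ.dpp u c = 2 → Γ.dpp z c = 2 := by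
    intro u hu c hc hd
    refine h.hex.collinear_iff.1 ⟨?_, f u, hfz u hu, hc⟩
    rintro rfl
    have := h.special u (mem_of_mem_erase hu) z hz (ne_of_mem_erase hu)
    omega
  have hinj : Set.InjOn f B := by
    intro u hu v hv huv
    by_contra hne
    have hu' := hBz u hu
    have hv' := hBz v hv
    obtain ⟨c, hc, hd⟩ := hcenter u hu'
    have hv3 : Γ.dpl v (f u) = 3 := by rw [huv]; exact hf v hv'
    have hvc := ((h.dpl_eq_three_iff hz (mem_of_mem_erase hu') (mem_of_mem_erase hv')
      (hfz u hu') (hf u hu') hc hd).1 hv3).2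
    have hua := (mem_filter.1 (mem_coe.1 hu)).2
    have hva := (mem_filter.1 (mem_coe.1 hv)).2
    have h4 := h.special u (mem_of_mem_erase hu') v (mem_of_mem_erase hv') hne
    obtain ⟨-, K, hvK, hcK⟩ := h.hex.collinear_iff.2 hvc
    obtain ⟨-, N, hvN, haN⟩ := h.hex.collinear_iff.2 hva
    have dK : Γ.dpl u K = 3 := by
      have h1 := h.hex.dpp_of_mem u hvK
      have h2 := h.hex.dpp_of_mem u hcK
      omega
    have dN : Γ.dpl u N = 3 := by
      have h1 := h.hex.dpp_of_mem u hvN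
      have h2 := h.hex.dpp_of_mem u haN
      omega
    have hKN : K = N := h.hex.line_toward_unique (x := u) hvK hvN (by omega) (by omega)
      (by omega)
    subst hKN
    have hca : c = a := h.hex.proj_unique_s6 (x := u) hcK haN (by omega) (by omega)
    subst hca
    exact hza (hzc u hu' c hc hd)
  have hsurj : ∀ l, z ∈ Γ.pts l → ∃ u ∈ S.erase z, f u = l := by
    intro l hl
    have himg : B.image f = univ.filter (fun L => z ∈ Γ.pts L) := by
      refine eq_of_subset_of_card_le ?_ ?_
      · intro L hL
        obtain ⟨u, hu, rfl⟩ := mem_image.1 hL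
        simpa using hfz u (hBz u hu)
      · rw [card_image_of_injOn hinj, h.card_pencil, hB,
          h.card_filter_collinear hx hy hxy hxa hya]
    have hl' : l ∈ B.image f := by rw [himg]; simpa using hl
    obtain ⟨u, hu, rfl⟩ := mem_image.1 hl'
    exact ⟨u, hBz u hu, rfl⟩
  have hfib : ∀ l ∈ univ.filter (fun L => z ∈ Γ.pts L),
      ((S.erase z).filter (fun u => f u = l)).card = t := by
    intro l hl
    have hl : z ∈ Γ.pts l := by simpa using hl
    obtain ⟨u, hu, rfl⟩ := hsurj l hl
    obtain ⟨c, hc, hd⟩ := hcenter u hu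
    have hzc := hzc u hu c hc hd
    have heq : (S.erase z).filter (fun v => f v = f u) =
        (S.filter (fun v => Γ.dpp v c = 2)).erase z := by
      ext v
      simp only [mem_filter, mem_erase]
      constructor
      · rintro ⟨⟨hvz, hv⟩, hvu⟩
        refine ⟨hvz, hv, ((h.dpl_eq_three_iff hz (mem_of_mem_erase hu) hv hl (hf u hu) hc hd).1
          ?_).2⟩
        rw [← hvu]
        exact hf v (mem_erase.2 ⟨hvz, hv⟩)
      · rintro ⟨hvz, hv, hvc⟩
        exact ⟨⟨hvz, hv⟩, hf_unique v (mem_erase.2 ⟨hvz, hv⟩) _ hl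
          ((h.dpl_eq_three_iff hz (mem_of_mem_erase hu) hv hl (hf u hu) hc hd).2 ⟨hvz, hvc⟩)⟩
    rw [heq, card_erase_of_mem (mem_filter.2 ⟨hz, hzc⟩),
      h.card_filter_collinear (mem_of_mem_erase hu) hz (ne_of_mem_erase hu) hd hzc]
    rfl
  have hsum := card_eq_sum_card_fiberwise (s := S.erase z) (f := f)
    (t := univ.filter (fun L => z ∈ Γ.pts L)) (fun u hu => by simpa using hfz u hu)
  rw [sum_congr rfl hfib, sum_const, h.card_pencil, card_erase_of_mem hz, h.card] at hsum
  simp only [Nat.add_sub_cancel, smul_eq_mul] at hsum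
  rw [hsum, mul_comm]

end SpecialBlockingSet

/-- The trace of an idempotent real matrix is a natural number. -/
theorem _root_.Matrix.exists_nat_trace_of_isIdempotentElem {ι : Type*} [Fintype ι] [DecidableEq ι]
    {E : Matrix ι ι ℝ} (hE : E * E = E) : ∃ m : ℕ, E.trace = m := by
  have h : IsIdempotentElem (Matrix.toLin' E) := by
    unfold IsIdempotentElem
    rw [Module.End.mul_eq_comp, ← Matrix.toLin'_mul, hE]
  refine ⟨Module.finrank ℝ (LinearMap.range (Matrix.toLin' E)), ?_⟩
  rw [← Matrix.trace_toLin'_eq]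
  exact (LinearMap.IsIdempotentElem.isProj_range _ h).trace

/-- Integrality of an eigenvalue multiplicity, for a matrix satisfying the relations of
`N * Nᵀ`, where `N` is the point-line incidence matrix of a generalised hexagon of order
`(s, t)`. -/
theorem exists_nat_multiplicity {ι : Type*} [Fintype ι] [DecidableEq ι] [Nonempty ι]
    {R J : Matrix ι ι ℝ} {s t ε : ℝ} (hε : ε ^ 2 = s * t) (hε0 : ε ≠ 0)
    (hρ : s + t + ε ≠ 0) (ht : t + 1 ≠ 0)
    (hRJ : R * J = ((s + 1) * (t + 1)) • J) (hJR : J * R = ((s + 1) * (t + 1)) • J)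
    (hJJ : J * J = (Fintype.card ι : ℝ) • J)
    (hR : R * R * R - (2 * (s + t)) • (R * R) + (s ^ 2 + t ^ 2 + s * t) • R = (t + 1) • J)
    (hR1 : R.trace = Fintype.card ι * (t + 1))
    (hR2 : (R * R).trace = Fintype.card ι * ((t + 1) * (s + t + 1)))
    (hJ1 : J.trace = Fintype.card ι) :
    ∃ m : ℕ, 2 * m * (s + t + ε) = s * t * (1 + s) * (1 + t) * (1 + s * t + ε) := by
  set n : ℝ := (Fintype.card ι : ℝ) with hn
  have hn0 : n ≠ 0 := by simp [hn]
  set r : ℝ := (s + 1) * (t + 1) with hr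
  have hRRJ : R * R * J = (r ^ 2) • J := by
    rw [mul_assoc, hRJ, Matrix.mul_smul, hRJ, smul_smul, sq]
  have hRRRJ : R * R * R * J = (r ^ 3) • J := by
    rw [mul_assoc, hRJ, Matrix.mul_smul, hRRJ, smul_smul]
    congr 1
    ring
  have hcount : n = (1 + s) * (1 + s * t + (s * t) ^ 2) := by
    have h1 := congrArg (fun X => (X * J).trace) hR
    simp only [add_mul, sub_mul, Matrix.smul_mul, hRRRJ, hRRJ, hRJ, hJJ, Matrix.trace_add,
      Matrix.trace_sub, Matrix.trace_smul, hJ1, smul_eq_mul] at h1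
    have h2 : (t + 1) * n * (n - (1 + s) * (1 + s * t + (s * t) ^ 2)) = 0 := by
      rw [hr] at h1
      linear_combination -h1
    have h3 := (mul_eq_zero.1 h2).resolve_left (mul_ne_zero ht hn0)
    linarith
  set κ : ℝ := r * (r - (s + t - ε)) / n with hκ
  have hκn : κ * n = r * (r - (s + t - ε)) := by
    rw [hκ]; field_simp
  have hκρ : (t + 1) - κ * r + (s + t + ε) * κ = 0 := by
    have : n * ((t + 1) - κ * r + (s + t + ε) * κ) = 0 := by
      have h1 : n * ((t + 1) - κ * r + (s + t + ε) * κ) =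
          n * (t + 1) - (κ * n) * (r - (s + t + ε)) := by ring
      rw [h1, hκn, hcount, hr]
      linear_combination ((s + 1) * (t + 1)) * hε
    exact (mul_eq_zero.1 this).resolve_left hn0
  set F : Matrix ι ι ℝ := R * R - (s + t - ε) • R - κ • J with hF
  have hRF : R * F = (s + t + ε) • F := by
    rw [hF]
    simp only [mul_sub, Matrix.mul_smul, hRJ, ← mul_assoc]
    have e : (s + t + ε) * (s + t - ε) = s ^ 2 + t ^ 2 + s * t := by
      linear_combination -hε
    have e2 : (t + 1) = κ * r - (s + t + ε) * κ := by linear_combination hκρ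
    rw [e2, ← e] at hR
    linear_combination (norm := module) hR
  have hJF : J * F = 0 := by
    rw [hF]
    simp only [mul_sub, Matrix.mul_smul, hJJ, ← mul_assoc, hJR, Matrix.smul_mul, smul_smul]
    rw [hκn]
    module
  have hFF : F * F = (2 * ε * (s + t + ε)) • F := by
    nth_rewrite 1 [hF]
    simp only [sub_mul, Matrix.smul_mul, mul_assoc, hRF, hJF, Matrix.mul_smul]
    module
  have hc : 2 * ε * (s + t + ε) ≠ 0 := mul_ne_zero (mul_ne_zero two_ne_zero hε0) hρ
  obtain ⟨m, hm⟩ := Matrix.exists_nat_trace_of_isIdempotentElem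
    (E := (2 * ε * (s + t + ε))⁻¹ • F) (by
      rw [Matrix.smul_mul, Matrix.mul_smul, hFF, smul_smul, smul_smul]
      congr 1
      field_simp)
  refine ⟨m, ?_⟩
  have htr : F.trace = n * ((t + 1) * (s + t + 1)) - (s + t - ε) * (n * (t + 1)) - κ * n := by
    rw [hF, Matrix.trace_sub, Matrix.trace_sub, Matrix.trace_smul, Matrix.trace_smul, hR1, hR2,
      hJ1, smul_eq_mul, smul_eq_mul]
  rw [Matrix.trace_smul, smul_eq_mul, htr, hκn, inv_mul_eq_iff_eq_mul₀ hc] at hm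
  have hε' : s * t = ε ^ 2 := hε.symm
  have h1 : ε * (2 * m * (s + t + ε)) = ε * (s * t * (1 + s) * (1 + t) * (1 + s * t + ε)) := by
    have e1 : r - (s + t - ε) = 1 + s * t + ε := by rw [hr]; ring
    rw [e1, hcount, hε', hr] at hm
    rw [hε']
    linear_combination -hm
  exact mul_left_cancel₀ hε0 h1

section Multiplicities

variable {s t : ℕ}

theorem IsGenHexagon.card_line_filter [Fintype Γ.Point] (hΓ : Γ.IsGenHexagon)
    (hs : ∀ L, (univ.filter (fun y => y ∈ Γ.pts L)).card = s + 1) (y : Γ.Point) (L : Γ.Line)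
    (k : ℕ) : (univ.filter (fun x => x ∈ Γ.pts L ∧ Γ.dpp y x = k)).card =
      (if k + 1 = Γ.dpl y L then 1 else 0) + (if k = Γ.dpl y L + 1 then s else 0) := by
  obtain ⟨p, hp, hpd⟩ := hΓ.exists_proj_s6 y L
  have hiff : ∀ x ∈ Γ.pts L, (Γ.dpp y x + 1 = Γ.dpl y L ↔ x = p) := fun x hx =>
    ⟨fun h => hΓ.proj_unique_s6 hx hp h hpd, fun h => h ▸ hpd⟩
  by_cases h1 : k + 1 = Γ.dpl y L
  · have : univ.filter (fun x => x ∈ Γ.pts L ∧ Γ.dpp y x = k) = {p} := by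
      ext x
      simp only [mem_filter, mem_univ, true_and, mem_singleton]
      constructor
      · rintro ⟨hx, rfl⟩
        exact (hiff x hx).1 h1
      · rintro rfl
        exact ⟨hp, by omega⟩
    rw [this, if_pos h1, if_neg (by omega)]
    rfl
  · rw [if_neg h1]
    by_cases h2 : k = Γ.dpl y L + 1
    · have : univ.filter (fun x => x ∈ Γ.pts L ∧ Γ.dpp y x = k) =
          (univ.filter (fun x => x ∈ Γ.pts L)).erase p := by
        ext x
        simp only [mem_filter, mem_univ, true_and, mem_erase]
        constructor
        · rintro ⟨hx, hk⟩
          exact ⟨fun hxp => by have := (hiff x hx).2 hxp; omega, hx⟩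
        · rintro ⟨hxp, hx⟩
          have := mt (hiff x hx).1 hxp
          have := hΓ.dpp_of_mem y hx
          exact ⟨hx, by omega⟩
      rw [this, if_pos h2, card_erase_of_mem (by simpa using hp), hs]
      omega
    · rw [if_neg h2, card_eq_zero, filter_eq_empty_iff]
      rintro x - ⟨hx, hk⟩
      have := hΓ.dpp_of_mem y hx
      omega

theorem IsGenHexagon.card_pencil_filter [Fintype Γ.Line] (hΓ : Γ.IsGenHexagon)
    (ht : ∀ x, (univ.filter (fun L => x ∈ Γ.pts L)).card = t + 1) (y x : Γ.Point)
    (k : ℕ) : (univ.filter (fun L => x ∈ Γ.pts L ∧ Γ.dpl y L = k)).card =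
      if Γ.dpp y x = 0 then (if k = 1 then t + 1 else 0)
      else if Γ.dpp y x = 6 then (if k = 5 then t + 1 else 0)
      else (if k + 1 = Γ.dpp y x then 1 else 0) + (if k = Γ.dpp y x + 1 then t else 0) := by
  have hconst : ∀ j, (∀ L, x ∈ Γ.pts L → Γ.dpl y L = j) →
      (univ.filter (fun L => x ∈ Γ.pts L ∧ Γ.dpl y L = k)).card =
        if k = j then t + 1 else 0 := by
    intro j hj
    split_ifs with h
    · rw [← ht x]
      congr 1
      ext L
      simp only [mem_filter, mem_univ, true_and, and_iff_left_iff_imp]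
      exact fun hL => (hj L hL).trans h.symm
    · rw [card_eq_zero, filter_eq_empty_iff]
      rintro L - ⟨hx, hk⟩
      exact h (hk ▸ hj L hx)
  by_cases h0 : Γ.dpp y x = 0
  · rw [if_pos h0]
    exact hconst 1 fun L hL => by have := hΓ.dpp_of_mem y hL; omega
  rw [if_neg h0]
  by_cases h6 : Γ.dpp y x = 6
  · rw [if_pos h6]
    exact hconst 5 fun L hL => by
      have := hΓ.dpp_of_mem y hL
      have := hΓ.dpl_cases y L
      omega
  · rw [if_neg h6]
    have hc := hΓ.dpp_cases y x
    obtain ⟨M, hM, hMd⟩ := hΓ.exists_line_toward (x := y) (y := x)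
      (fun h => h0 (hΓ.dpp_eq_zero.2 h))
    have hiff : ∀ L, x ∈ Γ.pts L → (Γ.dpl y L + 1 = Γ.dpp y x ↔ L = M) := fun L hL =>
      ⟨fun h => hΓ.line_toward_unique hL hM (by omega) h hMd, fun h => h ▸ hMd⟩
    by_cases h1 : k + 1 = Γ.dpp y x
    · have : univ.filter (fun L => x ∈ Γ.pts L ∧ Γ.dpl y L = k) = {M} := by
        ext L
        simp only [mem_filter, mem_univ, true_and, mem_singleton]
        constructor
        · rintro ⟨hx, rfl⟩
          exact (hiff L hx).1 h1
        · rintro rfl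
          exact ⟨hM, by omega⟩
      rw [this, if_pos h1, if_neg (by omega)]
      rfl
    · rw [if_neg h1]
      by_cases h2 : k = Γ.dpp y x + 1
      · have : univ.filter (fun L => x ∈ Γ.pts L ∧ Γ.dpl y L = k) =
            (univ.filter (fun L => x ∈ Γ.pts L)).erase M := by
          ext L
          simp only [mem_filter, mem_univ, true_and, mem_erase]
          constructor
          · rintro ⟨hx, hk⟩
            exact ⟨fun hLM => by have := (hiff L hx).2 hLM; omega, hx⟩
          · rintro ⟨hLM, hx⟩
            have := mt (hiff L hx).1 hLM
            have := hΓ.dpp_of_mem y hx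
            exact ⟨hx, by omega⟩
        rw [this, if_pos h2, card_erase_of_mem (by simpa using hM), ht]
        omega
      · rw [if_neg h2, card_eq_zero, filter_eq_empty_iff]
        rintro L - ⟨hx, hk⟩
        have := hΓ.dpp_of_mem y hx
        omega

/-- The point-line incidence matrix. -/
noncomputable def incMat (Γ : GenHexagon) : Matrix Γ.Point Γ.Line ℝ :=
  Matrix.of fun x L => if x ∈ Γ.pts L then 1 else 0

/-- The matrix of the relation between points of being at distance `k`. -/
noncomputable def distMatPP (Γ : GenHexagon) (k : ℕ) : Matrix Γ.Point Γ.Point ℝ :=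
  Matrix.of fun x y => if Γ.dpp y x = k then 1 else 0

/-- The matrix of the relation between lines and points of being at distance `k`. -/
noncomputable def distMatLP (Γ : GenHexagon) (k : ℕ) : Matrix Γ.Line Γ.Point ℝ :=
  Matrix.of fun L y => if Γ.dpl y L = k then 1 else 0

theorem incMat_mul_apply [Fintype Γ.Line] (k : ℕ) (x y : Γ.Point) : (Γ.incMat * Γ.distMatLP k) x y =
    (univ.filter (fun L => x ∈ Γ.pts L ∧ Γ.dpl y L = k)).card := by
  simp only [Matrix.mul_apply, incMat, distMatLP, Matrix.of_apply, ite_mul, one_mul, zero_mul,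
    ← ite_and, sum_boole]

theorem incMat_transpose_mul_apply [Fintype Γ.Point] (k : ℕ) (L : Γ.Line) (y : Γ.Point) :
    (Γ.incMat.transpose * Γ.distMatPP k) L y =
      (univ.filter (fun x => x ∈ Γ.pts L ∧ Γ.dpp y x = k)).card := by
  simp only [Matrix.mul_apply, incMat, distMatPP, Matrix.transpose_apply, Matrix.of_apply,
    ite_mul, one_mul, zero_mul, ← ite_and, sum_boole]

theorem IsGenHexagon.exists_nat_multiplicity [Fintype Γ.Point] [Fintype Γ.Line]
    [Nonempty Γ.Point] (hΓ : Γ.IsGenHexagon)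
    (hs : ∀ L, (univ.filter (fun y => y ∈ Γ.pts L)).card = s + 1)
    (ht : ∀ x, (univ.filter (fun L => x ∈ Γ.pts L)).card = t + 1)
    {ε : ℝ} (hε : ε ^ 2 = s * t) (hε0 : ε ≠ 0) (hρ : s + t + ε ≠ 0) :
    ∃ m : ℕ, 2 * m * (s + t + ε) = (s * t * (1 + s) * (1 + t) * (1 + s * t + ε) : ℝ) := by
  set N := Γ.incMat with hN
  set P := Γ.distMatPP with hP
  set Q := Γ.distMatLP with hQ
  have hP0 : P 0 = 1 := by
    ext x y
    simp [hP, distMatPP, Matrix.one_apply, hΓ.dpp_eq_zero, eq_comm]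
  have hQ1 : Q 1 = N.transpose := by
    ext L y
    simp [hQ, hN, distMatLP, incMat, dpl_eq_one]
  have e1 : N * Q 1 = ((t : ℝ) + 1) • P 0 + P 2 := by
    ext x y
    rw [incMat_mul_apply, hΓ.card_pencil_filter ht]
    rcases hΓ.dpp_cases y x with h | h | h | h <;> simp [hP, distMatPP, h]
  have e2 : N * Q 3 = (t : ℝ) • P 2 + P 4 := by
    ext x y
    rw [incMat_mul_apply, hΓ.card_pencil_filter ht]
    rcases hΓ.dpp_cases y x with h | h | h | h <;> simp [hP, distMatPP, h]
  have e3 : N * Q 5 = (t : ℝ) • P 4 + ((t : ℝ) + 1) • P 6 := by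
    ext x y
    rw [incMat_mul_apply, hΓ.card_pencil_filter ht]
    rcases hΓ.dpp_cases y x with h | h | h | h <;> simp [hP, distMatPP, h]
  have f2 : N.transpose * P 2 = (s : ℝ) • Q 1 + Q 3 := by
    ext L y
    rw [incMat_transpose_mul_apply, hΓ.card_line_filter hs]
    rcases hΓ.dpl_cases y L with h | h | h <;> simp [hQ, distMatLP, h]
  have f4 : N.transpose * P 4 = (s : ℝ) • Q 3 + Q 5 := by
    ext L y
    rw [incMat_transpose_mul_apply, hΓ.card_line_filter hs]
    rcases hΓ.dpl_cases y L with h | h | h <;> simp [hQ, distMatLP, h]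
  set R := N * N.transpose with hR
  set J : Matrix Γ.Point Γ.Point ℝ := Matrix.of fun _ _ => 1 with hJ
  have hsum : P 0 + P 2 + P 4 + P 6 = J := by
    ext x y
    rcases hΓ.dpp_cases y x with h | h | h | h <;> simp [hP, hJ, distMatPP, h]
  have hRP2 : R = ((t : ℝ) + 1) • (1 : Matrix Γ.Point Γ.Point ℝ) + P 2 := by
    rw [hR, ← hQ1, e1, hP0]
  have hNTJ : N.transpose * J = ((s : ℝ) + 1) • Matrix.of fun _ _ => (1 : ℝ) := by
    ext L y
    simp [hN, hJ, Matrix.mul_apply, incMat, hs]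
  have hNJ : N * (Matrix.of fun _ _ => (1 : ℝ) : Matrix Γ.Line Γ.Point ℝ)
      = ((t : ℝ) + 1) • J := by
    ext x y
    simp [hN, hJ, Matrix.mul_apply, incMat, ht]
  have hRJ : R * J = (((s : ℝ) + 1) * (t + 1)) • J := by
    rw [hR, Matrix.mul_assoc, hNTJ, Matrix.mul_smul, hNJ, smul_smul]
  have hJR : J * R = (((s : ℝ) + 1) * (t + 1)) • J := by
    have h1 := congrArg Matrix.transpose hRJ
    have hJT : J.transpose = J := rfl
    rwa [Matrix.transpose_mul, Matrix.transpose_smul, hJT, hR, Matrix.transpose_mul,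
      Matrix.transpose_transpose] at h1
  have hJJ : J * J = (Fintype.card Γ.Point : ℝ) • J := by
    ext x y
    simp [hJ, Matrix.mul_apply]
  have hQ3 : Q 3 = N.transpose * P 2 - (s : ℝ) • N.transpose := by
    rw [f2, hQ1]; module
  have hP2 : P 2 = R - ((t : ℝ) + 1) • (1 : Matrix Γ.Point Γ.Point ℝ) := by
    rw [hRP2]; module
  have hNQ3 : N * Q 3 = R * R - ((s : ℝ) + t + 1) • R := by
    rw [hQ3, Matrix.mul_sub, ← Matrix.mul_assoc, Matrix.mul_smul, ← hR, hP2, mul_sub,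
      Matrix.mul_smul, mul_one]
    module
  have hP4 : P 4 = R * R - ((s : ℝ) + 2 * t + 1) • R + ((t : ℝ) * (t + 1)) • 1 := by
    have : P 4 = N * Q 3 - (t : ℝ) • P 2 := by rw [e2]; module
    rw [this, hNQ3, hP2]
    module
  have hNQ5 : N * Q 5 = R * P 4 - (s : ℝ) • (N * Q 3) := by
    have : Q 5 = N.transpose * P 4 - (s : ℝ) • Q 3 := by rw [f4]; module
    rw [this, Matrix.mul_sub, ← Matrix.mul_assoc, Matrix.mul_smul]
  have hcub : R * R * R - (2 * ((s : ℝ) + t)) • (R * R) + ((s : ℝ) ^ 2 + (t : ℝ) ^ 2 + s * t) • R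
      = ((t : ℝ) + 1) • J := by
    have h1 : ((t : ℝ) + 1) • J = ((t : ℝ) + 1) • (1 + P 2) + P 4 + N * Q 5 := by
      rw [← hsum, e3, hP0]; module
    have h2 : R * P 4 =
        R * R * R - ((s : ℝ) + 2 * t + 1) • (R * R) + ((t : ℝ) * (t + 1)) • R := by
      rw [hP4, Matrix.mul_add, Matrix.mul_sub, Matrix.mul_smul, Matrix.mul_smul, mul_one,
        ← mul_assoc]
    rw [h1, hNQ5, hNQ3, h2, hP4, hP2]
    module
  have htP2 : (P 2).trace = 0 := by
    simp [Matrix.trace, hP, distMatPP]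
  have htP4 : (P 4).trace = 0 := by
    simp [Matrix.trace, hP, distMatPP]
  have hR1 : R.trace = Fintype.card Γ.Point * ((t : ℝ) + 1) := by
    rw [hRP2, Matrix.trace_add, Matrix.trace_smul, htP2, Matrix.trace_one, smul_eq_mul]
    ring
  have hR2 : (R * R).trace = Fintype.card Γ.Point * (((t : ℝ) + 1) * (s + t + 1)) := by
    have h1 := congrArg Matrix.trace hP4
    rw [htP4, Matrix.trace_add, Matrix.trace_sub, Matrix.trace_smul, Matrix.trace_smul, hR1,
      Matrix.trace_one, smul_eq_mul, smul_eq_mul] at h1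
    linear_combination -h1
  have hJ1 : J.trace = Fintype.card Γ.Point := by
    simp [Matrix.trace, hJ]
  exact GenHexagon.exists_nat_multiplicity hε hε0 hρ (by positivity) hRJ hJR hJJ hcub hR1 hR2 hJ1

end Multiplicities

/-- The parameters `s = t * (t + 1)` violate the integrality of multiplicities. -/
theorem false_of_multiplicities {s t : ℕ} (ht : 1 < t) (hst : s = t * (t + 1))
    (h : ∀ ε : ℝ, ε ^ 2 = s * t → ε ≠ 0 → s + t + ε ≠ 0 →
      ∃ m : ℕ, 2 * m * (s + t + ε) = (s * t * (1 + s) * (1 + t) * (1 + s * t + ε) : ℝ)) :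
    False := by
  have hs : t < s := by rw [hst]; nlinarith
  have hsq : IsSquare (s * t) := by
    by_contra hsq
    have hirr : Irrational √((s * t : ℕ) : ℝ) := irrational_sqrt_natCast_iff.2 hsq
    set k : ℝ := √((s * t : ℕ) : ℝ) with hk
    have hk2 : k ^ 2 = s * t := by
      rw [hk, Real.sq_sqrt (by positivity)]
      push_cast
      ring
    have hk0 : 0 < k := Real.sqrt_pos.2 (by exact_mod_cast Nat.mul_pos (by omega) (by omega))
    obtain ⟨m, hm⟩ := h k hk2 hk0.ne' (by positivity)
    set C : ℤ := s * t * (1 + s) * (1 + t) with hC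
    have hCpos : 0 < C := by
      have : 0 < s := by omega
      positivity
    have hm' : ((2 * m - C : ℤ) : ℝ) * k = ((C * (1 + s * t) - 2 * m * (s + t) : ℤ) : ℝ) := by
      rw [hC]
      push_cast
      linear_combination hm
    by_cases hb : (2 * m - C : ℤ) = 0
    · rw [hb, Int.cast_zero, zero_mul] at hm'
      have h1 : C * (1 + s * t) - 2 * m * (s + t) = 0 := by exact_mod_cast hm'.symm
      have h2 : C * (((s : ℤ) - 1) * (t - 1)) = 0 := by linear_combination h1 + (s + t) * hb
      have h3 : 0 < ((s : ℤ) - 1) * (t - 1) := mul_pos (by omega) (by omega)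
      exact (mul_pos hCpos h3).ne' h2
    · exact (hirr.intCast_mul hb).ne_int _ hm'
  obtain ⟨n, hn1, hnt⟩ : ∃ n : ℕ, 1 < n ∧ t + 1 = n ^ 2 := by
    obtain ⟨c, hc⟩ := hsq
    have hc' : t ^ 2 * (t + 1) = c ^ 2 := by rw [sq c, ← hc, hst]; ring
    obtain ⟨n, rfl⟩ : t ∣ c := (Nat.pow_dvd_pow_iff two_ne_zero).1 ⟨t + 1, hc'.symm⟩
    have hn : t + 1 = n ^ 2 := by
      rw [mul_pow] at hc'
      exact Nat.eq_of_mul_eq_mul_left (by positivity) hc'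
    exact ⟨n, by nlinarith, hn⟩
  have htR : (t : ℝ) = n ^ 2 - 1 := by
    have : (t : ℝ) + 1 = n ^ 2 := by exact_mod_cast hnt
    linarith
  have hsR : (s : ℝ) = n ^ 2 * (n ^ 2 - 1) := by
    rw [hst]; push_cast; rw [htR]; ring
  have hnR : (1 : ℝ) < n := by exact_mod_cast hn1
  have hn4 : n = 4 := by
    have hpos : 0 < (n : ℝ) * (n ^ 2 - 1) := mul_pos (by linarith) (by nlinarith)
    obtain ⟨m, hm⟩ := h (n * (n ^ 2 - 1)) (by rw [hsR, htR]; ring) hpos.ne' (by positivity)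
    have hm0 : ((n : ℝ) ^ 2 - 1) * (2 * m * (n ^ 2 + n + 1)) = (n ^ 2 - 1) * (n ^ 4 * (n ^ 2 - 1) *
        (n ^ 4 - n ^ 2 + 1) * (1 + n ^ 2 * (n ^ 2 - 1) ^ 2 + n * (n ^ 2 - 1))) := by
      rw [hsR, htR] at hm
      linear_combination hm
    have hm1 := mul_left_cancel₀ (by nlinarith : ((n : ℝ) ^ 2 - 1) ≠ 0) hm0
    have hm2 : (2 * m * (n ^ 2 + n + 1) : ℤ) = n ^ 4 * (n ^ 2 - 1) *
        (n ^ 4 - n ^ 2 + 1) * (1 + n ^ 2 * (n ^ 2 - 1) ^ 2 + n * (n ^ 2 - 1)) := by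
      exact_mod_cast hm1
    have hdvd : ((n : ℤ) ^ 2 + n + 1) ∣ 4 * ((n : ℤ) - 4) :=
      ⟨-2 * m + (n ^ 14 - n ^ 13 - 4 * n ^ 12 + 6 * n ^ 11 + 5 * n ^ 10 - 14 * n ^ 9 + 3 * n ^ 8
        + 15 * n ^ 7 - 16 * n ^ 6 - 2 * n ^ 5 + 19 * n ^ 4 - 16 * n ^ 3 - 4 * n ^ 2 + 20 * n
        - 16), by linear_combination hm2⟩
    have hodd : Odd ((n : ℤ) ^ 2 + n + 1) := by
      have : (n : ℤ) ^ 2 + n + 1 = n * (n + 1) + 1 := by ring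
      rw [this]
      exact (Int.even_mul_succ_self n).add_one
    have hcop : IsCoprime ((n : ℤ) ^ 2 + n + 1) (2 ^ 2) :=
      (Int.isCoprime_two_right.2 hodd).pow_right
    have hdvd' : ((n : ℤ) ^ 2 + n + 1) ∣ (n : ℤ) - 4 :=
      hcop.dvd_of_dvd_mul_left (by norm_num; exact hdvd)
    have h0 := Int.eq_zero_of_abs_lt_dvd hdvd' (by rw [abs_lt]; constructor <;> nlinarith)
    omega
  subst hn4
  norm_num at htR hsR
  obtain ⟨m, hm⟩ := h (-60) (by rw [hsR, htR]; norm_num) (by norm_num)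
    (by rw [hsR, htR]; norm_num)
  rw [hsR, htR] at hm
  norm_num at hm
  have hm' : 2 * m * 195 = 240 * 15 * 241 * 16 * 3541 := by
    have : (2 * m * 195 : ℝ) = 240 * 15 * 241 * 16 * 3541 := by linarith
    exact_mod_cast this
  omega

theorem HasOrder.finite_adj {s t : ℕ} (hord : Γ.HasOrder s t) (v : Γ.Point ⊕ Γ.Line) :
    {w | Γ.incGraph.Adj v w}.Finite := by
  rcases v with x | L
  · have hfin : {L | x ∈ Γ.pts L}.Finite :=
      Set.finite_of_encard_eq_coe (k := t + 1) (by rw [hord.2 x]; rfl)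
    refine (hfin.image Sum.inr).subset ?_
    rintro (y | M) h
    · exact h.elim
    · exact ⟨M, h, rfl⟩
  · have hfin : (Γ.pts L).Finite :=
      Set.finite_of_encard_eq_coe (k := s + 1) (by rw [hord.1 L]; rfl)
    refine (hfin.image Sum.inl).subset ?_
    rintro (y | M) h
    · exact ⟨y, h, rfl⟩
    · exact h.elim

/-- A generalised hexagon of finite order has finitely many points and lines. -/
theorem IsGenHexagon.finite (hΓ : Γ.IsGenHexagon) {s t : ℕ} (hord : Γ.HasOrder s t)
    (u : Γ.Point ⊕ Γ.Line) : Finite (Γ.Point ⊕ Γ.Line) := by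
  have hball : ∀ n, {v | Γ.incGraph.dist u v ≤ n}.Finite := by
    intro n
    induction n with
    | zero =>
      refine (Set.finite_singleton u).subset fun v hv => ?_
      exact ((hΓ.preconnected u v).dist_eq_zero_iff.1 (Nat.le_zero.1 hv)).symm
    | succ n ih =>
      refine (ih.union (ih.biUnion fun w _ => hord.finite_adj w)).subset fun v hv => ?_
      by_cases h0 : Γ.incGraph.dist u v = 0
      · exact Or.inl (h0.le.trans (Nat.zero_le n))
      · obtain ⟨w, hw, hd⟩ := SimpleGraph.exists_adj_dist_add_one_eq h0
        refine Or.inr (Set.mem_biUnion (x := w) ?_ hw)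
        simp only [Set.mem_ofPred_eq] at hv ⊢
        omega
  exact Set.finite_univ_iff.1 ((hball 6).subset fun v _ => hΓ.dist_le_six u v)

theorem SpecialBlockingSet.false_of_not_collinear [Fintype Γ.Point] [Fintype Γ.Line] {s t : ℕ}
    {S : Finset Γ.Point} (h : SpecialBlockingSet Γ s t S) {a x y z : Γ.Point}
    (hx : x ∈ S) (hy : y ∈ S) (hxy : x ≠ y) (hxa : Γ.dpp x a = 2) (hya : Γ.dpp y a = 2)
    (hz : z ∈ S) (hza : Γ.dpp z a ≠ 2) : False := by
  have : Nonempty Γ.Point := ⟨a⟩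
  exact false_of_multiplicities h.one_lt_t
    (h.eq_mul_of_not_collinear hx hy hxy hxa hya hz hza)
    fun ε hε hε0 hρ => h.hex.exists_nat_multiplicity h.card_line h.card_pencil hε hε0 hρ

/-- A blocking set of `s + 1` pairwise special points is a hyperbolic line, and `s = t`. -/
theorem SpecialBlockingSet.eq_and_isHyperbolicLine [Fintype Γ.Point] [Fintype Γ.Line] {s t : ℕ}
    {S : Finset Γ.Point} (h : SpecialBlockingSet Γ s t S) :
    s = t ∧ Γ.IsHyperbolicLine S := by
  obtain ⟨x, hx, y, hy, hxy⟩ := one_lt_card.1 (show 1 < S.card by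
    rw [h.card]; have := h.one_lt_s; omega)
  obtain ⟨-, -, a, hxa, hya⟩ := h.hex.special_iff.2 (h.special x hx y hy hxy)
  rw [h.hex.collinear_iff] at hxa hya
  have hall : ∀ u ∈ S, Γ.dpp u a = 2 := fun u hu => by
    by_contra hua
    exact h.false_of_not_collinear hx hy hxy hxa hya hu hua
  refine ⟨?_, fun u hu v hv huv => h.hex.special_iff.2 (h.special u hu v hv huv), a,
    fun u hu => h.hex.collinear_iff.2 (hall u hu), ?_⟩
  · have h1 := h.card_filter_collinear hx hy hxy hxa hya
    rw [filter_true_of_mem hall, h.card] at h1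
    omega
  · rintro q hqa ⟨v, ⟨hv, hqv⟩, w, ⟨hw, hqw⟩, hvw⟩
    rw [h.hex.opposite_iff] at hqa
    rw [h.hex.special_iff] at hqv hqw
    have hmem : ∀ u, Γ.dpp q u = 4 → Γ.dpp u a = 2 → u ∈ S := fun u hqu hua =>
      h.mem_of_special_of_collinear hall hv hw hvw hqa hqv hqw hua hqu
    ext u
    simp only [Set.mem_ofPred_eq, mem_coe, h.hex.special_iff, h.hex.collinear_iff]
    refine ⟨fun hu => hmem u hu.1 hu.2, fun hu => ⟨?_, hall u hu⟩⟩
    obtain ⟨-, N, huN, haN⟩ := h.hex.collinear_iff.2 (hall u hu)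
    obtain ⟨p, hpN, hp⟩ := h.hex.exists_proj_s6 q N
    have hqN : Γ.dpl q N = 5 := by
      have h1 := h.hex.dpp_of_mem q haN
      have h2 := h.hex.dpl_cases q N
      omega
    have hpa : Γ.dpp p a = 2 := h.hex.collinear_iff.1
      ⟨by rintro rfl; omega, N, hpN, haN⟩
    rw [← h.eq_of_mem_line (hmem p (by omega) hpa) hu hpN huN]
    omega

end GenHexagon

end

/-- Claim 5 in the proof: if the points of `S` are pairwise special, then `s = t` and
`S` is a hyperbolic line. -/
theorem claim5_pairwise_special (Γ : GenHexagon) (hΓ : Γ.IsGenHexagon)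
    (s t : ℕ) (hs : 1 < s) (ht : 1 < t) (hord : Γ.HasOrder s t)
    (S : Set Γ.Point) (hS : S.encard = s + 1)
    (hblock : ¬ ∃ y : Γ.Point, ∀ x ∈ S, Γ.Opposite y x)
    (hps : ∀ x ∈ S, ∀ y ∈ S, x ≠ y → Γ.Special x y) :
    s = t ∧ Γ.IsHyperbolicLine S := by
  classical
  have hne : S.Nonempty := by
    rw [← Set.encard_ne_zero, hS]
    simp
  obtain ⟨x₀, -⟩ := hne
  have hfin := hΓ.finite hord (Sum.inl x₀)
  have : Finite Γ.Point := Finite.sum_left Γ.Line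
  have : Finite Γ.Line := Finite.sum_right Γ.Point
  cases nonempty_fintype Γ.Point
  cases nonempty_fintype Γ.Line
  have h : GenHexagon.SpecialBlockingSet Γ s t S.toFinset :=
    { hex := hΓ
      one_lt_s := hs
      one_lt_t := ht
      card_line := fun L => by
        have h1 := hord.1 L
        rw [Set.encard_eq_coe_toFinset_card] at h1
        rw [← Set.toFinset_ofPred]
        exact_mod_cast h1
      card_pencil := fun x => by
        have h1 := hord.2 x
        rw [Set.encard_eq_coe_toFinset_card] at h1
        rw [← Set.toFinset_ofPred]
        exact_mod_cast h1
      card := by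
        rw [Set.encard_eq_coe_toFinset_card] at hS
        exact_mod_cast hS
      block := fun q => by
        by_contra! hq
        refine hblock ⟨q, fun x hx => hΓ.opposite_iff.2 ?_⟩
        rw [GenHexagon.dpp_comm]
        exact hq x (Set.mem_toFinset.2 hx)
      special := fun x hx y hy hxy =>
        hΓ.special_iff.1 (hps x (Set.mem_toFinset.1 hx) y (Set.mem_toFinset.1 hy) hxy) }
  simpa using h.eq_and_isHyperbolicLine
end

section
/- Let Γ be a generalised hexagon of finite order (s,t) with s > 1 and t > 1, and let S be a set of s+1 points of Γ such that no point of Γ is opposite every member of S. Suppose no two points of S are collinear. If S contains a pair of opposite points, then no two points of S are special. -/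
/-- A path of length `3` from the point `x` to the line `K` in an incidence graph. -/
def IncPath3 {P L : Type*} (I : P → L → Prop) (x : P) (M : L) (y : P) (K : L) : Prop :=
  I x M ∧ I y M ∧ I y K ∧ x ≠ y ∧ M ≠ K

/-- A non-backtracking walk of length `5` from the point `x` to the line `K` in an incidence
graph. -/
def IncPath5 {P L : Type*} (I : P → L → Prop) (x : P) (M : L) (y : P) (N : L) (z : P)
    (K : L) : Prop :=
  IncPath3 I x M y N ∧ I z N ∧ I z K ∧ y ≠ z ∧ N ≠ K

/-- Every point is joined to every line by exactly one non-backtracking walk of length at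
most `5`. -/
structure UniqueIncPaths {P L : Type*} (I : P → L → Prop) : Prop where
  exists_path : ∀ x K, I x K ∨ (∃ M y, IncPath3 I x M y K) ∨ ∃ M y N z, IncPath5 I x M y N z K
  not_path3 : ∀ {x M y K}, I x K → ¬ IncPath3 I x M y K
  not_path5 : ∀ {x M y N z K}, I x K → ¬ IncPath5 I x M y N z K
  not_path3_path5 : ∀ {x M' y' M y N z K}, IncPath3 I x M' y' K → ¬ IncPath5 I x M y N z K
  path3_unique : ∀ {x M y M' y' K}, IncPath3 I x M y K → IncPath3 I x M' y' K → M = M' ∧ y = y'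
  path5_unique : ∀ {x M y N z M' y' N' z' K}, IncPath5 I x M y N z K →
    IncPath5 I x M' y' N' z' K → M = M' ∧ y = y' ∧ N = N' ∧ z = z'

namespace SimpleGraph

/-- Two paths with the same ends whose total length is below the girth coincide. -/
theorem Walk.IsPath.eq_of_length_add_length_lt_egirth {V : Type*} {G : SimpleGraph V} {u v : V}
    {p q : G.Walk u v} (hp : p.IsPath) (hq : q.IsPath)
    (h : ((p.length + q.length : ℕ) : ℕ∞) < G.egirth) : p = q := by
  classical
  set E : Finset (Sym2 V) := p.edges.toFinset ∪ q.edges.toFinset with hE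
  set H : SimpleGraph V := fromEdgeSet (E : Set (Sym2 V)) with hH
  have hpE : ∀ e ∈ p.edges, e ∈ H.edgeSet := fun e he => by
    rw [hH, edgeSet_fromEdgeSet]
    exact ⟨by simp [hE, he], G.not_isDiag_of_mem_edgeSet (p.edges_subset_edgeSet he)⟩
  have hqE : ∀ e ∈ q.edges, e ∈ H.edgeSet := fun e he => by
    rw [hH, edgeSet_fromEdgeSet]
    exact ⟨by simp [hE, he], G.not_isDiag_of_mem_edgeSet (q.edges_subset_edgeSet he)⟩
  have hHG : H ≤ G := by
    intro a b hab
    have hab : s(a, b) ∈ E := (by simpa [hH] using hab : s(a, b) ∈ E ∧ a ≠ b).1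
    rcases Finset.mem_union.1 hab with h' | h'
    · exact p.edges_subset_edgeSet (by simpa using h')
    · exact q.edges_subset_edgeSet (by simpa using h')
  have hac : H.IsAcyclic := by
    intro a c hc
    have h1 := egirth_le_length (hc.mapLe hHG)
    have h2 : c.length ≤ E.card := by
      rw [← c.length_edges, ← List.toFinset_card_of_nodup hc.edges_nodup]
      refine Finset.card_le_card fun e he => ?_
      have := c.edges_subset_edgeSet (by simpa using he)
      rw [hH, edgeSet_fromEdgeSet] at this
      exact this.1
    have h3 : E.card ≤ p.length + q.length := by
      refine (Finset.card_union_le _ _).trans (Nat.add_le_add ?_ ?_)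
      · exact (List.toFinset_card_le _).trans p.length_edges.le
      · exact (List.toFinset_card_le _).trans q.length_edges.le
    rw [Walk.length_mapLe] at h1
    exact absurd (h1.trans (by exact_mod_cast h2.trans h3)) (not_le.2 h)
  have hpq := congrArg Subtype.val
    ((hac.subsingleton_path u v).elim ⟨p.transfer H hpE, hp.transfer hpE⟩
      ⟨q.transfer H hqE, hq.transfer hqE⟩)
  refine Walk.ext_support ?_
  have := congrArg Walk.support hpq
  simpa using this

end SimpleGraph

namespace GenHexagon

variable {Γ : GenHexagon}

theorem eq_of_mem_pts (hΓ : Γ.IsGenHexagon) {x y : Γ.Point} {M K : Γ.Line} (hxy : x ≠ y)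
    (hxM : x ∈ Γ.pts M) (hyM : y ∈ Γ.pts M) (hxK : x ∈ Γ.pts K) (hyK : y ∈ Γ.pts K) :
    M = K := by
  by_contra hMK
  have e1 : Γ.incGraph.Adj (Sum.inl x) (Sum.inr M) := hxM
  have e2 : Γ.incGraph.Adj (Sum.inr M) (Sum.inl y) := hyM
  have e3 : Γ.incGraph.Adj (Sum.inl x) (Sum.inr K) := hxK
  have e4 : Γ.incGraph.Adj (Sum.inr K) (Sum.inl y) := hyK
  have := SimpleGraph.Walk.IsPath.eq_of_length_add_length_lt_egirth
    (p := .cons e1 (.cons e2 .nil)) (q := .cons e3 (.cons e4 .nil))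
    (by simp [hxy]) (by simp [hxy])
    (by rw [hΓ.2]; exact_mod_cast (by decide : (4 : ℕ) < 12))
  have := congrArg SimpleGraph.Walk.support this
  simp [hMK] at this

/-- The incidence walk underlying a path of length `3`. -/
theorem exists_walk_of_incPath3 {x y : Γ.Point} {M K : Γ.Line}
    (h : IncPath3 (fun x L => x ∈ Γ.pts L) x M y K) :
    ∃ p : Γ.incGraph.Walk (Sum.inl x) (Sum.inr K), p.IsPath ∧ p.length = 3 ∧
      p.support = [Sum.inl x, Sum.inr M, Sum.inl y, Sum.inr K] := by
  obtain ⟨h1, h2, h3, hxy, hMK⟩ := h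
  have e1 : Γ.incGraph.Adj (Sum.inl x) (Sum.inr M) := h1
  have e2 : Γ.incGraph.Adj (Sum.inr M) (Sum.inl y) := h2
  have e3 : Γ.incGraph.Adj (Sum.inl y) (Sum.inr K) := h3
  exact ⟨.cons e1 (.cons e2 (.cons e3 .nil)), by simp [hxy, hMK], rfl, rfl⟩

/-- The incidence walk underlying a path of length `5`. -/
theorem exists_walk_of_incPath5 (hΓ : Γ.IsGenHexagon) {x y z : Γ.Point} {M N K : Γ.Line}
    (h : IncPath5 (fun x L => x ∈ Γ.pts L) x M y N z K) :
    ∃ p : Γ.incGraph.Walk (Sum.inl x) (Sum.inr K), p.IsPath ∧ p.length = 5 ∧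
      p.support = [Sum.inl x, Sum.inr M, Sum.inl y, Sum.inr N, Sum.inl z, Sum.inr K] := by
  obtain ⟨⟨h1, h2, h3, hxy, hMN⟩, h4, h5, hyz, hNK⟩ := h
  have hxz : x ≠ z := by
    rintro rfl
    exact hMN (eq_of_mem_pts hΓ hxy h1 h2 h4 h3)
  have hMK : M ≠ K := by
    rintro rfl
    exact hMN (eq_of_mem_pts hΓ hyz h2 h5 h3 h4)
  have e1 : Γ.incGraph.Adj (Sum.inl x) (Sum.inr M) := h1
  have e2 : Γ.incGraph.Adj (Sum.inr M) (Sum.inl y) := h2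
  have e3 : Γ.incGraph.Adj (Sum.inl y) (Sum.inr N) := h3
  have e4 : Γ.incGraph.Adj (Sum.inr N) (Sum.inl z) := h4
  have e5 : Γ.incGraph.Adj (Sum.inl z) (Sum.inr K) := h5
  exact ⟨.cons e1 (.cons e2 (.cons e3 (.cons e4 (.cons e5 .nil)))),
    by simp [hxy, hMN, hxz, hMK, hyz, hNK], rfl, rfl⟩

theorem exists_walk_of_mem {x : Γ.Point} {K : Γ.Line} (h : x ∈ Γ.pts K) :
    ∃ p : Γ.incGraph.Walk (Sum.inl x) (Sum.inr K), p.IsPath ∧ p.length = 1 ∧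
      p.support = [Sum.inl x, Sum.inr K] := by
  have e1 : Γ.incGraph.Adj (Sum.inl x) (Sum.inr K) := h
  exact ⟨.cons e1 .nil, by simp, rfl, rfl⟩

theorem support_eq_of_length_le (hΓ : Γ.IsGenHexagon) {u v : Γ.Point ⊕ Γ.Line}
    {p q : Γ.incGraph.Walk u v} (hp : p.IsPath) (hq : q.IsPath) (hpl : p.length ≤ 5)
    (hql : q.length ≤ 5) : p.support = q.support := by
  rw [hp.eq_of_length_add_length_lt_egirth hq]
  rw [hΓ.2]
  exact_mod_cast (by omega : p.length + q.length < 12)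

theorem incAdj_inl {x : Γ.Point} {v : Γ.Point ⊕ Γ.Line} (h : Γ.incGraph.Adj (Sum.inl x) v) :
    ∃ M, v = Sum.inr M ∧ x ∈ Γ.pts M := by
  rcases v with y | M
  · exact h.elim
  · exact ⟨M, rfl, h⟩

theorem incAdj_inr {M : Γ.Line} {v : Γ.Point ⊕ Γ.Line} (h : Γ.incGraph.Adj (Sum.inr M) v) :
    ∃ x, v = Sum.inl x ∧ x ∈ Γ.pts M := by
  rcases v with y | K
  · exact ⟨y, rfl, h⟩
  · exact h.elim

theorem exists_incPath (hΓ : Γ.IsGenHexagon) (x : Γ.Point) (K : Γ.Line) :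
    x ∈ Γ.pts K ∨ (∃ M y, IncPath3 (fun x L => x ∈ Γ.pts L) x M y K) ∨
      ∃ M y N z, IncPath5 (fun x L => x ∈ Γ.pts L) x M y N z K := by
  have hle : Γ.incGraph.edist (Sum.inl x) (Sum.inr K) ≤ 6 := hΓ.1 ▸ SimpleGraph.edist_le_ediam
  obtain ⟨p₀, hp₀⟩ := SimpleGraph.exists_walk_of_edist_ne_top (ne_top_of_le_ne_top (by decide) hle)
  obtain ⟨p, hp, hpl⟩ : ∃ p : Γ.incGraph.Walk (Sum.inl x) (Sum.inr K), p.IsPath ∧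
      p.length ≤ 6 := by
    classical
    refine ⟨p₀.bypass, p₀.bypass_isPath, p₀.length_bypass_le_length.trans ?_⟩
    rw [← hp₀] at hle
    exact_mod_cast hle
  rcases p with _ | ⟨e1, p⟩
  obtain ⟨M, rfl, h1⟩ := incAdj_inl e1
  rcases p with _ | ⟨e2, p⟩
  · exact Or.inl h1
  obtain ⟨y, rfl, h2⟩ := incAdj_inr e2
  rcases p with _ | ⟨e3, p⟩
  obtain ⟨N, rfl, h3⟩ := incAdj_inl e3
  rcases p with _ | ⟨e4, p⟩
  · simp at hp
    exact Or.inr (Or.inl ⟨M, y, h1, h2, h3, by tauto, by tauto⟩)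
  obtain ⟨z, rfl, h4⟩ := incAdj_inr e4
  rcases p with _ | ⟨e5, p⟩
  obtain ⟨N', rfl, h5⟩ := incAdj_inl e5
  rcases p with _ | ⟨e6, p⟩
  · simp at hp
    exact Or.inr (Or.inr ⟨M, y, N, z, ⟨h1, h2, h3, by tauto, by tauto⟩, h4, h5, by tauto,
      by tauto⟩)
  obtain ⟨w, rfl, h6⟩ := incAdj_inr e6
  rcases p with _ | ⟨e7, p⟩
  simp at hpl
  omega

theorem uniqueIncPaths (hΓ : Γ.IsGenHexagon) : UniqueIncPaths (fun x L => x ∈ Γ.pts L) where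
  exists_path := exists_incPath hΓ
  not_path3 {x M y K} h h' := by
    obtain ⟨p, hp, hpl, hps⟩ := exists_walk_of_mem h
    obtain ⟨q, hq, hql, hqs⟩ := exists_walk_of_incPath3 h'
    have := support_eq_of_length_le hΓ hp hq (by omega) (by omega)
    simp [hps, hqs] at this
  not_path5 {x M y N z K} h h' := by
    obtain ⟨p, hp, hpl, hps⟩ := exists_walk_of_mem h
    obtain ⟨q, hq, hql, hqs⟩ := exists_walk_of_incPath5 hΓ h'
    have := support_eq_of_length_le hΓ hp hq (by omega) (by omega)
    simp [hps, hqs] at this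
  not_path3_path5 {x M' y' M y N z K} h h' := by
    obtain ⟨p, hp, hpl, hps⟩ := exists_walk_of_incPath3 h
    obtain ⟨q, hq, hql, hqs⟩ := exists_walk_of_incPath5 hΓ h'
    have := support_eq_of_length_le hΓ hp hq (by omega) (by omega)
    simp [hps, hqs] at this
  path3_unique {x M y M' y' K} h h' := by
    obtain ⟨p, hp, hpl, hps⟩ := exists_walk_of_incPath3 h
    obtain ⟨q, hq, hql, hqs⟩ := exists_walk_of_incPath3 h'
    have := support_eq_of_length_le hΓ hp hq (by omega) (by omega)
    simpa [hps, hqs] using this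
  path5_unique {x M y N z M' y' N' z' K} h h' := by
    obtain ⟨p, hp, hpl, hps⟩ := exists_walk_of_incPath5 hΓ h
    obtain ⟨q, hq, hql, hqs⟩ := exists_walk_of_incPath5 hΓ h'
    have := support_eq_of_length_le hΓ hp hq (by omega) (by omega)
    simpa [hps, hqs] using this

end GenHexagon

namespace UniqueIncPaths

open Matrix

open scoped Classical in
/-- The real number `1` or `0` according to the truth of a proposition. -/
noncomputable def indic (p : Prop) : ℝ := if p then 1 else 0

theorem indic_true {p : Prop} (h : p) : indic p = 1 := if_pos h

theorem indic_false {p : Prop} (h : ¬ p) : indic p = 0 := if_neg h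

theorem indic_and (p q : Prop) : indic (p ∧ q) = indic p * indic q := by
  by_cases hp : p <;> by_cases hq : q <;> simp [indic, hp, hq]

/-- Splitting an indicator along a further condition. -/
theorem indic_eq_add (p q : Prop) : indic p = indic (p ∧ ¬ q) + indic (p ∧ q) := by
  by_cases hp : p <;> by_cases hq : q <;> simp [indic, hp, hq]

theorem sum_indic {α : Type*} [Fintype α] (p : α → Prop) : ∑ a, indic (p a) = {a | p a}.ncard := by
  classical
  simp [indic, Set.ncard_eq_toFinset_card']

theorem sum_indic_and_eq {α : Type*} [Fintype α] (p : α → Prop) (b : α) :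
    ∑ a, indic (p a ∧ a = b) = indic (p b) := by
  classical
  rw [Fintype.sum_eq_single b]
  · simp
  · intro a ha
    exact indic_false fun h => ha h.2

theorem sum_indic_and_ne {α : Type*} [Fintype α] {p : α → Prop} {n : ℕ}
    (h : {a | p a}.ncard = n + 1) {b : α} (hb : p b) : ∑ a, indic (p a ∧ ¬ a = b) = n := by
  have h1 := sum_indic p
  rw [h, Finset.sum_congr rfl fun a _ => indic_eq_add (p a) (a = b), Finset.sum_add_distrib,
    sum_indic_and_eq, indic_true hb] at h1
  push_cast at h1
  linarith

variable {P L : Type*} {I : P → L → Prop} {s t : ℕ}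

/-- The incidence matrix. -/
noncomputable def incMat (I : P → L → Prop) : Matrix P L ℝ := of fun x K => indic (I x K)

theorem transpose_incMat_mul_one [Fintype P] (hl : ∀ K, {x | I x K}.ncard = s + 1) :
    (incMat I)ᵀ *ᵥ (fun _ => 1) = fun _ => (s + 1 : ℝ) := by
  ext x
  simp [mulVec, dotProduct, incMat, sum_indic, hl]

variable [Fintype L]

theorem incMat_mul_one (hp : ∀ x, {K | I x K}.ncard = t + 1) :
    incMat I *ᵥ (fun _ => 1) = fun _ => (t + 1 : ℝ) := by
  ext x
  simp [mulVec, dotProduct, incMat, sum_indic, hp]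

/-- The collinearity matrix. -/
noncomputable def colMat (I : P → L → Prop) : Matrix P P ℝ :=
  of fun x y => ∑ M, indic ((I x M ∧ I y M) ∧ ¬ x = y)

open scoped Classical in
theorem incMat_mul_transpose (hp : ∀ x, {K | I x K}.ncard = t + 1) :
    incMat I * (incMat I)ᵀ = colMat I + ((t : ℝ) + 1) • 1 := by
  ext x y
  simp only [mul_apply, transpose_apply, incMat, colMat, of_apply, Matrix.add_apply,
    Matrix.smul_apply, ← indic_and]
  rw [Finset.sum_congr rfl fun M _ => indic_eq_add (I x M ∧ I y M) (x = y),
    Finset.sum_add_distrib]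
  congr 1
  by_cases hxy : x = y
  · subst hxy
    simp [sum_indic, hp]
  · simp [hxy, indic_false]

variable [Fintype P]

/-- The number of paths of length `3` between a point and a line. -/
noncomputable def mat3 (I : P → L → Prop) : Matrix P L ℝ :=
  of fun x K => ∑ y, ∑ M, indic (IncPath3 I x M y K)

/-- The number of non-backtracking walks of length `4` between two points. -/
noncomputable def mat4 (I : P → L → Prop) : Matrix P P ℝ :=
  of fun x z => ∑ K, ∑ y, ∑ M, indic ((IncPath3 I x M y K ∧ I z K) ∧ ¬ y = z)

/-- The number of non-backtracking walks of length `5` between a point and a line. -/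
noncomputable def mat5 (I : P → L → Prop) : Matrix P L ℝ :=
  of fun x K => ∑ z, ∑ N, ∑ y, ∑ M, indic (IncPath5 I x M y N z K)

theorem colMat_mul_incMat (hl : ∀ K, {x | I x K}.ncard = s + 1) :
    colMat I * incMat I = mat3 I + (s : ℝ) • incMat I := by
  ext x K
  simp only [mul_apply, incMat, colMat, mat3, of_apply, Matrix.add_apply,
    Matrix.smul_apply, Finset.sum_mul, ← indic_and]
  rw [Finset.sum_congr rfl fun y _ => Finset.sum_congr rfl fun M _ =>
    indic_eq_add (((I x M ∧ I y M) ∧ ¬ x = y) ∧ I y K) (M = K)]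
  simp only [Finset.sum_add_distrib]
  congr 1
  · refine Finset.sum_congr rfl fun y _ => Finset.sum_congr rfl fun M _ => congrArg indic ?_
    simp only [IncPath3, ne_eq, eq_iff_iff]
    tauto
  · simp only [sum_indic_and_eq]
    by_cases hx : I x K
    · rw [indic_true hx, smul_eq_mul, mul_one, ← sum_indic_and_ne (hl K) hx]
      refine Finset.sum_congr rfl fun y _ => congrArg indic ?_
      simp only [eq_iff_iff, eq_comm (a := x)]
      tauto
    · rw [indic_false hx, smul_zero]
      exact Finset.sum_eq_zero fun y _ => indic_false (by tauto)

theorem mat3_mul_transpose (hp : ∀ x, {K | I x K}.ncard = t + 1) :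
    mat3 I * (incMat I)ᵀ = mat4 I + (t : ℝ) • colMat I := by
  ext x z
  simp only [mul_apply, incMat, colMat, mat3, mat4, of_apply, Matrix.add_apply, transpose_apply,
    Matrix.smul_apply, Finset.sum_mul, ← indic_and]
  rw [Finset.sum_congr rfl fun K _ => Finset.sum_congr rfl fun y _ => Finset.sum_congr rfl
    fun M _ => indic_eq_add (IncPath3 I x M y K ∧ I z K) (y = z)]
  simp only [Finset.sum_add_distrib]
  congr 1
  rw [Finset.sum_congr rfl fun K _ => Finset.sum_comm]
  simp only [sum_indic_and_eq]
  rw [Finset.sum_comm, smul_eq_mul, Finset.mul_sum]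
  refine Finset.sum_congr rfl fun M _ => ?_
  by_cases h : (I x M ∧ I z M) ∧ ¬ x = z
  · rw [indic_true h, mul_one, ← sum_indic_and_ne (hp z) h.1.2]
    refine Finset.sum_congr rfl fun K _ => congrArg indic ?_
    simp only [IncPath3, ne_eq, eq_iff_iff, eq_comm (a := M)]
    tauto
  · rw [indic_false h, mul_zero]
    exact Finset.sum_eq_zero fun K _ => indic_false (by unfold IncPath3; tauto)

theorem mat4_mul_incMat (hl : ∀ K, {x | I x K}.ncard = s + 1) :
    mat4 I * incMat I = mat5 I + (s : ℝ) • mat3 I := by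
  ext x K
  simp only [mul_apply, incMat, mat3, mat4, mat5, of_apply, Matrix.add_apply,
    Matrix.smul_apply, Finset.sum_mul, ← indic_and]
  rw [Finset.sum_congr rfl fun z _ => Finset.sum_congr rfl fun N _ => Finset.sum_congr rfl
    fun y _ => Finset.sum_congr rfl
    fun M _ => indic_eq_add (((IncPath3 I x M y N ∧ I z N) ∧ ¬ y = z) ∧ I z K) (N = K)]
  simp only [Finset.sum_add_distrib]
  congr 1
  · refine Finset.sum_congr rfl fun z _ => Finset.sum_congr rfl fun N _ => Finset.sum_congr rfl
      fun y _ => Finset.sum_congr rfl fun M _ => congrArg indic ?_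
    simp only [IncPath5, ne_eq, eq_iff_iff]
    tauto
  · have hK : ∀ z, ∑ N, ∑ y, ∑ M,
        indic ((((IncPath3 I x M y N ∧ I z N) ∧ ¬ y = z) ∧ I z K) ∧ N = K) =
        ∑ y, ∑ M, indic (((IncPath3 I x M y K ∧ I z K) ∧ ¬ y = z) ∧ I z K) := fun z => by
      rw [Finset.sum_comm]
      refine Finset.sum_congr rfl fun y _ => ?_
      rw [Finset.sum_comm]
      simp only [sum_indic_and_eq]
    simp only [hK]
    rw [Finset.sum_comm, smul_eq_mul, Finset.mul_sum]
    refine Finset.sum_congr rfl fun y _ => ?_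
    rw [Finset.sum_comm, Finset.mul_sum]
    refine Finset.sum_congr rfl fun M _ => ?_
    by_cases h : IncPath3 I x M y K
    · rw [indic_true h, mul_one, ← sum_indic_and_ne (hl K) h.2.2.1]
      refine Finset.sum_congr rfl fun z _ => congrArg indic ?_
      simp only [eq_iff_iff, eq_comm (a := y)]
      tauto
    · rw [indic_false h, mul_zero]
      exact Finset.sum_eq_zero fun K _ => indic_false (by tauto)

/-- The numbers of walks of lengths `1`, `3` and `5` from a point to a line add up to `1`. -/
theorem incMat_add_mat3_add_mat5 (h : UniqueIncPaths I) :
    incMat I + mat3 I + mat5 I = of fun _ _ => 1 := by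
  ext x K
  simp only [incMat, mat3, mat5, Matrix.add_apply, of_apply]
  rcases h.exists_path x K with h1 | ⟨M₀, y₀, h3⟩ | ⟨M₀, y₀, N₀, z₀, h5⟩
  · simp [indic_true h1, indic_false (h.not_path3 h1), indic_false (h.not_path5 h1)]
  · have h3' : ∀ M y, IncPath3 I x M y K ↔ y = y₀ ∧ M = M₀ := fun M y =>
      ⟨fun h' => ⟨(h.path3_unique h' h3).2, (h.path3_unique h' h3).1⟩,
        by rintro ⟨rfl, rfl⟩; exact h3⟩
    simp only [indic_false fun h' => h.not_path3 h' h3, h3',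
      indic_false (h.not_path3_path5 h3), Finset.sum_const_zero, sum_indic_and_eq]
    simpa [indic_true] using sum_indic_and_eq (fun _ => True) y₀
  · have h5' : ∀ M y N z, IncPath5 I x M y N z K ↔ ((z = z₀ ∧ N = N₀) ∧ y = y₀) ∧ M = M₀ :=
      fun M y N z => ⟨fun h' => by have := h.path5_unique h' h5; tauto,
        by rintro ⟨⟨⟨rfl, rfl⟩, rfl⟩, rfl⟩; exact h5⟩
    simp only [indic_false fun h' => h.not_path5 h' h5, h5', sum_indic_and_eq,
      indic_false fun h' => h.not_path3_path5 h' h5, Finset.sum_const_zero]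
    simpa [indic_true] using sum_indic_and_eq (fun _ => True) z₀

theorem trace_colMat : (colMat I).trace = 0 := by
  simp [trace, colMat, indic_false]

theorem trace_mat4 (h : UniqueIncPaths I) : (mat4 I).trace = 0 :=
  Finset.sum_eq_zero fun _ _ => Finset.sum_eq_zero fun _ _ => Finset.sum_eq_zero fun _ _ =>
    Finset.sum_eq_zero fun _ _ => indic_false fun h' => h.not_path3 h'.1.2 h'.1.1

theorem trace_mat3_mul_transpose (h : UniqueIncPaths I) : (mat3 I * (incMat I)ᵀ).trace = 0 := by
  simp only [trace, diag_apply, mul_apply, mat3, incMat, transpose_apply, of_apply,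
    Finset.sum_mul, ← indic_and]
  exact Finset.sum_eq_zero fun x _ => Finset.sum_eq_zero fun K _ => Finset.sum_eq_zero fun y _ =>
    Finset.sum_eq_zero fun M _ => indic_false fun h' => h.not_path3 h'.2 h'.1

theorem trace_mat5_mul_transpose (h : UniqueIncPaths I) : (mat5 I * (incMat I)ᵀ).trace = 0 := by
  simp only [trace, diag_apply, mul_apply, mat5, incMat, transpose_apply, of_apply,
    Finset.sum_mul, ← indic_and]
  exact Finset.sum_eq_zero fun x _ => Finset.sum_eq_zero fun K _ => Finset.sum_eq_zero fun z _ =>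
    Finset.sum_eq_zero fun N _ => Finset.sum_eq_zero fun y _ =>
    Finset.sum_eq_zero fun M _ => indic_false fun h' => h.not_path5 h'.2 h'.1

open scoped Classical in
theorem mat4_eq (hp : ∀ x, {K | I x K}.ncard = t + 1) (hl : ∀ K, {x | I x K}.ncard = s + 1) :
    mat4 I = colMat I * colMat I + (1 - s : ℝ) • colMat I - (s * (t + 1) : ℝ) • 1 := by
  have h1 := incMat_mul_transpose hp
  have h2 := mat3_mul_transpose hp
  rw [← sub_eq_iff_eq_add.2 (colMat_mul_incMat hl), Matrix.sub_mul, Matrix.mul_assoc,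
    Matrix.smul_mul, h1, mul_add, mul_smul_comm, mul_one] at h2
  rw [← sub_eq_iff_eq_add.2 h2]
  module

open scoped Classical in
theorem quadratic_mul_incMat (h : UniqueIncPaths I) (hp : ∀ x, {K | I x K}.ncard = t + 1)
    (hl : ∀ K, {x | I x K}.ncard = s + 1) :
    (colMat I * colMat I - (2 * (s - 1) : ℝ) • colMat I + ((s - 1) ^ 2 - s * t : ℝ) • 1) *
      incMat I = of fun _ _ => 1 := by
  rw [← incMat_add_mat3_add_mat5 h, ← sub_eq_iff_eq_add.2 (mat4_mul_incMat hl), mat4_eq hp hl,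
    ← sub_eq_iff_eq_add.2 (colMat_mul_incMat hl)]
  simp only [Matrix.sub_mul, Matrix.add_mul, Matrix.smul_mul, Matrix.one_mul]
  module

theorem colMat_mulVec_one (hp : ∀ x, {K | I x K}.ncard = t + 1)
    (hl : ∀ K, {x | I x K}.ncard = s + 1) :
    colMat I *ᵥ (fun _ => 1) = (s * (t + 1) : ℝ) • fun _ => (1 : ℝ) := by
  classical
  have h1 := congrArg (· *ᵥ (fun _ => (1 : ℝ))) (incMat_mul_transpose hp)
  have h2 : (fun _ => (s + 1 : ℝ)) = (s + 1 : ℝ) • fun _ : L => (1 : ℝ) := by ext; simp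
  simp only [← mulVec_mulVec, transpose_incMat_mul_one hl, add_mulVec, smul_mulVec, one_mulVec, h2,
    mulVec_smul, incMat_mul_one hp] at h1
  rw [← sub_eq_iff_eq_add.2 h1]
  ext x
  simp
  ring

/-- The number of lines of a generalised hexagon of order `(s, t)`. -/
theorem card_line [Nonempty P] (h : UniqueIncPaths I) (hp : ∀ x, {K | I x K}.ncard = t + 1)
    (hl : ∀ K, {x | I x K}.ncard = s + 1) :
    Fintype.card L = (t + 1) * (1 + s * t + (s * t) ^ 2) := by
  classical
  have h1 := congrArg (· *ᵥ (fun _ => (1 : ℝ))) (quadratic_mul_incMat h hp hl)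
  have h2 : (fun _ => (t + 1 : ℝ)) = (t + 1 : ℝ) • fun _ : P => (1 : ℝ) := by ext; simp
  simp only [← mulVec_mulVec, incMat_mul_one hp, h2, mulVec_smul, add_mulVec, sub_mulVec,
    smul_mulVec, colMat_mulVec_one hp hl, one_mulVec] at h1
  obtain ⟨x⟩ := ‹Nonempty P›
  have h3 := congrFun h1 x
  simp [mulVec, dotProduct] at h3
  have h4 : (Fintype.card L : ℝ) = (t + 1) * (1 + s * t + (s * t) ^ 2) := by
    rw [← h3]
    ring
  exact_mod_cast h4

theorem colMat_mul_allOnes (hp : ∀ x, {K | I x K}.ncard = t + 1)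
    (hl : ∀ K, {x | I x K}.ncard = s + 1) :
    colMat I * (of fun _ _ => 1 : Matrix P P ℝ) = (s * (t + 1) : ℝ) • of fun _ _ => 1 := by
  ext x y
  simpa [mulVec, dotProduct, mul_apply] using congrFun (colMat_mulVec_one hp hl) x

open scoped Classical in
theorem quadratic_mul_gram (h : UniqueIncPaths I) (hp : ∀ x, {K | I x K}.ncard = t + 1)
    (hl : ∀ K, {x | I x K}.ncard = s + 1) :
    (colMat I * colMat I - (2 * (s - 1) : ℝ) • colMat I + ((s - 1) ^ 2 - s * t : ℝ) • 1) *
      (colMat I + ((t : ℝ) + 1) • 1) = ((t : ℝ) + 1) • of fun _ _ => 1 := by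
  rw [← incMat_mul_transpose hp, ← Matrix.mul_assoc, quadratic_mul_incMat h hp hl]
  ext x y
  simp [mul_apply, incMat, sum_indic, hp]

theorem trace_colMat_sq (h : UniqueIncPaths I) (hp : ∀ x, {K | I x K}.ncard = t + 1)
    (hl : ∀ K, {x | I x K}.ncard = s + 1) :
    (colMat I * colMat I).trace = Fintype.card P * (s * (t + 1)) := by
  classical
  have h1 := trace_mat4 h
  rw [mat4_eq hp hl] at h1
  simp only [trace_sub, trace_add, trace_smul, trace_colMat, trace_one, smul_eq_mul] at h1
  linarith

theorem trace_colMat_cube (h : UniqueIncPaths I) (hp : ∀ x, {K | I x K}.ncard = t + 1)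
    (hl : ∀ K, {x | I x K}.ncard = s + 1) :
    (colMat I * colMat I * colMat I).trace = (s - 1) * (Fintype.card P * (s * (t + 1))) := by
  classical
  have h1 : (mat4 I * (incMat I * (incMat I)ᵀ)).trace = 0 := by
    rw [← Matrix.mul_assoc, mat4_mul_incMat hl, Matrix.add_mul, Matrix.smul_mul, trace_add,
      trace_smul, trace_mat5_mul_transpose h, trace_mat3_mul_transpose h]
    simp
  rw [mat4_eq hp hl, incMat_mul_transpose hp] at h1
  simp only [mul_add, add_mul, sub_mul, smul_mul_assoc, mul_smul_comm, one_mul, mul_one, trace_sub,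
    trace_add, trace_smul, trace_colMat, trace_colMat_sq h hp hl, trace_one, smul_eq_mul] at h1
  linarith

/-- The trace of a real matrix that is a multiple of an idempotent. -/
theorem exists_trace_eq_of_sq_eq {n : Type*} [Fintype n] {Y : Matrix n n ℝ} {c : ℝ} (hc : c ≠ 0)
    (hY : Y * Y = c • Y) : ∃ m : ℕ, Y.trace = c * m := by
  classical
  have hid : IsIdempotentElem (toLin' (c⁻¹ • Y)) := by
    rw [IsIdempotentElem, Module.End.mul_eq_comp, ← toLin'_mul, smul_mul_smul_comm, hY, smul_smul,
      inv_mul_cancel_right₀ hc]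
  have htr := (LinearMap.IsIdempotentElem.isProj_range _ hid).trace
  rw [trace_toLin'_eq, trace_smul, smul_eq_mul, inv_mul_eq_iff_eq_mul₀ hc] at htr
  exact ⟨_, htr⟩

theorem isSquare_of_sqrt_mul_eq {r : ℝ} {n : ℕ} (hr : r = √n) {a b : ℤ} (hb : b ≠ 0)
    (h : r * b = a) : IsSquare n := by
  by_contra hn
  have := irrational_sqrt_natCast_iff.2 hn
  rw [← hr] at this
  refine this ⟨a / b, ?_⟩
  have hb' : (b : ℝ) ≠ 0 := by exact_mod_cast hb
  push_cast
  rw [← h]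
  field_simp

/-- The **Feit–Higman theorem** for generalised hexagons: `s * t` is a square. -/
theorem isSquare_mul [Nonempty P] (h : UniqueIncPaths I) (hs : 1 < s) (ht : 1 < t)
    (hp : ∀ x, {K | I x K}.ncard = t + 1) (hl : ∀ K, {x | I x K}.ncard = s + 1) :
    IsSquare (s * t) := by
  classical
  set A := colMat I with hA
  set r : ℝ := √(s * t : ℕ) with hr
  have hr2 : r * r = s * t := by
    rw [hr, Real.mul_self_sqrt (by positivity)]
    push_cast
    rfl
  have hr0 : r ≠ 0 := by
    intro h0
    rw [h0] at hr2
    have : (s * t : ℝ) ≠ 0 := by positivity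
    simp_all
  set k : ℝ := s * (t + 1) with hk
  set u : ℝ := s - 1 - k with hu
  set v : ℝ := s + t with hv
  set Y : Matrix P P ℝ := (A + (r - (s - 1)) • 1) * (A - k • 1) * (A + ((t : ℝ) + 1) • 1) with hYdef
  have hAY : A * Y = (s - 1 + r) • Y := by
    have h1 := congrArg ((A - k • 1) * ·) (quadratic_mul_gram h hp hl)
    simp only [← hA] at h1
    rw [mul_smul_comm, sub_mul _ _ (of _), colMat_mul_allOnes hp hl, smul_mul_assoc, one_mul,
      ← hk, sub_self, smul_zero, ← hr2] at h1
    rw [← sub_eq_zero, ← h1, hYdef]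
    simp only [mul_add, add_mul, sub_mul, mul_sub, smul_mul_assoc, mul_smul_comm, one_mul, mul_one,
      ← mul_assoc]
    module
  have hYY : Y * Y = (2 * r * (u + r) * (v + r)) • Y := by
    conv_lhs => enter [1]; rw [hYdef]
    have h1 : ∀ c : ℝ, (A + c • 1) * Y = (s - 1 + r + c) • Y := fun c => by
      rw [add_mul, hAY, smul_mul_assoc, one_mul]
      module
    rw [mul_assoc, h1, mul_smul_comm, mul_assoc, sub_eq_add_neg A, ← neg_smul, h1, mul_smul_comm,
      h1, smul_smul, smul_smul, hu, hv]
    congr 1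
    ring
  have htr : Y.trace = -(Fintype.card P * k * r * t) := by
    rw [hYdef]
    simp only [mul_add, add_mul, sub_mul, mul_sub, smul_mul_assoc, mul_smul_comm, one_mul, mul_one,
      trace_add, trace_sub, trace_smul, smul_eq_mul, trace_one]
    rw [hA, trace_colMat, trace_colMat_sq h hp hl, trace_colMat_cube h hp hl, hk]
    ring
  have hu' : u = ((s - 1 - s * (t + 1) : ℤ) : ℝ) := by rw [hu, hk]; push_cast; ring
  have hv' : v = ((s + t : ℤ) : ℝ) := by rw [hv]; push_cast; ring
  by_cases hc : 2 * r * (u + r) * (v + r) = 0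
  · rcases mul_eq_zero.1 hc with hc | hc
    · rcases mul_eq_zero.1 hc with hc | hc
      · exact absurd hc (by simpa using hr0)
      · refine isSquare_of_sqrt_mul_eq hr (a := -(s - 1 - s * (t + 1))) (b := 1) one_ne_zero ?_
        rw [Int.cast_neg, ← hu']
        push_cast
        linarith
    · refine isSquare_of_sqrt_mul_eq hr (a := -(s + t)) (b := 1) one_ne_zero ?_
      rw [Int.cast_neg, ← hv']
      push_cast
      linarith
  · obtain ⟨m, hm⟩ := exists_trace_eq_of_sq_eq hc hYY
    rw [htr] at hm
    have hm2 : -(Fintype.card P * k * t) = 2 * m * (u * v + s * t + (u + v) * r) := by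
      apply mul_right_cancel₀ hr0
      linear_combination hm + 2 * r * m * hr2
    have hst : (0 : ℝ) < (s - 1) * (t - 1) := by
      have : (1 : ℝ) < s := by exact_mod_cast hs
      have : (1 : ℝ) < t := by exact_mod_cast ht
      apply mul_pos <;> linarith
    have hm0 : m ≠ 0 := by
      rintro rfl
      have : (0 : ℝ) < Fintype.card P * k * t := by
        have := Fintype.card_pos (α := P)
        positivity
      simp at hm2
      grind
    refine isSquare_of_sqrt_mul_eq hr
      (a := Fintype.card P * (s * (t + 1)) * t + 2 * m * ((s - 1 - s * (t + 1)) * (s + t) + s * t))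
      (b := 2 * m * ((s - 1) * (t - 1))) ?_ ?_
    · have : ((s : ℤ) - 1) * (t - 1) ≠ 0 := by exact_mod_cast hst.ne'
      simp [hm0] at this ⊢
      tauto
    · push_cast
      rw [hu, hv, hk] at hm2
      linear_combination hm2

end UniqueIncPaths

namespace UniqueIncPaths

section Projection

variable {P L : Type*} {I : P → L → Prop}

/-- The point lies on the line or is collinear with a point of the line. -/
def Near (I : P → L → Prop) (u : P) (K : L) : Prop := ∃ M y, I u M ∧ I y M ∧ I y K

/-- The points are at distance at most `4` in the incidence graph. -/
def WithinFour (I : P → L → Prop) (u p : P) : Prop :=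
  ∃ M z N, I u M ∧ I z M ∧ I z N ∧ I p N

/-- `p` is the last point on the shortest path from `u` to `K`. -/
def IsProjection (I : P → L → Prop) (u : P) (K : L) (p : P) : Prop :=
  (I u K ∧ u = p) ∨ (∃ M, IncPath3 I u M p K) ∨ ∃ M y N, IncPath5 I u M y N p K

theorem IsProjection.incident {u p : P} {K : L} (hp : IsProjection I u K p) : I p K := by
  rcases hp with ⟨h, rfl⟩ | ⟨M, h⟩ | ⟨M, y, N, h⟩
  · exact h
  · exact h.2.2.1
  · exact h.2.2.1

theorem IsProjection.withinFour {u p : P} {K : L} (hp : IsProjection I u K p) :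
    WithinFour I u p := by
  rcases hp with ⟨h, rfl⟩ | ⟨M, h⟩ | ⟨M, y, N, h⟩
  · exact ⟨K, u, K, h, h, h, h⟩
  · exact ⟨M, p, M, h.1, h.2.1, h.2.1, h.2.1⟩
  · exact ⟨M, y, N, h.1.1, h.1.2.1, h.1.2.2.1, h.2.1⟩

theorem Near.incident_or_path3 {u : P} {K : L} (hn : Near I u K) :
    I u K ∨ ∃ M y, IncPath3 I u M y K := by
  obtain ⟨M, y, h1, h2, h3⟩ := hn
  by_cases huy : u = y
  · exact Or.inl (huy ▸ h3)
  · by_cases hMK : M = K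
    · exact Or.inl (hMK ▸ h1)
    · exact Or.inr ⟨M, y, h1, h2, h3, huy, hMK⟩

theorem WithinFour.isProjection_of_not_near {u p : P} {K : L} (hup : WithinFour I u p) (hp : I p K)
    (hn : ¬ Near I u K) : IsProjection I u K p := by
  obtain ⟨M, z, N, h1, h2, h3, h4⟩ := hup
  refine Or.inr (Or.inr ⟨M, z, N, ⟨h1, h2, h3, ?_, ?_⟩, h4, hp, ?_, ?_⟩)
  · rintro rfl
    exact hn ⟨N, p, h3, h4, hp⟩
  · rintro rfl
    exact hn ⟨M, p, h1, h4, hp⟩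
  · rintro rfl
    exact hn ⟨M, z, h1, h2, hp⟩
  · rintro rfl
    exact hn ⟨M, z, h1, h2, h3⟩

theorem eq_of_incident (h : UniqueIncPaths I) {x y : P} {M K : L} (hxy : x ≠ y) (hxM : I x M)
    (hyM : I y M) (hxK : I x K) (hyK : I y K) : M = K := by
  by_contra hMK
  exact h.not_path3 hxK ⟨hxM, hyM, hyK, hxy, hMK⟩

theorem not_near_of_path5 (h : UniqueIncPaths I) {u y z : P} {M N K : L}
    (hp : IncPath5 I u M y N z K) : ¬ Near I u K := fun hn =>
  hn.incident_or_path3.elim (fun h1 => h.not_path5 h1 hp) fun ⟨_, _, h3⟩ => h.not_path3_path5 h3 hp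

theorem exists_isProjection (h : UniqueIncPaths I) (u : P) (K : L) : ∃ p, IsProjection I u K p := by
  rcases h.exists_path u K with h1 | ⟨M, y, h3⟩ | ⟨M, y, N, z, h5⟩
  · exact ⟨u, Or.inl ⟨h1, rfl⟩⟩
  · exact ⟨y, Or.inr (Or.inl ⟨M, h3⟩)⟩
  · exact ⟨z, Or.inr (Or.inr ⟨M, y, N, h5⟩)⟩

theorem isProjection_unique (h : UniqueIncPaths I) {u p q : P} {K : L} (hp : IsProjection I u K p)
    (hq : IsProjection I u K q) : p = q := by
  rcases hp with ⟨h1, rfl⟩ | ⟨M, h1⟩ | ⟨M, y, N, h1⟩ <;>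
    rcases hq with ⟨h2, rfl⟩ | ⟨M', h2⟩ | ⟨M', y', N', h2⟩
  · rfl
  · exact (h.not_path3 h1 h2).elim
  · exact (h.not_path5 h1 h2).elim
  · exact (h.not_path3 h2 h1).elim
  · exact (h.path3_unique h1 h2).2
  · exact (h.not_path3_path5 h1 h2).elim
  · exact (h.not_path5 h2 h1).elim
  · exact (h.not_path3_path5 h2 h1).elim
  · exact (h.path5_unique h1 h2).2.2.2

theorem not_withinFour_of_path5 (h : UniqueIncPaths I) {u y z r : P} {M N K : L}
    (hp : IncPath5 I u M y N z K) (hr : I r K) (hrz : r ≠ z) : ¬ WithinFour I u r := fun hur =>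
  hrz (h.isProjection_unique (hur.isProjection_of_not_near hr (h.not_near_of_path5 hp))
    (Or.inr (Or.inr ⟨M, y, N, hp⟩)))

/-- If the projection from a set of `n` points to a line with `n` points is onto, it is
injective. -/
theorem eq_of_isProjection_of_surjective (h : UniqueIncPaths I) {S : Set P} {K : L} (hS : S.Finite)
    (hcard : S.ncard ≤ {x | I x K}.ncard)
    (hsurj : ∀ p, I p K → ∃ u ∈ S, IsProjection I u K p) {u v p : P} (hu : u ∈ S) (hv : v ∈ S)
    (hup : IsProjection I u K p) (hvp : IsProjection I v K p) : u = v := by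
  choose f hf using fun u => h.exists_isProjection u K
  have hfu : f u = p := h.isProjection_unique (hf u) hup
  have hfv : f v = p := h.isProjection_unique (hf v) hvp
  have himg : f '' S = {x | I x K} := by
    ext p
    constructor
    · rintro ⟨u, -, rfl⟩
      exact (hf u).incident
    · intro hp
      obtain ⟨u, hu, hup⟩ := hsurj p hp
      exact ⟨u, hu, h.isProjection_unique (hf u) hup⟩
  have hinj : Set.InjOn f S := by
    rw [← Set.ncard_image_iff hS, himg]
    exact le_antisymm (himg ▸ Set.ncard_image_le hS) hcard
  exact hinj hu hv (hfu.trans hfv.symm)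

end Projection

section ConstantLineSize

variable {P L : Type*} {I : P → L → Prop}

theorem ncard_le_of_not_near (h : UniqueIncPaths I) {K K' : L} (hfin : {x | I x K'}.Finite)
    (hopp : ∀ x, I x K → ¬ Near I x K') : {x | I x K}.ncard ≤ {x | I x K'}.ncard := by
  choose f hf using fun u => h.exists_isProjection u K'
  refine Set.ncard_le_ncard_of_injOn f (fun u _ => (hf u).incident) ?_ hfin
  have key : ∀ u, I u K → ∃ N y M, IncPath5 I (f u) N y M u K := by
    intro u hu
    rcases hf u with ⟨h1, -⟩ | ⟨M, h1⟩ | ⟨M, y, N, h1⟩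
    · exact (hopp u hu ⟨K', u, h1, h1, h1⟩).elim
    · exact (hopp u hu ⟨M, f u, h1.1, h1.2.1, h1.2.2.1⟩).elim
    · obtain ⟨⟨h1, h2, h3, h4, h5⟩, h6, h7, h8, h9⟩ := h1
      refine ⟨N, y, M, ⟨h6, h3, h2, h8.symm, h5.symm⟩, h1, hu, h4.symm, ?_⟩
      rintro rfl
      exact hopp y h2 ⟨N, f u, h3, h6, h7⟩
  intro u hu v hv huv
  obtain ⟨N, y, M, h1⟩ := key u hu
  obtain ⟨N', y', M', h2⟩ := key v hv
  rw [← huv] at h2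
  exact (h.path5_unique h1 h2).2.2.2

theorem ncard_eq_of_not_near (h : UniqueIncPaths I) (hfin : ∀ K, {x | I x K}.Finite) {K K' : L}
    (hopp : ∀ x, I x K → ¬ Near I x K') : {x | I x K}.ncard = {x | I x K'}.ncard := by
  refine le_antisymm (h.ncard_le_of_not_near (hfin _) hopp)
    (h.ncard_le_of_not_near (hfin _) fun x hx => ?_)
  rintro ⟨M, y, h1, h2, h3⟩
  exact hopp y h3 ⟨M, x, h2, h1, hx⟩

theorem not_near_of_chain (h : UniqueIncPaths I) {p p₁ p₂ : P} {K₁ K K' K'' : L} (h1 : I p K₁)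
    (h2 : IncPath5 I p K p₁ K' p₂ K'') (hne : K ≠ K₁) : ∀ x, I x K₁ → ¬ Near I x K'' := by
  obtain ⟨⟨i1, i2, i3, i4, i5⟩, i6, i7, i8, i9⟩ := h2
  have hp : IncPath5 I p₂ K' p₁ K p K₁ := ⟨⟨i6, i3, i2, i8.symm, i5.symm⟩, i1, h1, i4.symm, hne⟩
  have hnear := h.not_near_of_path5 hp
  rintro x hx ⟨M, y, hxM, hyM, hyK⟩
  refine i9.symm (h.path5_unique (K := K₁) (z := x) (y := y) (N := M)
    ⟨⟨i7, hyK, hyM, ?_, ?_⟩, hxM, hx, ?_, ?_⟩ hp).1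
  · rintro rfl
    exact hnear ⟨M, x, hyM, hxM, hx⟩
  · rintro rfl
    exact hnear ⟨K'', x, i7, hxM, hx⟩
  · rintro rfl
    exact hnear ⟨K'', y, i7, hyK, hx⟩
  · rintro rfl
    exact hnear ⟨K'', y, i7, hyK, hyM⟩

/-- All lines of a generalised hexagon with at least `3` lines on each point and at least `2`
points on each line have the same size. -/
theorem ncard_line_eq (h : UniqueIncPaths I) (hfin : ∀ K, {x | I x K}.Finite)
    (hthree : ∀ p K₁ K₂, ∃ K, I p K ∧ K ≠ K₁ ∧ K ≠ K₂) (htwo : ∀ K p, ∃ q, I q K ∧ q ≠ p)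
    [Nonempty P] (K K' : L) : {x | I x K}.ncard = {x | I x K'}.ncard := by
  have hmeet : ∀ {p K₁ K₂}, I p K₁ → I p K₂ → {x | I x K₁}.ncard = {x | I x K₂}.ncard := by
    intro p K₁ K₂ h1 h2
    obtain ⟨K, hK, hK1, hK2⟩ := hthree p K₁ K₂
    obtain ⟨p₁, hp1, hne1⟩ := htwo K p
    obtain ⟨M, hM, hMK, -⟩ := hthree p₁ K K
    obtain ⟨p₂, hp2, hne2⟩ := htwo M p₁
    obtain ⟨N, hN, hNM, -⟩ := hthree p₂ M M
    have hpath : IncPath5 I p K p₁ M p₂ N :=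
      ⟨⟨hK, hp1, hM, hne1.symm, hMK.symm⟩, hp2, hN, hne2.symm, hNM.symm⟩
    rw [h.ncard_eq_of_not_near hfin (h.not_near_of_chain h1 hpath hK1),
      h.ncard_eq_of_not_near hfin (h.not_near_of_chain h2 hpath hK2)]
  obtain ⟨p, hp, -⟩ := htwo K (Classical.arbitrary P)
  rcases h.exists_path p K' with
    h1 | ⟨M, y, h1, h2, h3, -⟩ | ⟨M, y, N, z, ⟨h1, h2, h3, -⟩, h4, h5, -⟩
  · exact hmeet hp h1
  · exact (hmeet hp h1).trans (hmeet h2 h3)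
  · exact (hmeet hp h1).trans ((hmeet h2 h3).trans (hmeet h4 h5))

/-- Each line has two points as soon as, for some point `x`, each line on `x` is the beginning
of a path of length `4` ending in a point. -/
theorem exists_incident_ne (h : UniqueIncPaths I) {x : P} (htwo : ∀ M, ∃ N, I x N ∧ N ≠ M)
    (hx : ∀ N, I x N → ∃ v K w, IncPath3 I x N v K ∧ I w K ∧ w ≠ v) (K : L) (p : P) :
    ∃ q, I q K ∧ q ≠ p := by
  obtain ⟨q, r, hq, hr, hqr⟩ : ∃ q r, I q K ∧ I r K ∧ q ≠ r := by
    rcases h.exists_path x K with h1 | ⟨M, r, h1⟩ | ⟨M, y, A, r, h1⟩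
    · obtain ⟨v, K', w, h3, -⟩ := hx K h1
      exact ⟨x, v, h1, h3.2.1, h3.2.2.2.1⟩
    · obtain ⟨N, hN, hNM⟩ := htwo M
      obtain ⟨v, K', w, ⟨j1, j2, j3, j4, j5⟩, hw, hwv⟩ := hx N hN
      obtain ⟨q, hq⟩ := h.exists_isProjection w K
      refine ⟨q, r, hq.incident, h1.2.2.1, ?_⟩
      rintro rfl
      exact h.not_withinFour_of_path5
        (⟨⟨hw, j3, j2, hwv, j5.symm⟩, j1, h1.1, j4.symm, hNM⟩ : IncPath5 I w K' v N x M)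
        h1.2.1 h1.2.2.2.1.symm hq.withinFour
    · obtain ⟨N, hN, hNM⟩ := htwo M
      obtain ⟨v, K', w, ⟨j1, j2, j3, j4, j5⟩, -⟩ := hx N hN
      obtain ⟨q, hq⟩ := h.exists_isProjection v K
      refine ⟨q, r, hq.incident, h1.2.2.1, ?_⟩
      rintro rfl
      obtain ⟨⟨i1, i2, i3, i4, i5⟩, i6, i7, i8, i9⟩ := h1
      exact h.not_withinFour_of_path5
        (⟨⟨j2, j1, i1, j4.symm, hNM⟩, i2, i3, i4, i5⟩ : IncPath5 I v N x M y A)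
        i6 i8.symm hq.withinFour
  by_cases hqp : q = p
  · exact ⟨r, hr, fun hrp => hqr (hqp.trans hrp.symm)⟩
  · exact ⟨q, hq, hqp⟩

end ConstantLineSize

section Subgeometry

variable {P L : Type*} {I : P → L → Prop}

/-- The geometry induced on subsets of points and lines closed under taking paths. -/
theorem subtype (h : UniqueIncPaths I) {p : P → Prop} {q : L → Prop}
    (hpath3 : ∀ {x M y K}, p x → q K → IncPath3 I x M y K → q M ∧ p y)
    (hpath5 : ∀ {x M y N z K}, p x → q K → IncPath5 I x M y N z K → q M ∧ p y ∧ q N ∧ p z) :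
    UniqueIncPaths fun (x : Subtype p) (K : Subtype q) => I x K := by
  have h3 : ∀ {x : Subtype p} {M : Subtype q} {y : Subtype p} {K : Subtype q},
      IncPath3 (fun (x : Subtype p) (K : Subtype q) => I x K) x M y K ↔ IncPath3 I x M y K := by
    simp [IncPath3, Subtype.ext_iff]
  have h5 : ∀ {x : Subtype p} {M : Subtype q} {y : Subtype p} {N : Subtype q} {z : Subtype p}
      {K : Subtype q}, IncPath5 (fun (x : Subtype p) (K : Subtype q) => I x K) x M y N z K ↔
      IncPath5 I x M y N z K := by
    simp [IncPath5, h3, Subtype.ext_iff]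
  constructor
  · rintro ⟨x, hx⟩ ⟨K, hK⟩
    simp only [h3, h5]
    rcases h.exists_path x K with h1 | ⟨M, y, h1⟩ | ⟨M, y, N, z, h1⟩
    · exact Or.inl h1
    · obtain ⟨hM, hy⟩ := hpath3 hx hK h1
      exact Or.inr (Or.inl ⟨⟨M, hM⟩, ⟨y, hy⟩, h1⟩)
    · obtain ⟨hM, hy, hN, hz⟩ := hpath5 hx hK h1
      exact Or.inr (Or.inr ⟨⟨M, hM⟩, ⟨y, hy⟩, ⟨N, hN⟩, ⟨z, hz⟩, h1⟩)
  · exact fun h1 h2 => h.not_path3 h1 (h3.1 h2)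
  · exact fun h1 h2 => h.not_path5 h1 (h5.1 h2)
  · exact fun h1 h2 => h.not_path3_path5 (h3.1 h1) (h5.1 h2)
  · intro x M y M' y' K h1 h2
    simpa only [Subtype.ext_iff] using h.path3_unique (h3.1 h1) (h3.1 h2)
  · intro x M y N z M' y' N' z' K h1 h2
    simpa only [Subtype.ext_iff] using h.path5_unique (h5.1 h1) (h5.1 h2)

theorem finite_lines (h : UniqueIncPaths I) (hp : ∀ x, {K | I x K}.Finite)
    (hl : ∀ K, {x | I x K}.Finite) [Nonempty P] : Finite L := by
  have x := Classical.arbitrary P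
  have hU : ∀ T : Set L, T.Finite → {K | ∃ M ∈ T, ∃ y, I y M ∧ I y K}.Finite := fun T hT => by
    refine (hT.biUnion fun M _ => (hl M).biUnion fun y _ => hp y).subset ?_
    rintro K ⟨M, hM, y, hyM, hyK⟩
    simp only [Set.mem_iUnion]
    exact ⟨M, hM, y, hyM, hyK⟩
  refine Set.finite_univ_iff.1 ((hU _ (hU _ (hp x))).subset fun K _ => ?_)
  rcases h.exists_path x K with h1 | ⟨M, y, h1⟩ | ⟨M, y, N, z, h1⟩
  · exact ⟨K, ⟨K, h1, x, h1, h1⟩, x, h1, h1⟩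
  · exact ⟨M, ⟨M, h1.1, x, h1.1, h1.1⟩, y, h1.2.1, h1.2.2.1⟩
  · exact ⟨N, ⟨M, h1.1.1, y, h1.1.2.1, h1.1.2.2.1⟩, z, h1.2.1, h1.2.2.1⟩

theorem finite_points (hp : ∀ x, {K | I x K}.Nonempty) (hl : ∀ K, {x | I x K}.Finite) [Finite L] :
    Finite P := by
  refine Set.finite_univ_iff.1 ((Set.finite_iUnion hl).subset fun x _ => ?_)
  obtain ⟨K, hK⟩ := hp x
  exact Set.mem_iUnion.2 ⟨K, hK⟩

end Subgeometry

end UniqueIncPaths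

/-- A set of `s + 1` pairwise non-collinear points of a generalised hexagon of order `(s, t)`, one
pair of them special, such that each point is at distance at most `4` from some member. -/
structure SpecialBlockingSet {P L : Type*} (I : P → L → Prop) (s t : ℕ) (S : Set P) : Prop where
  paths : UniqueIncPaths I
  one_lt : 1 < t
  ncard_lines : ∀ x, {K | I x K}.ncard = t + 1
  ncard_points : ∀ K, {x | I x K}.ncard = s + 1
  ncard_set : S.ncard = s + 1
  exists_withinFour : ∀ y, ∃ x ∈ S, UniqueIncPaths.WithinFour I x y
  eq_of_incident : ∀ {x y K}, x ∈ S → y ∈ S → I x K → I y K → x = y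
  exists_special : ∃ x ∈ S, ∃ y ∈ S, ∃ M w N, IncPath3 I x M w N ∧ I y N ∧ w ≠ y

namespace SpecialBlockingSet

open UniqueIncPaths

variable {P L : Type*} {I : P → L → Prop} {s t : ℕ} {S : Set P}

theorem finite_set (h : SpecialBlockingSet I s t S) : S.Finite :=
  Set.finite_of_ncard_ne_zero (by simp [h.ncard_set])

theorem eq_of_isProjection (h : SpecialBlockingSet I s t S) {K : L}
    (hsurj : ∀ p, I p K → ∃ u ∈ S, IsProjection I u K p) {u v p : P} (hu : u ∈ S) (hv : v ∈ S)
    (hup : IsProjection I u K p) (hvp : IsProjection I v K p) : u = v :=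
  h.paths.eq_of_isProjection_of_surjective h.finite_set
    (by rw [h.ncard_set, h.ncard_points]) hsurj hu hv hup hvp

theorem exists_near (h : SpecialBlockingSet I s t S) {x y p : P} {K : L} (hx : x ∈ S) (hy : y ∈ S)
    (hxy : x ≠ y) (hxp : WithinFour I x p) (hyp : WithinFour I y p) (hp : I p K) :
    ∃ u ∈ S, Near I u K := by
  by_contra! hn
  refine hxy (h.eq_of_isProjection (K := K) (fun q hq => ?_) hx hy
    (hxp.isProjection_of_not_near hp (hn x hx)) (hyp.isProjection_of_not_near hp (hn y hy)))
  obtain ⟨u, hu, huq⟩ := h.exists_withinFour q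
  exact ⟨u, hu, huq.isProjection_of_not_near hq (hn u hu)⟩

theorem exists_line_ne (h : SpecialBlockingSet I s t S) (p : P) (K₁ K₂ : L) :
    ∃ K, I p K ∧ K ≠ K₁ ∧ K ≠ K₂ := by
  have hlt : ({K₁, K₂} : Set L).ncard < {K | I p K}.ncard := by
    rw [h.ncard_lines]
    have := h.one_lt
    exact (Set.ncard_insert_le _ _).trans_lt (by rw [Set.ncard_singleton]; omega)
  obtain ⟨K, hK, hne⟩ := Set.exists_mem_notMem_of_ncard_lt_ncard hlt
  simp only [Set.mem_insert_iff, Set.mem_singleton_iff, not_or] at hne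
  exact ⟨K, hK, hne⟩

theorem exists_path_through (h : SpecialBlockingSet I s t S) {x y p : P} {K M : L} (hx : x ∈ S)
    (hy : y ∈ S) (hxy : x ≠ y) (hxM : Near I x M) (hyM : Near I y M) (hpM : I p M) (hpK : I p K)
    (hKM : K ≠ M) (hfoot : ∀ u ∈ S, ∀ N, I u N → ¬ I p N) :
    ∃ u ∈ S, ∃ N v, IncPath5 I u N v K p M := by
  have hfour : ∀ {u}, Near I u M → WithinFour I u p := fun ⟨N, z, h1, h2, h3⟩ =>
    ⟨N, z, M, h1, h2, h3, hpM⟩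
  obtain ⟨u, hu, N, v, h1, h2, h3⟩ := h.exists_near hx hy hxy (hfour hxM) (hfour hyM) hpK
  refine ⟨u, hu, N, v, ⟨h1, h2, h3, ?_, ?_⟩, hpK, hpM, ?_, hKM⟩
  · rintro rfl
    exact hfoot u hu K h3 hpK
  · rintro rfl
    exact hfoot u hu N h1 hpK
  · rintro rfl
    exact hfoot u hu N h1 h2

/-- At most one point of the set is near a line which misses the set. -/
theorem eq_of_near (h : SpecialBlockingSet I s t S) {x y : P} {M : L} (hM : ∀ u ∈ S, ¬ I u M)
    (hx : x ∈ S) (hy : y ∈ S) (hxM : Near I x M) (hyM : Near I y M) : x = y := by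
  by_contra hxy
  have hfoot3 : ∀ {u N p}, u ∈ S → I p M → I u N → I p N → IncPath3 I u N p M := by
    intro u N p hu hp hN hpN
    refine ⟨hN, hpN, hp, ?_, ?_⟩
    · rintro rfl
      exact hM u hu hp
    · rintro rfl
      exact hM u hu hN
  have hsurj : ∀ p, I p M → ∃ u ∈ S, IsProjection I u M p := by
    intro p hp
    by_cases hfoot : ∀ u ∈ S, ∀ N, I u N → ¬ I p N
    · obtain ⟨K, hK, hKM, -⟩ := h.exists_line_ne p M M
      obtain ⟨u, hu, N, v, h1⟩ := h.exists_path_through hx hy hxy hxM hyM hp hK hKM hfoot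
      exact ⟨u, hu, Or.inr (Or.inr ⟨N, v, K, h1⟩)⟩
    · push Not at hfoot
      obtain ⟨u, hu, N, hN, hpN⟩ := hfoot
      exact ⟨u, hu, Or.inr (Or.inl ⟨N, hfoot3 hu hp hN hpN⟩)⟩
  have hfoot : ∀ p, I p M → ∃ u ∈ S, ∃ N, I u N ∧ I p N := by
    intro p hp
    by_contra! hfoot
    obtain ⟨K₁, hK1, hKM1, -⟩ := h.exists_line_ne p M M
    obtain ⟨K₂, hK2, hKM2, hK12⟩ := h.exists_line_ne p M K₁
    obtain ⟨u₁, hu1, N₁, v₁, h1⟩ := h.exists_path_through hx hy hxy hxM hyM hp hK1 hKM1 hfoot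
    obtain ⟨u₂, hu2, N₂, v₂, h2⟩ := h.exists_path_through hx hy hxy hxM hyM hp hK2 hKM2 hfoot
    obtain rfl := h.eq_of_isProjection hsurj hu1 hu2 (Or.inr (Or.inr ⟨N₁, v₁, K₁, h1⟩))
      (Or.inr (Or.inr ⟨N₂, v₂, K₂, h2⟩))
    exact hK12 (h.paths.path5_unique h2 h1).2.2.1
  have hpath : ∀ u ∈ S, ∃ N p, IncPath3 I u N p M := by
    intro u hu
    obtain ⟨p, hp⟩ := h.paths.exists_isProjection u M
    obtain ⟨v, hv, N, hvN, hpN⟩ := hfoot p hp.incident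
    have h3 := hfoot3 hv hp.incident hvN hpN
    obtain rfl := h.eq_of_isProjection hsurj hu hv hp (Or.inr (Or.inl ⟨N, h3⟩))
    exact ⟨N, p, h3⟩
  obtain ⟨a, ha, b, hb, A, w, B, hA, hbB, hwb⟩ := h.exists_special
  obtain ⟨A', p, hA'⟩ := hpath a ha
  obtain ⟨B', q, hB'⟩ := hpath b hb
  have hpq : p ≠ q := by
    rintro rfl
    obtain rfl := h.eq_of_isProjection hsurj ha hb (Or.inr (Or.inl ⟨A', hA'⟩))
      (Or.inr (Or.inl ⟨B', hB'⟩))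
    exact h.paths.not_path3 hbB hA
  have hpath5 : IncPath5 I a A' p M q B' :=
    ⟨hA', hB'.2.2.1, hB'.2.1, hpq, hB'.2.2.2.2.symm⟩
  by_cases hBB : B = B'
  · subst hBB
    exact h.paths.not_path3_path5 hA hpath5
  · have := (h.paths.path5_unique hpath5 ⟨hA, hbB, hB'.1, hwb, hBB⟩).2.2.2
    exact hB'.2.2.2.1 this.symm

/-- The points of the subgeometry: points in the set or collinear with two of its members. -/
def SubPoint (I : P → L → Prop) (S : Set P) (p : P) : Prop :=
  p ∈ S ∨ ∃ x ∈ S, ∃ y ∈ S, x ≠ y ∧ (∃ M, I x M ∧ I p M) ∧ ∃ N, I y N ∧ I p N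

/-- The lines of the subgeometry: lines meeting the set. -/
def SubLine (I : P → L → Prop) (S : Set P) (K : L) : Prop := ∃ x ∈ S, I x K

theorem subLine_of_subPoint (h : SpecialBlockingSet I s t S) {p : P} {K : L} (hp : SubPoint I S p)
    (hK : I p K) : SubLine I S K := by
  rcases hp with hp | ⟨x, hx, y, hy, hxy, ⟨M, hxM, hpM⟩, N, hyN, hpN⟩
  · exact ⟨p, hp, hK⟩
  · by_contra hn
    exact hxy (h.eq_of_near (fun u hu huK => hn ⟨u, hu, huK⟩) hx hy ⟨M, p, hxM, hpM, hK⟩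
      ⟨N, p, hyN, hpN, hK⟩)

theorem subPoint_of_subLine (h : SpecialBlockingSet I s t S) {p : P} {K K' : L}
    (hK : SubLine I S K) (hK' : SubLine I S K') (hpK : I p K) (hpK' : I p K') (hne : K ≠ K') :
    SubPoint I S p := by
  obtain ⟨x, hx, hxK⟩ := hK
  obtain ⟨y, hy, hyK⟩ := hK'
  by_cases hxy : x = y
  · subst hxy
    by_cases hxp : x = p
    · exact Or.inl (hxp ▸ hx)
    · exact (hne (h.paths.eq_of_incident hxp hxK hpK hyK hpK')).elim
  · exact Or.inr ⟨x, hx, y, hy, hxy, ⟨K, hxK, hpK⟩, K', hyK, hpK'⟩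

theorem subLine_of_path (h : SpecialBlockingSet I s t S) {y z : P} {M N K : L}
    (hM : SubLine I S M) (hK : SubLine I S K) (hyM : I y M) (hyN : I y N) (hMN : M ≠ N)
    (hzN : I z N) (hzK : I z K) (hyz : y ≠ z) (hNK : N ≠ K) : SubLine I S N := by
  by_contra hn
  obtain ⟨a, ha, haM⟩ := hM
  obtain ⟨b, hb, hbK⟩ := hK
  have hN : ∀ u ∈ S, ¬ I u N := fun u hu huN => hn ⟨u, hu, huN⟩
  obtain rfl := h.eq_of_near hN ha hb ⟨M, y, haM, hyM, hyN⟩ ⟨K, z, hbK, hzK, hzN⟩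
  have hay : a ≠ y := by
    rintro rfl
    exact hN a ha hyN
  have haz : a ≠ z := by
    rintro rfl
    exact hN a ha hzN
  have hp3 : IncPath3 I a M y N := ⟨haM, hyM, hyN, hay, hMN⟩
  have hp3K : IncPath3 I a K z N := ⟨hbK, hzK, hzN, haz, hNK.symm⟩
  exact hyz (h.paths.path3_unique hp3 hp3K).2

/-- The subgeometry is a generalised hexagon. -/
theorem uniqueIncPaths_sub (h : SpecialBlockingSet I s t S) :
    UniqueIncPaths fun (x : Subtype (SubPoint I S)) (K : Subtype (SubLine I S)) => I x K := by
  refine h.paths.subtype ?_ ?_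
  · rintro x M y K hx hK ⟨h1, h2, h3, h4, h5⟩
    have hM := h.subLine_of_subPoint hx h1
    exact ⟨hM, h.subPoint_of_subLine hM hK h2 h3 h5⟩
  · rintro x M y N z K hx hK ⟨⟨h1, h2, h3, h4, h5⟩, h6, h7, h8, h9⟩
    have hM := h.subLine_of_subPoint hx h1
    have hN := h.subLine_of_path hM hK h2 h3 h5 h6 h7 h8 h9
    exact ⟨hM, h.subPoint_of_subLine hM hN h2 h3 h5, hN, h.subPoint_of_subLine hN hK h6 h7 h9⟩

/-- Each line on a member `x` of the set begins a path to an opposite member `z`. -/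
theorem exists_three_subPoints (h : SpecialBlockingSet I s t S) {x z : P} (hx : x ∈ S) (hz : z ∈ S)
    (hxz : ¬ WithinFour I x z) {N : L} (hN : I x N) : ∃ v K w y, IncPath3 I x N v K ∧ I w K ∧
      I y K ∧ w ≠ v ∧ y ≠ v ∧ y ≠ w ∧ SubPoint I S v ∧ SubPoint I S w ∧ SubPoint I S y := by
  rcases h.paths.exists_path z N with h1 | ⟨M, y, h1⟩ | ⟨M, w, K, v, h1⟩
  · exact (hxz ⟨N, x, N, hN, hN, hN, h1⟩).elim
  · exact (hxz ⟨N, y, M, hN, h1.2.2.1, h1.2.1, h1.1⟩).elim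
  · obtain ⟨⟨h1, h2, h3, h4, h5⟩, h6, h7, h8, h9⟩ := h1
    have hvx : x ≠ v := by
      rintro rfl
      exact hxz ⟨K, w, M, h6, h3, h2, h1⟩
    have hNl : SubLine I S N := ⟨x, hx, hN⟩
    have hMl : SubLine I S M := ⟨z, hz, h1⟩
    have hK := h.subLine_of_path hMl hNl h2 h3 h5 h6 h7 h8 h9
    have hv := h.subPoint_of_subLine hNl hK h7 h6 h9.symm
    have hw := h.subPoint_of_subLine hMl hK h2 h3 h5
    obtain ⟨y, hy, hyK⟩ := hK
    refine ⟨v, K, w, y, ⟨hN, h7, h6, hvx, h9.symm⟩, h3, hyK, h8, ?_, ?_, hv, hw, Or.inl hy⟩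
    · rintro rfl
      exact hvx (h.eq_of_incident hx hy hN h7)
    · rintro rfl
      exact h4 (h.eq_of_incident hz hy h1 h2)

theorem ncard_lines_sub (h : SpecialBlockingSet I s t S) (x : Subtype (SubPoint I S)) :
    {K : Subtype (SubLine I S) | I x K}.ncard = t + 1 := by
  rw [← h.ncard_lines x, ← Set.ncard_image_of_injective _ Subtype.val_injective]
  congr 1
  ext K
  simp only [Set.mem_image, Set.mem_ofPred_eq, Subtype.exists, exists_and_right, exists_eq_right]
  exact ⟨fun ⟨_, hK⟩ => hK, fun hK => ⟨h.subLine_of_subPoint x.2 hK, hK⟩⟩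

/-- Each line of the subgeometry contains exactly one member of the set. -/
theorem card_subLine (h : SpecialBlockingSet I s t S) [Fintype (Subtype (SubLine I S))] :
    Fintype.card (Subtype (SubLine I S)) = (s + 1) * (t + 1) := by
  classical
  have := h.finite_set.fintype
  have e : (Σ x : S, {K | I x K}) ≃ Subtype (SubLine I S) := by
    refine Equiv.ofBijective (fun a => ⟨a.2.1, a.1.1, a.1.2, a.2.2⟩) ⟨?_, ?_⟩
    · rintro ⟨⟨x, hx⟩, K, hK⟩ ⟨⟨y, hy⟩, K', hK'⟩ heq
      obtain rfl : K = K' := congrArg Subtype.val heq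
      obtain rfl := h.eq_of_incident hx hy hK hK'
      rfl
    · rintro ⟨K, x, hx, hK⟩
      exact ⟨⟨⟨x, hx⟩, K, hK⟩, rfl⟩
  have hfin : ∀ x : S, Finite {K | I x K} := fun x =>
    (Set.finite_of_ncard_ne_zero (by simp [h.ncard_lines])).to_subtype
  rw [← Nat.card_eq_fintype_card, ← Nat.card_congr e, Nat.card_sigma]
  simp only [Nat.card_coe_set_eq, h.ncard_lines]
  rw [Finset.sum_const, Finset.card_univ, smul_eq_mul, ← Nat.card_eq_fintype_card,
    Nat.card_coe_set_eq, h.ncard_set]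

theorem not_isSquare_of_eq {a s t : ℕ} (ha : 1 < a) (ht : 1 < t) (hs : s = a * t + (a * t) ^ 2)
    (h1 : IsSquare (a * t)) : ¬ IsSquare (s * t) := by
  rintro ⟨m, hm⟩
  obtain ⟨n, hn⟩ := h1
  have hm' : t ^ 2 * (a * (1 + a * t)) = m ^ 2 := by rw [pow_two m, ← hm, hs]; ring
  obtain ⟨c, rfl⟩ : t ∣ m := (Nat.pow_dvd_pow_iff two_ne_zero).1 ⟨_, hm'.symm⟩
  rw [mul_pow] at hm'
  have hc := Nat.eq_of_mul_eq_mul_left (by positivity) hm'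
  rw [mul_comm] at hc
  obtain ⟨d, hd⟩ := exists_eq_pow_of_mul_eq_pow (Nat.isUnit_iff.2 (show Nat.gcd _ _ = 1 by simp)) hc
  have hn0 : 0 < n := by
    rcases Nat.eq_zero_or_pos n with rfl | hn0
    · simp at hn
      omega
    · exact hn0
  have h3 : n < d := by
    by_contra! hle
    nlinarith
  nlinarith

/-- All points of the set are within distance `4` of each other. -/
theorem withinFour (h : SpecialBlockingSet I s t S) (hs : 1 < s) {x z : P} (hx : x ∈ S)
    (hz : z ∈ S) : WithinFour I x z := by
  by_contra hxz
  have hpl : ∀ p, {K | I p K}.ncard ≠ 0 := fun p => by simp [h.ncard_lines]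
  have hlp : ∀ K, {p | I p K}.Finite := fun K =>
    Set.finite_of_ncard_ne_zero (by simp [h.ncard_points])
  have : Nonempty P := ⟨x⟩
  have : Finite L := h.paths.finite_lines (fun p => Set.finite_of_ncard_ne_zero (hpl p)) hlp
  have : Finite P := finite_points (fun p => Set.nonempty_of_ncard_ne_zero (hpl p)) hlp
  have := Fintype.ofFinite P
  have := Fintype.ofFinite L
  have := Fintype.ofFinite (Subtype (SubPoint I S))
  have := Fintype.ofFinite (Subtype (SubLine I S))
  have : Nonempty (Subtype (SubPoint I S)) := ⟨⟨x, Or.inl hx⟩⟩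
  have h' := h.uniqueIncPaths_sub
  obtain ⟨N₀, hN₀⟩ := Set.nonempty_of_ncard_ne_zero (hpl x)
  obtain ⟨v₀, K₀, w₀, y₀, hp₀, hw₀, hy₀, hwv, hyv, hyw, hv₀', hw₀', hy₀'⟩ :=
    h.exists_three_subPoints hx hz hxz hN₀
  have hthree : ∀ (p : Subtype (SubPoint I S)) (K₁ K₂ : Subtype (SubLine I S)),
      ∃ K : Subtype (SubLine I S), I p K ∧ K ≠ K₁ ∧ K ≠ K₂ := by
    intro p K₁ K₂
    obtain ⟨K, hK, h1, h2⟩ := h.exists_line_ne p K₁ K₂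
    exact ⟨⟨K, h.subLine_of_subPoint p.2 hK⟩, hK, fun h => h1 (congrArg Subtype.val h),
      fun h => h2 (congrArg Subtype.val h)⟩
  have htwo := h'.exists_incident_ne (x := ⟨x, Or.inl hx⟩)
    (fun M => (hthree _ M M).imp fun _ hN => ⟨hN.1, hN.2.1⟩) (by
      rintro ⟨N, hNl⟩ hN
      obtain ⟨v, K, w, y, ⟨i1, i2, i3, i4, i5⟩, hwK, -, hwv, -, -, hv, hw, -⟩ :=
        h.exists_three_subPoints hx hz hxz hN
      exact ⟨⟨v, hv⟩, ⟨K, h.subLine_of_subPoint hv i3⟩, ⟨w, hw⟩,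
        ⟨i1, i2, i3, by simpa [Subtype.ext_iff] using i4, by simpa [Subtype.ext_iff] using i5⟩,
        hwK, by simpa [Subtype.ext_iff] using hwv⟩)
  set K₀' : Subtype (SubLine I S) := ⟨K₀, h.subLine_of_subPoint hv₀' hp₀.2.2.1⟩
  have hcard : 2 < {p : Subtype (SubPoint I S) | I p K₀'}.ncard := by
    rw [Set.two_lt_ncard_iff]
    exact ⟨⟨v₀, hv₀'⟩, ⟨w₀, hw₀'⟩, ⟨y₀, hy₀'⟩, hp₀.2.2.1, hw₀, hy₀,
      by simpa [Subtype.ext_iff] using hwv.symm, by simpa [Subtype.ext_iff] using hyv.symm,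
      by simpa [Subtype.ext_iff] using hyw.symm⟩
  obtain ⟨a, ha⟩ : ∃ a, {p : Subtype (SubPoint I S) | I p K₀'}.ncard = a + 1 :=
    ⟨_, (Nat.sub_add_cancel (by omega)).symm⟩
  have hsub : ∀ K : Subtype (SubLine I S), {p : Subtype (SubPoint I S) | I p K}.ncard = a + 1 :=
    fun K => (h'.ncard_line_eq (fun _ => Set.toFinite _) hthree htwo K K₀').trans ha
  have hcount := h'.card_line h.ncard_lines_sub hsub
  rw [h.card_subLine, mul_comm] at hcount
  have hs' := Nat.eq_of_mul_eq_mul_left (Nat.succ_pos t) hcount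
  exact not_isSquare_of_eq (by omega) h.one_lt (by omega)
    (h'.isSquare_mul (by omega) h.one_lt h.ncard_lines_sub hsub)
    (h.paths.isSquare_mul hs h.one_lt h.ncard_lines h.ncard_points)

end SpecialBlockingSet

/-- Claim 6 in the proof: if no two points of `S` are collinear and `S` contains an
opposite pair, then no two points of `S` are special. -/
theorem claim6_no_special_pairs (Γ : GenHexagon) (hΓ : Γ.IsGenHexagon)
    (s t : ℕ) (hs : 1 < s) (ht : 1 < t) (hord : Γ.HasOrder s t)
    (S : Set Γ.Point) (hS : S.encard = s + 1)
    (hblock : ¬ ∃ y : Γ.Point, ∀ x ∈ S, Γ.Opposite y x)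
    (hncol : ∀ x ∈ S, ∀ y ∈ S, ¬ Γ.Collinear x y)
    (hopp : ∃ x ∈ S, ∃ y ∈ S, Γ.Opposite x y) :
    ∀ x ∈ S, ∀ y ∈ S, ¬ Γ.Special x y := by
  intro a ha b hb hab
  obtain ⟨x, hx, z, hz, hne, hncoll, hnspec⟩ := hopp
  have hcoll : ∀ {p q : Γ.Point}, ∀ K, p ∈ Γ.pts K → q ∈ Γ.pts K → p = q ∨ Γ.Collinear p q :=
    fun {p q} K hp hq => or_iff_not_imp_left.2 fun hpq => ⟨hpq, K, hp, hq⟩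
  have hline : ∀ p : Γ.Point, ∃ K, p ∈ Γ.pts K := fun p =>
    Set.nonempty_of_encard_ne_zero (s := {K | p ∈ Γ.pts K}) (by simp [hord.2 p])
  have hfour : ∀ {p q : Γ.Point}, ¬ Γ.Opposite p q →
      UniqueIncPaths.WithinFour (fun x L => x ∈ Γ.pts L) q p := by
    intro p q hpq
    by_cases h1 : p = q
    · obtain ⟨K, hK⟩ := hline p
      exact ⟨K, p, K, h1 ▸ hK, hK, hK, hK⟩
    by_cases h2 : Γ.Collinear p q
    · obtain ⟨-, K, hp, hq⟩ := h2
      exact ⟨K, p, K, hq, hp, hp, hp⟩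
    · have h3 : Γ.Special p q := by
        by_contra h3
        exact hpq ⟨h1, h2, h3⟩
      obtain ⟨-, -, w, ⟨-, M, hM, hM'⟩, -, N, hN, hN'⟩ := h3
      exact ⟨N, w, M, hN, hN', hM', hM⟩
  have hblocking : SpecialBlockingSet (fun x L => x ∈ Γ.pts L) s t S := {
    paths := GenHexagon.uniqueIncPaths hΓ
    one_lt := ht
    ncard_lines := fun p => by simp [Set.ncard, hord.2 p]
    ncard_points := fun K => by simp [Set.ncard, hord.1 K]
    ncard_set := by simp [Set.ncard, hS]
    exists_withinFour := fun y => by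
      push Not at hblock
      obtain ⟨u, hu, huy⟩ := hblock y
      exact ⟨u, hu, hfour huy⟩
    eq_of_incident := fun {p q K} hp hq hpK hqK => by
      by_contra hpq
      exact hncol p hp q hq ⟨hpq, K, hpK, hqK⟩
    exists_special := by
      obtain ⟨hne, hnab, w, ⟨haw, M, haM, hwM⟩, hbw, N, hbN, hwN⟩ := hab
      refine ⟨a, ha, b, hb, M, w, N, ⟨haM, hwM, hwN, haw, ?_⟩, hbN, hbw.symm⟩
      rintro rfl
      exact hnab ⟨hne, M, haM, hbN⟩ }
  obtain ⟨M, w, N, h1, h2, h3, h4⟩ := hblocking.withinFour hs hx hz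
  have hxw := (hcoll M h1 h2)
  have hzw := (hcoll N h4 h3)
  rcases hxw with rfl | hxw
  · exact hncoll ⟨hne, N, h3, h4⟩
  · rcases hzw with rfl | hzw
    · exact hncoll hxw
    · exact hnspec ⟨hne, hncoll, w, hxw, hzw⟩
end
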